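/- arXiv:math/0210332 — 2 statements merged into one kernel-verified Lean document; each statement's English description precedes it below -/
import Mathlib

section
/- Let a ∈ [0,1]. There exists a constant C > 0, depending only on a, such that for every real-valued Schwartz function u on ℝ one has |∫_ℝ u(x)³ dx| ≤ C ‖u‖_{L²(ℝ)}^{3(1 − 1/(3+3a))} ‖u‖_{H^{1/2 + a/2}}^{3/(3+3a)}. -/
/-!
The bound is a frequency-space argument. Let `v = 𝓕⁻ u` and `F = |v|`, which is even because `u`
is real. Writing the integral of `u³` as a trilinear form in `v` gives

  `|∫ u³| ≤ ∫∫ F(t) F(x - t) F(x) dt dx`   (`enorm_integral_cube_le`).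

For each `(x, t)`, single out the frequency of smallest modulus among `t`, `x - t`, `x` and bound
the product of the other two factors by the sum of their squares. This bounds the triple product
by six terms of the form `F(r) F(s)² 1_{|r| ≤ |s|}`, all with the same double integral
(`triple_le`, `lintegral_triple_le`). In that double integral, Cauchy–Schwarz on `[-|s|, |s|]`
(`lintegral_lowHigh_le`) gives `∫_{|r| ≤ |s|} F ≤ (2|s|)^(1/2) ‖F‖₂`, so

  `|∫ u³| ≲ ‖F‖₂ ∫ |s|^(1/2) F(s)² ds`.

Finally `|s|^(1/2) ≤ ((1 + |s|)^(1 + a))^(1 / (2 + 2a))`, and Hölder's inequality interpolates the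
last integral between `‖F‖₂²` and the squared `H^{(1 + a)/2}` norm
(`lintegral_lintegral_lowHigh_le`). Plancherel identifies `‖F‖₂` with `‖u‖₂`. The trilinear part
is carried out with `ℝ≥0∞`-valued integrals, so that integrability enters only when the two
norms are translated back to real integrals.
-/

open MeasureTheory Complex

noncomputable section

/-- The dispersive symbol `ω(ξ) = ξ |ξ|^(1+a)`. -/
def disp (a ξ : ℝ) : ℝ := ξ * |ξ| ^ (1 + a)

/-- Fourier transform on `ℝ`, convention `f̂(ξ) = ∫ e^{ixξ} f(x) dx`. -/
def FT1 (f : ℝ → ℂ) (ξ : ℝ) : ℂ :=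
  ∫ x : ℝ, Complex.exp (Complex.I * ((x * ξ : ℝ) : ℂ)) * f x

/-- Spacetime Fourier transform, convention `f̂(ξ,λ) = ∫ e^{i(xξ+tλ)} f(x,t) dx dt`,
for `f : ℝ × ℝ → ℂ` with first coordinate `x` (space) and second `t` (time). -/
def FT2 (f : ℝ × ℝ → ℂ) (ξ lam : ℝ) : ℂ :=
  ∫ p : ℝ × ℝ, Complex.exp (Complex.I * ((p.1 * ξ + p.2 * lam : ℝ) : ℂ)) * f p

/-- The dyadic cutoffs `χ_j`: `χ_0 = χ₀` and `χ_j(z) = χ(2^{-j} z)` for `j ≥ 1`. -/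
def chiJ (χ₀ χ : ℝ → ℝ) (j : ℕ) (z : ℝ) : ℝ :=
  if j = 0 then χ₀ z else χ ((2 : ℝ) ^ (-(j : ℝ)) * z)

/-- Hypotheses on the fixed dyadic cutoffs. -/
structure DyadicCutoffs (χ₀ χ : ℝ → ℝ) : Prop where
  smooth0 : ContDiff ℝ (⊤ : ℕ∞) χ₀
  even0 : ∀ z, χ₀ (-z) = χ₀ z
  mem0 : ∀ z, χ₀ z ∈ Set.Icc (0 : ℝ) 1
  supp0 : ∀ z, 2 < |z| → χ₀ z = 0
  one0 : ∀ z, |z| ≤ 1 → χ₀ z = 1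
  smooth1 : ContDiff ℝ (⊤ : ℕ∞) χ
  even1 : ∀ z, χ (-z) = χ z
  mem1 : ∀ z, χ z ∈ Set.Icc (0 : ℝ) 1
  supp1 : ∀ z, χ z ≠ 0 → 1 / 2 < |z| ∧ |z| < 2
  partition : ∀ z, ∑' j : ℕ, chiJ χ₀ χ j z = 1

/-- A smooth time cutoff supported in `[-1,1]`. -/
structure TimeCutoff (ψ : ℝ → ℝ) : Prop where
  smooth : ContDiff ℝ (⊤ : ℕ∞) ψ
  supp : ∀ t, ψ t ≠ 0 → |t| ≤ 1

/-- The norm `‖f‖_{X^b_s}`. -/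
def Xnorm (a : ℝ) (χ₀ χ : ℝ → ℝ) (b s : ℝ) (f : ℝ × ℝ → ℂ) : ℝ :=
  ∑' j : ℕ, (2 : ℝ) ^ ((j : ℝ) * b) *
    (∫ p : ℝ × ℝ, chiJ χ₀ χ j (p.2 - disp a p.1) * (1 + |p.1|) ^ (2 * s) *
      ‖FT2 f p.1 p.2‖ ^ 2) ^ ((1 : ℝ) / 2)

/-- The norm `‖f‖_{Y^b_{s₀,s₁}} = ‖x·f‖_{X^b_{s₀}} + ‖t·f‖_{X^b_{s₁}}`. -/
def Ynorm (a : ℝ) (χ₀ χ : ℝ → ℝ) (b s₀ s₁ : ℝ) (f : ℝ × ℝ → ℂ) : ℝ :=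
  Xnorm a χ₀ χ b s₀ (fun p => (p.1 : ℂ) * f p) +
    Xnorm a χ₀ χ b s₁ (fun p => (p.2 : ℂ) * f p)

/-- The norm `‖f‖_{Z^b_s} = ‖f‖_{X^b_s} + ‖f‖_{Y^b_{s-2s*,s}}`, where `s* = 1/2 + a/2`. -/
def Znorm (a : ℝ) (χ₀ χ : ℝ → ℝ) (b s : ℝ) (f : ℝ × ℝ → ℂ) : ℝ :=
  Xnorm a χ₀ χ b s f + Ynorm a χ₀ χ b (s - 2 * (1 / 2 + a / 2)) s f

/-- The norm `‖f‖_{X̃^b_s}`. -/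
def XtildeNorm (a b s : ℝ) (f : ℝ × ℝ → ℂ) : ℝ :=
  (∫ p : ℝ × ℝ, (1 + |p.2 - disp a p.1|) ^ (2 * b) * (1 + |p.1|) ^ (2 * s) *
    ‖FT2 f p.1 p.2‖ ^ 2) ^ ((1 : ℝ) / 2)

/-- The Sobolev norm `‖g‖_{H^s} = (∫ (1+|ξ|)^{2s} |ĝ(ξ)|² dξ)^{1/2}`. -/
def Hnorm (s : ℝ) (g : ℝ → ℂ) : ℝ :=
  (∫ ξ : ℝ, (1 + |ξ|) ^ (2 * s) * ‖FT1 g ξ‖ ^ 2) ^ ((1 : ℝ) / 2)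

/-- The weighted norm `‖g‖_{F^s} = ‖g‖_{H^s} + ‖x·g‖_{H^{s-2s*}}` (here `sstar = s*`). -/
def Fnorm (sstar s : ℝ) (g : ℝ → ℂ) : ℝ :=
  Hnorm s g + Hnorm (s - 2 * sstar) (fun x => (x : ℂ) * g x)

/-- The `L^p` norm `(∫ ‖f‖^p)^{1/p}`. -/
def Lpnorm {α : Type*} [MeasureSpace α] {E : Type*} [NormedAddCommGroup E]
    (p : ℝ) (f : α → E) : ℝ :=
  (∫ x, ‖f x‖ ^ p) ^ (1 / p)

/-- The linear propagator `W(t)`, defined via Fourier inversion so that its Fourier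
transform in `x` is `e^{itω(ξ)} û₀(ξ)`. -/
def Wgrp (a : ℝ) (u₀ : ℝ → ℂ) (t x : ℝ) : ℂ :=
  ((1 / (2 * Real.pi) : ℝ) : ℂ) *
    ∫ ξ : ℝ, Complex.exp (-(Complex.I * ((x * ξ : ℝ) : ℂ))) *
      (Complex.exp (Complex.I * ((t * disp a ξ : ℝ) : ℂ)) * FT1 u₀ ξ)

/-- The Fourier multiplier `D^σ` with symbol `|ξ|^σ`, via Fourier inversion. -/
def Dop (σ : ℝ) (g : ℝ → ℂ) (x : ℝ) : ℂ :=
  ((1 / (2 * Real.pi) : ℝ) : ℂ) *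
    ∫ ξ : ℝ, Complex.exp (-(Complex.I * ((x * ξ : ℝ) : ℂ))) *
      (((|ξ| ^ σ : ℝ) : ℂ) * FT1 g ξ)

open scoped FourierTransform ENNReal SchwartzMap

/-! ### The trilinear estimate -/

/-- The kernel `F(s) F(t)² 1_{|s| ≤ |t|}`: one low frequency `s` and a doubled high
frequency `t`. -/
def lowHigh (F : ℝ → ℝ≥0∞) (s t : ℝ) : ℝ≥0∞ :=
  if |s| ≤ |t| then F s * F t ^ 2 else 0

lemma measurable_lowHigh {F : ℝ → ℝ≥0∞} (hF : Measurable F) :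
    Measurable (Function.uncurry (lowHigh F)) := by
  unfold lowHigh Function.uncurry
  refine Measurable.ite (measurableSet_le (by fun_prop) (by fun_prop)) (by fun_prop) (by fun_prop)

lemma measurable_lowHigh_comp {F : ℝ → ℝ≥0∞} (hF : Measurable F) {α : Type*} [MeasurableSpace α]
    {p q : α → ℝ} (hp : Measurable p) (hq : Measurable q) :
    Measurable (fun x => lowHigh F (p x) (q x)) :=
  (measurable_lowHigh hF).comp (hp.prodMk hq)

lemma mul_le_sq_add_sq (b c : ℝ≥0∞) : b * c ≤ b ^ 2 + c ^ 2 := by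
  rcases le_total b c with h | h
  · calc b * c ≤ c * c := by gcongr
      _ ≤ _ := by rw [sq c]; exact le_add_self
  · calc b * c ≤ b * b := by gcongr
      _ ≤ _ := by rw [sq b]; exact le_self_add

/-- If `r` has the smallest absolute value, `F(s) F(t) ≤ F(s)² + F(t)²` bounds the product. -/
lemma triple_le_of_min (F : ℝ → ℝ≥0∞) {r s t : ℝ} (hs : |r| ≤ |s|) (ht : |r| ≤ |t|) :
    F r * (F s * F t) ≤ lowHigh F r s + lowHigh F r t := by
  simp only [lowHigh, hs, ht, if_true, ← mul_add]
  gcongr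
  exact mul_le_sq_add_sq _ _

lemma triple_le (F : ℝ → ℝ≥0∞) (r s t : ℝ) :
    F r * F s * F t ≤ (lowHigh F r s + lowHigh F r t) + (lowHigh F s r + lowHigh F s t) +
      (lowHigh F t r + lowHigh F t s) := by
  by_cases h1 : |r| ≤ |s| ∧ |r| ≤ |t|
  · calc _ = F r * (F s * F t) := by ring
      _ ≤ _ := triple_le_of_min F h1.1 h1.2
      _ ≤ _ := by rw [add_assoc]; exact le_self_add
  by_cases h2 : |s| ≤ |r| ∧ |s| ≤ |t|
  · calc _ = F s * (F r * F t) := by ring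
      _ ≤ _ := triple_le_of_min F h2.1 h2.2
      _ ≤ _ := by rw [add_right_comm]; exact le_add_self
  have h3 : |t| ≤ |r| ∧ |t| ≤ |s| := by grind
  calc _ = F t * (F r * F s) := by ring
    _ ≤ _ := triple_le_of_min F h3.1 h3.2
    _ ≤ _ := le_add_self

/-- Each of the six kernels produced by `triple_le` with `(r, s, t) = (t, x - t, x)` has, by
Tonelli and translation or reflection, the same double integral. -/
lemma lintegral_triple_le {F : ℝ → ℝ≥0∞} (hF : Measurable F) :
    ∫⁻ x, ∫⁻ t, F t * F (x - t) * F x ≤ 6 * ∫⁻ t, ∫⁻ s, lowHigh F s t := by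
  set K := ∫⁻ t, ∫⁻ s, lowHigh F s t with hK
  have m : ∀ {α : Type} [MeasurableSpace α] {p q : α → ℝ}, Measurable p → Measurable q →
    Measurable (fun x => lowHigh F (p x) (q x)) := fun hp hq => measurable_lowHigh_comp hF hp hq
  -- Tonelli: the order of integration in `K` does not matter.
  have hK' : ∫⁻ s, ∫⁻ t, lowHigh F s t = K :=
    lintegral_lintegral_swap (m measurable_fst measurable_snd).aemeasurable
  have e1 : ∫⁻ x, ∫⁻ t, lowHigh F t (x - t) = K := by
    rw [lintegral_lintegral_swap
      (m measurable_snd (measurable_fst.sub measurable_snd)).aemeasurable, ← hK']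
    exact lintegral_congr fun t => lintegral_sub_right_eq_self (fun x => lowHigh F t x) t
  have e3 : ∫⁻ x, ∫⁻ t, lowHigh F (x - t) t = K := by
    rw [lintegral_lintegral_swap
      (m (measurable_fst.sub measurable_snd) measurable_snd).aemeasurable]
    exact lintegral_congr fun t => lintegral_sub_right_eq_self (fun x => lowHigh F x t) t
  have e4 : ∫⁻ x, ∫⁻ t, lowHigh F (x - t) x = K :=
    lintegral_congr fun x => lintegral_sub_left_eq_self (fun t => lowHigh F t x) x
  have e6 : ∫⁻ x, ∫⁻ t, lowHigh F x (x - t) = K := by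
    rw [← hK']
    exact lintegral_congr fun x => lintegral_sub_left_eq_self (fun t => lowHigh F x t) x
  have hsub : Measurable (fun p : ℝ × ℝ => p.1 - p.2) := by fun_prop
  have split_sum : ∀ {f g : ℝ × ℝ → ℝ≥0∞}, Measurable f →
      ∫⁻ x, ∫⁻ t, (f (x, t) + g (x, t)) = (∫⁻ x, ∫⁻ t, f (x, t)) + ∫⁻ x, ∫⁻ t, g (x, t) := by
    intro f g hf
    rw [← lintegral_add_left hf.lintegral_prod_right']
    exact lintegral_congr fun x => lintegral_add_left (by fun_prop) _
  calc _ ≤ ∫⁻ x, ∫⁻ t, ((lowHigh F t (x - t) + lowHigh F t x)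
          + (lowHigh F (x - t) t + lowHigh F (x - t) x) +
          (lowHigh F x t + lowHigh F x (x - t))) :=
        lintegral_mono fun x => lintegral_mono fun t => triple_le F _ _ _
    _ = ((K + K) + (K + K)) + (K + K) := by
        have a1 := m measurable_snd hsub
        have a2 := m (measurable_snd (α := ℝ) (β := ℝ)) measurable_fst
        have a3 := m hsub measurable_snd
        have a4 := m hsub measurable_fst
        have a5 := m (measurable_fst (α := ℝ) (β := ℝ)) measurable_snd
        have a12 : Measurable fun p : ℝ × ℝ => lowHigh F p.2 (p.1 - p.2) + lowHigh F p.2 p.1 :=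
          a1.add a2
        have a34 : Measurable fun p : ℝ × ℝ =>
          lowHigh F (p.1 - p.2) p.2 + lowHigh F (p.1 - p.2) p.1 := a3.add a4
        have a1234 : Measurable fun p : ℝ × ℝ =>
          (lowHigh F p.2 (p.1 - p.2) + lowHigh F p.2 p.1) +
          (lowHigh F (p.1 - p.2) p.2 + lowHigh F (p.1 - p.2) p.1) := a12.add a34
        rw [split_sum (g := fun p => lowHigh F p.1 p.2 + lowHigh F p.1 (p.1 - p.2)) a1234,
          split_sum (g := fun p => lowHigh F (p.1 - p.2) p.2 + lowHigh F (p.1 - p.2) p.1) a12,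
          split_sum (g := fun p => lowHigh F p.2 p.1) a1,
          split_sum (g := fun p => lowHigh F (p.1 - p.2) p.1) a3,
          split_sum (g := fun p => lowHigh F p.1 (p.1 - p.2)) a5, e1, e3, e4, e6, hK', ← hK]
    _ = _ := by ring

/-- Cauchy–Schwarz on `[-|t|, |t|]`. -/
lemma lintegral_lowHigh_le {F : ℝ → ℝ≥0∞} (hF : Measurable F) (t : ℝ) :
    ∫⁻ s, lowHigh F s t ≤
      (∫⁻ s, F s ^ 2) ^ (1 / 2 : ℝ) * (F t ^ 2 * ENNReal.ofReal (2 * |t|) ^ (1 / 2 : ℝ)) := by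
  have h := ENNReal.lintegral_mul_norm_pow_le (μ := volume) (f := fun s => F s ^ 2)
    (g := (Set.Icc (-|t|) |t|).indicator 1) (by fun_prop)
    ((measurable_one.indicator measurableSet_Icc).aemeasurable)
    (p := 1 / 2) (q := 1 / 2) (by norm_num) (by norm_num) (by norm_num)
  have hv : ∫⁻ s, (Set.Icc (-|t|) |t|).indicator (1 : ℝ → ℝ≥0∞) s = ENNReal.ofReal (2 * |t|) := by
    rw [lintegral_indicator_one measurableSet_Icc, Real.volume_Icc]
    congr 1; ring
  rw [hv] at h
  calc ∫⁻ s, lowHigh F s t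
      = ∫⁻ s, F t ^ 2 * ((F s ^ 2) ^ (1 / 2 : ℝ) *
          (Set.Icc (-|t|) |t|).indicator (1 : ℝ → ℝ≥0∞) s ^ (1 / 2 : ℝ)) := by
        refine lintegral_congr fun s => ?_
        have h2 : (F s ^ 2) ^ (1 / 2 : ℝ) = F s := by
          rw [← ENNReal.rpow_natCast, ← ENNReal.rpow_mul]; norm_num
        rw [h2]
        by_cases hs : |s| ≤ |t|
        · have : s ∈ Set.Icc (-|t|) |t| := abs_le.mp hs
          simp [lowHigh, hs, this, mul_comm]
        · have : s ∉ Set.Icc (-|t|) |t| := fun h => hs (abs_le.mpr h)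
          simp [lowHigh, hs, this]
    _ = F t ^ 2 * ∫⁻ s, ((F s ^ 2) ^ (1 / 2 : ℝ) *
          (Set.Icc (-|t|) |t|).indicator (1 : ℝ → ℝ≥0∞) s ^ (1 / 2 : ℝ)) :=
        lintegral_const_mul _ (by
          have := (measurable_one (α := ℝ≥0∞) (β := ℝ)).indicator
            (measurableSet_Icc (a := -|t|) (b := |t|))
          fun_prop)
    _ ≤ F t ^ 2 * _ := mul_le_mul_right h _
    _ = _ := by ring

/-- With `θ = 1 / (1 + a)`, Hölder's inequality with exponents `1 - θ/2` and `θ/2` interpolates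
`∫ |t|^(1/2) F(t)²` between the weights `1` and `(1 + |t|)^(1 + a)`. -/
lemma lintegral_lintegral_lowHigh_le {a : ℝ} (ha : 0 ≤ a) {F : ℝ → ℝ≥0∞} (hF : Measurable F) :
    ∫⁻ t, ∫⁻ s, lowHigh F s t ≤
      2 * ((∫⁻ s, F s ^ 2) ^ (1 / 2 : ℝ) * ((∫⁻ s, F s ^ 2) ^ (1 - 1 / (2 + 2 * a)) *
        (∫⁻ s, ENNReal.ofReal ((1 + |s|) ^ (1 + a)) * F s ^ 2) ^ (1 / (2 + 2 * a)))) := by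
  have hθ : 1 / (2 + 2 * a) ≤ 1 := by rw [div_le_one (by positivity)]; linarith
  have hθ0 : 0 ≤ 1 / (2 + 2 * a) := by positivity
  have h := ENNReal.lintegral_mul_norm_pow_le (μ := volume) (f := fun s => F s ^ 2)
    (g := fun s => ENNReal.ofReal ((1 + |s|) ^ (1 + a)) * F s ^ 2) (by fun_prop) (by fun_prop)
    (p := 1 - 1 / (2 + 2 * a)) (q := 1 / (2 + 2 * a)) (by linarith) hθ0 (by ring)
  calc ∫⁻ t, ∫⁻ s, lowHigh F s t
      ≤ ∫⁻ t, ((∫⁻ s, F s ^ 2) ^ (1 / 2 : ℝ) * 2) * ((F t ^ 2) ^ (1 - 1 / (2 + 2 * a)) *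
          (ENNReal.ofReal ((1 + |t|) ^ (1 + a)) * F t ^ 2) ^ (1 / (2 + 2 * a))) := by
        refine lintegral_mono fun t => (lintegral_lowHigh_le hF t).trans ?_
        rw [mul_assoc]
        refine mul_le_mul_right ?_ _
        rw [ENNReal.mul_rpow_of_nonneg _ _ hθ0, mul_left_comm ((F t ^ 2) ^ _),
          ← ENNReal.rpow_add_of_nonneg _ _ (by linarith) hθ0, sub_add_cancel, ENNReal.rpow_one,
          ENNReal.ofReal_rpow_of_nonneg (by positivity) hθ0, ← Real.rpow_mul (by positivity),
          ENNReal.ofReal_rpow_of_nonneg (by positivity) (by norm_num), mul_comm, ← mul_assoc]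
        refine mul_le_mul_left ?_ _
        have : (1 + a) * (1 / (2 + 2 * a)) = 1 / 2 := by field_simp
        rw [this, show (2 : ℝ≥0∞) = ENNReal.ofReal 2 by simp,
          ← ENNReal.ofReal_mul (by norm_num)]
        refine ENNReal.ofReal_le_ofReal ?_
        rw [Real.mul_rpow (by norm_num) (by positivity)]
        gcongr
        · calc (2 : ℝ) ^ (1 / 2 : ℝ) ≤ 2 ^ (1 : ℝ) :=
              Real.rpow_le_rpow_of_exponent_le (by norm_num) (by norm_num)
            _ = 2 := by simp
        · linarith [abs_nonneg t]
    _ = ((∫⁻ s, F s ^ 2) ^ (1 / 2 : ℝ) * 2) * _ := lintegral_const_mul _ (by fun_prop)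
    _ ≤ ((∫⁻ s, F s ^ 2) ^ (1 / 2 : ℝ) * 2) * _ := mul_le_mul_right h _
    _ = _ := by ring

/-! ### The integral of the cube on the Fourier side -/

/-- A real Schwartz function viewed as a complex one. -/
def toC (u : 𝓢(ℝ, ℝ)) : 𝓢(ℝ, ℂ) := u.postcompCLM Complex.ofRealCLM

lemma toC_apply (u : 𝓢(ℝ, ℝ)) (x : ℝ) : toC u x = (u x : ℂ) := rfl

/-- `FT1` is the inverse Fourier transform of Mathlib up to rescaling by `2π`; the sign `e^{+ixξ}`
is why `𝓕⁻` appears rather than `𝓕`. -/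
lemma FT1_eq (u : 𝓢(ℝ, ℝ)) (ξ : ℝ) :
    FT1 (fun x => (u x : ℂ)) ξ = 𝓕⁻ (toC u) ((2 * Real.pi)⁻¹ * ξ) := by
  rw [SchwartzMap.fourierInv_coe, Real.fourierInv_eq_fourier_neg,
    Real.fourier_real_eq_integral_exp_smul, FT1]
  refine integral_congr_ae (.of_forall fun x => ?_)
  simp only [toC_apply, smul_eq_mul]
  congr 2
  have : (-2 * Real.pi * x * -((2 * Real.pi)⁻¹ * ξ)) = x * ξ := by
    field_simp
  rw [this, mul_comm]

/-- Reality of `u`: its Fourier transform has even modulus. -/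
lemma enorm_fourier_toC (u : 𝓢(ℝ, ℝ)) (x : ℝ) : ‖𝓕 (toC u) x‖ₑ = ‖𝓕⁻ (toC u) x‖ₑ := by
  have : 𝓕⁻ (toC u) x = starRingEnd ℂ (𝓕 (toC u) x) := by
    rw [SchwartzMap.fourierInv_coe, Real.fourierInv_eq_fourier_neg, SchwartzMap.fourier_coe,
      Real.fourier_real_eq_integral_exp_smul, Real.fourier_real_eq_integral_exp_smul,
      ← integral_conj]
    refine integral_congr_ae (.of_forall fun y => ?_)
    simp only [toC_apply, smul_eq_mul, map_mul, Complex.conj_ofReal, ← Complex.exp_conj,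
      Complex.conj_I]
    congr 2
    push_cast
    ring
  rw [this, ← ofReal_norm, ← ofReal_norm, RCLike.norm_conj]

/-- The integral of `u³` as a trilinear form in `v = 𝓕⁻ u`: since `u = 𝓕 v`, one has
`∫ u³ = ∫ 𝓕(v ⋆ v) u = ∫ (v ⋆ v) 𝓕 u`, and `|𝓕 u| = |v|` as `u` is real. -/
lemma enorm_integral_cube_le (u : 𝓢(ℝ, ℝ)) :
    ‖∫ x, u x ^ 3‖ₑ ≤
      ∫⁻ x, ∫⁻ t, ‖𝓕⁻ (toC u) t‖ₑ * ‖𝓕⁻ (toC u) (x - t)‖ₑ * ‖𝓕⁻ (toC u) x‖ₑ := by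
  set v := 𝓕⁻ (toC u) with hv
  have hfv : 𝓕 v = toC u := by simp [hv]
  set B := ContinuousLinearMap.mul ℂ ℂ
  have key : ((∫ x, u x ^ 3 : ℝ) : ℂ) =
      ∫ x, SchwartzMap.convolution B v v x * 𝓕 (toC u) x := by
    rw [← SchwartzMap.integral_fourier_mul_eq, SchwartzMap.fourier_convolution, hfv,
      ← integral_complex_ofReal]
    refine integral_congr_ae (.of_forall fun x => ?_)
    simp [B, toC_apply]
    ring
  have h1 : ‖∫ x, u x ^ 3‖ₑ = ‖((∫ x, u x ^ 3 : ℝ) : ℂ)‖ₑ := by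
    rw [← ofReal_norm, ← ofReal_norm, Complex.norm_real]
  rw [h1, key]
  refine (enorm_integral_le_lintegral_enorm _).trans (lintegral_mono fun x => ?_)
  have hm : Measurable fun t => ‖v t‖ₑ * ‖v (x - t)‖ₑ :=
    (v.continuous.measurable.enorm).mul
      ((v.continuous.measurable.comp (measurable_const.sub measurable_id)).enorm)
  rw [enorm_mul, enorm_fourier_toC, ← hv, lintegral_mul_const _ hm]
  gcongr
  rw [SchwartzMap.convolution_apply]
  refine (enorm_integral_le_lintegral_enorm _).trans (lintegral_mono fun t => ?_)
  simp [B]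

/-! ### Weighted norms of Schwartz functions -/

lemma integrable_weight (v : 𝓢(ℝ, ℂ)) {b : ℝ} (hb : b ≤ 2) :
    Integrable fun ξ : ℝ => (1 + |ξ|) ^ b * ‖v ξ‖ ^ 2 := by
  obtain ⟨M, hM⟩ := v.toBoundedContinuousFunction.isBounded_range.exists_norm_le
  have hM' : ∀ x, ‖v x‖ ≤ M := fun x => hM _ ⟨x, rfl⟩
  have hi : Integrable fun ξ : ℝ => (2 * M) * (‖ξ‖ ^ 0 * ‖v ξ‖ + ‖ξ‖ ^ 2 * ‖v ξ‖) :=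
    ((v.integrable_pow_mul volume 0).add (v.integrable_pow_mul volume 2)).const_mul _
  refine hi.mono' ?_ (.of_forall fun x => ?_)
  · have := v.continuous.measurable
    exact (by fun_prop : Measurable fun ξ : ℝ => (1 + |ξ|) ^ b * ‖v ξ‖ ^ 2).aestronglyMeasurable
  · rw [Real.norm_of_nonneg (by positivity)]
    have h1 : (1 + |x|) ^ b ≤ 2 * (1 + ‖x‖ ^ 2) := by
      calc (1 + |x|) ^ b ≤ (1 + |x|) ^ (2 : ℝ) :=
            Real.rpow_le_rpow_of_exponent_le (by linarith [abs_nonneg x]) hb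
        _ ≤ _ := by
          rw [Real.rpow_two, Real.norm_eq_abs]
          nlinarith [sq_nonneg (1 - |x|)]
    calc (1 + |x|) ^ b * ‖v x‖ ^ 2 ≤ (2 * (1 + ‖x‖ ^ 2)) * (M * ‖v x‖) := by
          rw [sq]; gcongr; exact hM' x
      _ = _ := by ring

lemma lintegral_weight_eq (v : 𝓢(ℝ, ℂ)) {b : ℝ} (hb : b ≤ 2) :
    ∫⁻ ξ, ENNReal.ofReal ((1 + |ξ|) ^ b) * ‖v ξ‖ₑ ^ 2 =
      ENNReal.ofReal (∫ ξ, (1 + |ξ|) ^ b * ‖v ξ‖ ^ 2) := by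
  rw [ofReal_integral_eq_lintegral_ofReal (integrable_weight v hb)
    (.of_forall fun x => by positivity)]
  refine lintegral_congr fun x => ?_
  rw [ENNReal.ofReal_mul (by positivity), ENNReal.ofReal_pow (by positivity), ofReal_norm]

/-- Plancherel. -/
lemma lintegral_sq_eq (u : 𝓢(ℝ, ℝ)) :
    ∫⁻ ξ, ‖𝓕⁻ (toC u) ξ‖ₑ ^ 2 = ENNReal.ofReal (∫ x, ‖u x‖ ^ (2 : ℝ)) := by
  have h := lintegral_weight_eq (𝓕⁻ (toC u)) (b := 0) (by norm_num)
  simp only [Real.rpow_zero, ENNReal.ofReal_one, one_mul] at h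
  rw [h, ← SchwartzMap.integral_norm_sq_fourier]
  simp [toC_apply]

/-- Rescaling by `2π ≥ 1` only increases the weight, so the weighted norm of `𝓕⁻ u` in
Mathlib's normalization is dominated by the one written with `FT1`. -/
lemma integral_weight_le (u : 𝓢(ℝ, ℝ)) {b : ℝ} (hb0 : 0 ≤ b) (hb : b ≤ 2) :
    ∫ ξ, (1 + |ξ|) ^ b * ‖𝓕⁻ (toC u) ξ‖ ^ 2 ≤
      ∫ ξ, (1 + |ξ|) ^ b * ‖FT1 (fun x => (u x : ℂ)) ξ‖ ^ 2 := by
  have hpi : 1 ≤ 2 * Real.pi := by linarith [Real.pi_gt_three]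
  have hpi0 : 0 < 2 * Real.pi := by positivity
  set v := 𝓕⁻ (toC u)
  set g : ℝ → ℝ := fun η => (1 + |2 * Real.pi * η|) ^ b * ‖v η‖ ^ 2
  have hg : ∀ ξ, (1 + |ξ|) ^ b * ‖FT1 (fun x => (u x : ℂ)) ξ‖ ^ 2 = g ((2 * Real.pi)⁻¹ * ξ) := by
    intro ξ
    simp only [g, FT1_eq, v]
    rw [mul_inv_cancel_left₀ hpi0.ne']
  have hle : ∀ η : ℝ, 1 + |η| ≤ 1 + |2 * Real.pi * η| := fun η => by
    rw [abs_mul, abs_of_pos hpi0]; nlinarith [abs_nonneg η]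
  have hgi : Integrable g := by
    refine ((integrable_weight v hb).const_mul ((2 * Real.pi) ^ b)).mono' ?_
      (.of_forall fun x => ?_)
    · have := v.continuous.measurable
      exact (by fun_prop : Measurable g).aestronglyMeasurable
    · rw [Real.norm_of_nonneg (by positivity), ← mul_assoc,
        ← Real.mul_rpow (by positivity) (by positivity)]
      simp only [g]
      gcongr
      rw [abs_mul, abs_of_pos hpi0]; nlinarith [abs_nonneg x]
  simp_rw [hg]
  rw [Measure.integral_comp_mul_left, inv_inv, abs_of_pos hpi0, smul_eq_mul]
  calc _ ≤ ∫ η, g η := by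
        refine integral_mono (integrable_weight v hb) hgi fun η => ?_
        simp only [g]
        exact mul_le_mul_of_nonneg_right
          (Real.rpow_le_rpow (by positivity) (hle η) hb0) (by positivity)
    _ ≤ _ := le_mul_of_one_le_left (integral_nonneg fun η => by positivity) hpi

theorem statement0 (a : ℝ) (ha : a ∈ Set.Icc (0 : ℝ) 1) :
    ∃ C > 0, ∀ u : SchwartzMap ℝ ℝ,
      |∫ x : ℝ, (u x) ^ 3| ≤
        C * Lpnorm 2 (fun x : ℝ => u x) ^ (3 * (1 - 1 / (3 + 3 * a))) *
          Hnorm (1 / 2 + a / 2) (fun x : ℝ => ((u x : ℝ) : ℂ)) ^ (3 / (3 + 3 * a)) := by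
  obtain ⟨ha0, ha1⟩ := ha
  refine ⟨12, by norm_num, fun u => ?_⟩
  unfold Lpnorm Hnorm
  rw [show 2 * (1 / 2 + a / 2) = 1 + a by ring]
  set α : ℝ := ∫ x, ‖u x‖ ^ (2 : ℝ)
  set β : ℝ := ∫ ξ, (1 + |ξ|) ^ (1 + a) * ‖FT1 (fun x => (u x : ℂ)) ξ‖ ^ 2
  have hα : 0 ≤ α := integral_nonneg fun x => by positivity
  have hβ : 0 ≤ β := integral_nonneg fun x => by positivity
  have hθ0 : 0 ≤ 1 / (2 + 2 * a) := by positivity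
  have hθ1 : 1 / (2 + 2 * a) ≤ 1 / 2 := by gcongr; linarith
  have hF : Measurable fun ξ => ‖𝓕⁻ (toC u) ξ‖ₑ := (𝓕⁻ (toC u)).continuous.measurable.enorm
  have h := (enorm_integral_cube_le u).trans ((lintegral_triple_le hF).trans
    (mul_le_mul_right (lintegral_lintegral_lowHigh_le ha0 hF) 6))
  rw [lintegral_sq_eq, lintegral_weight_eq _ (by linarith)] at h
  replace h := h.trans (mul_le_mul_right (mul_le_mul_right (mul_le_mul_right (mul_le_mul_right
    (ENNReal.rpow_le_rpow (ENNReal.ofReal_le_ofReal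
      (integral_weight_le u (b := 1 + a) (by linarith) (by linarith))) hθ0) _) _) _) _)
  rw [ENNReal.ofReal_rpow_of_nonneg hα (by norm_num),
    ENNReal.ofReal_rpow_of_nonneg hα (by linarith), ENNReal.ofReal_rpow_of_nonneg hβ hθ0,
    ← ENNReal.ofReal_mul (by positivity), ← ENNReal.ofReal_mul (by positivity),
    show (2 : ℝ≥0∞) = ENNReal.ofReal 2 by simp, show (6 : ℝ≥0∞) = ENNReal.ofReal 6 by simp,
    ← ENNReal.ofReal_mul (by positivity), ← ENNReal.ofReal_mul (by positivity),
    ← ofReal_norm, ENNReal.ofReal_le_ofReal_iff (by positivity), Real.norm_eq_abs] at h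
  refine h.trans (le_of_eq ?_)
  rw [← Real.rpow_mul hα, ← Real.rpow_mul hβ,
    show 1 / 2 * (3 / (3 + 3 * a)) = 1 / (2 + 2 * a) by field_simp,
    show 1 / 2 * (3 * (1 - 1 / (3 + 3 * a))) = 1 / 2 + (1 - 1 / (2 + 2 * a)) by
      field_simp; ring,
    Real.rpow_add_of_nonneg hα (by norm_num) (by linarith)]
  ring
end
end

section
/- Let a ∈ [0,1], θ ∈ (0,1), and β ∈ [0, a/2]. Set q = 2(2+a)/(θ(β+1)) and p = 2/(1−θ). There exists a constant C > 0 such that for every Schwartz function u₀ on ℝ one has ( ∫_ℝ ‖D^{θβ/2} W(t)u₀‖_{L^p_x(ℝ)}^q dt )^{1/q} ≤ C ‖u₀‖_{L²(ℝ)}. -/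
/-!
Write `γ = (β+1)/(2+a)`; the hypothesis `β ≤ a/2` says `γ ≤ 1/2`. The estimate interpolates
between two endpoints, the conservation of the `L²` norm (`θ = 0`) and the maximal estimate
`L^{2/γ}_t L^∞_x` for `D^{β/2} W(t)` (`θ = 1`).

The endpoint `θ = 1` rests on the dispersive bound `|∫ |ξ|^β e^{i(tω(ξ)-xξ)} dξ| ≤ 20 |t|^{-γ}`
(`kernel_bound`). The substitution `η = ξ^{1+β}` removes the weight, scaling reduces to `t = 1`, and
the remaining integral is estimated by van der Corput's lemma, the second-derivative test applying
exactly because `γ ≤ 1/2`. A `T T*` argument (`dual_bound`) along an arbitrary measurable curve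
`x(t)` and the Hardy–Littlewood–Sobolev inequality (`hls`) bound `D^{β/2} W(t)u₀` at `x(t)` in
`L^{2/γ}_t`; letting the curve follow the maximum gives `endpoint`. The endpoint `θ = 0` is
Plancherel's inequality (`plancherel_le`).

Stein's complex interpolation is replaced by an explicit argument. With
`g v = 1 / (e^{-θv} + e^{(1-θ)v})` one has `e^{θv} = g v + e^v g v`, and `g` is the Fourier integral
of an `L¹` function `G` (`interp_repr`). Taking `v = c + (β/2) log |ξ|` writes `e^{θc} D^{θβ/2}` as a
sum of two averages of imaginary powers of `D`, and optimising in `c` yields the pointwise bound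
`|D^{θβ/2} W(t)u₀| ≤ 2 A₀^{1-θ} A₁^θ` up to normalisation, where `A₀` and `A₁` are averages of
`|W(t) D^{πiyβ} u₀|` and `|D^{β/2} W(t) D^{πiyβ} u₀|` with weight `|G y|`
(`pointwise_interp`). Imaginary powers preserve the `L²` norm of the data, so integrating in `x`
and then in `t` gives `strichartz_evo`.

For Schwartz data, `norm_Dop_le` compares `Dop` and `Wgrp` with the evolution of the profile `û₀`.
-/

open MeasureTheory Complex

noncomputable section

/-! ### Van der Corput estimates -/

/-- Second-derivative test: for a phase with `ψ'' ≥ 1` the oscillatory integral is bounded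
independently of the interval. With `u = ψ'`, integration by parts against `u / (1 + u²)`, a
bounded substitute for `1 / u`, leaves an error dominated by `2 u' / (1 + u²)`, the derivative of
`2 arctan u`; no splitting around the stationary point is needed. -/
theorem vdc_second {A B : ℝ} (hAB : A ≤ B) {ψ u v : ℝ → ℝ}
    (hψ : ∀ x ∈ Set.Icc A B, HasDerivAt ψ (u x) x)
    (hu : ∀ x ∈ Set.Icc A B, HasDerivAt u (v x) x)
    (hvc : ContinuousOn v (Set.Icc A B)) (hv : ∀ x ∈ Set.Icc A B, 1 ≤ v x) :
    ‖∫ x in A..B, exp (I * (ψ x : ℂ))‖ ≤ 1 + 2 * Real.pi := by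
  have hψc : ContinuousOn ψ (Set.Icc A B) := fun x hx => (hψ x hx).continuousAt.continuousWithinAt
  have huc : ContinuousOn u (Set.Icc A B) := fun x hx => (hu x hx).continuousAt.continuousWithinAt
  have hI : Set.uIcc A B = Set.Icc A B := Set.uIcc_of_le hAB
  set w : ℝ → ℝ := fun x => u x / (1 + u x ^ 2) with hw
  set w' : ℝ → ℝ := fun x => v x * (1 - u x ^ 2) / (1 + u x ^ 2) ^ 2 with hw'
  have hpos : ∀ x, (0 : ℝ) < 1 + u x ^ 2 := fun x => by positivity
  have hwd : ∀ x ∈ Set.Icc A B, HasDerivAt w (w' x) x := by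
    intro x hx
    have := (hu x hx).div (((hu x hx).pow 2).const_add 1) (hpos x).ne'
    refine this.congr_deriv ?_
    simp only [hw']
    congr 1
    simp; ring
  set e : ℝ → ℂ := fun x => exp (I * (ψ x : ℂ)) with he
  have hed : ∀ x ∈ Set.Icc A B, HasDerivAt e (e x * (I * (u x : ℂ))) x := by
    intro x hx
    exact (((hψ x hx).ofReal_comp).const_mul I).cexp
  have hec : ContinuousOn e (Set.Icc A B) := fun x hx => (hed x hx).continuousAt.continuousWithinAt
  have hne : ∀ x, ‖e x‖ = 1 := fun x => by
    simp only [he]; rw [mul_comm]; exact Complex.norm_exp_ofReal_mul_I _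
  have hwe : ∀ x ∈ Set.Icc A B, HasDerivAt (fun x => (w x : ℂ) * e x)
      ((w' x : ℂ) * e x + (w x : ℂ) * (e x * (I * (u x : ℂ)))) x := fun x hx =>
    ((hwd x hx).ofReal_comp).mul (hed x hx)
  have hw'c : ContinuousOn w' (Set.Icc A B) := by
    apply ContinuousOn.div
    · exact hvc.mul (continuousOn_const.sub (huc.pow 2))
    · exact (continuousOn_const.add (huc.pow 2)).pow 2
    · intro x _; exact (pow_pos (hpos x) 2).ne'
  have hwc : ContinuousOn w (Set.Icc A B) := fun x hx => (hwd x hx).continuousAt.continuousWithinAt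
  have hDc : ContinuousOn (fun x => (w' x : ℂ) * e x + (w x : ℂ) * (e x * (I * (u x : ℂ))))
      (Set.Icc A B) := by
    have h1 := continuous_ofReal.comp_continuousOn hw'c
    have h2 := continuous_ofReal.comp_continuousOn hwc
    have h3 := continuous_ofReal.comp_continuousOn huc
    exact (h1.mul hec).add (h2.mul (hec.mul (continuousOn_const.mul h3)))
  have hDi : IntervalIntegrable (fun x => (w' x : ℂ) * e x + (w x : ℂ) * (e x * (I * (u x : ℂ))))
      volume A B := ContinuousOn.intervalIntegrable (by rwa [hI])
  have hei : IntervalIntegrable e volume A B := ContinuousOn.intervalIntegrable (by rwa [hI])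
  have hFTC := intervalIntegral.integral_eq_sub_of_hasDerivAt (a := A) (b := B)
    (f := fun x => (w x : ℂ) * e x) (by rw [hI]; exact hwe) hDi
  have hac : ContinuousOn (fun x => 2 * (v x / (1 + u x ^ 2))) (Set.Icc A B) := by
    apply continuousOn_const.mul
    exact hvc.div (continuousOn_const.add (huc.pow 2)) (fun x _ => (hpos x).ne')
  have hai : IntervalIntegrable (fun x => 2 * (v x / (1 + u x ^ 2))) volume A B :=
    ContinuousOn.intervalIntegrable (by rwa [hI])
  have hA := intervalIntegral.integral_eq_sub_of_hasDerivAt (a := A) (b := B)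
    (f := fun x => 2 * Real.arctan (u x)) (f' := fun x => 2 * (v x / (1 + u x ^ 2))) (by
      rw [hI]; intro x hx
      have := ((hu x hx).arctan).const_mul 2
      exact this.congr_deriv (by ring)) hai
  have hsub : ‖∫ x in A..B, (e x - (-I) *
      ((w' x : ℂ) * e x + (w x : ℂ) * (e x * (I * (u x : ℂ)))))‖ ≤
      ∫ x in A..B, 2 * (v x / (1 + u x ^ 2)) := by
    apply intervalIntegral.norm_integral_le_of_norm_le hAB _ hai
    filter_upwards with x hx
    have hx : x ∈ Set.Icc A B := ⟨hx.1.le, hx.2⟩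
    have : e x - (-I) * ((w' x : ℂ) * e x + (w x : ℂ) * (e x * (I * (u x : ℂ)))) =
        (I * (w' x : ℂ) + ((1 - u x * w x : ℝ) : ℂ)) * e x := by
      push_cast
      linear_combination (-(e x) * w x * u x) * (by norm_num [Complex.I_sq] : -(I^2) = 1)
    rw [this, norm_mul, hne, mul_one]
    have h1 : |w' x| ≤ v x / (1 + u x ^ 2) := by
      have hvx := hv x hx
      simp only [hw']
      rw [abs_div, abs_mul, abs_of_pos (by linarith : 0 < v x),
        abs_of_pos (pow_pos (hpos x) 2), div_le_div_iff₀ (pow_pos (hpos x) 2) (hpos x)]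
      have : |1 - u x ^ 2| ≤ 1 + u x ^ 2 := by
        rw [abs_le]; constructor <;> nlinarith [sq_nonneg (u x)]
      calc v x * |1 - u x ^ 2| * (1 + u x ^ 2) ≤ v x * (1 + u x ^ 2) * (1 + u x ^ 2) := by
            have := (hpos x).le
            gcongr
        _ = _ := by ring
    have h2 : |1 - u x * w x| ≤ v x / (1 + u x ^ 2) := by
      have : 1 - u x * w x = 1 / (1 + u x ^ 2) := by
        simp only [hw]; have := (hpos x).ne'; field_simp; ring
      rw [this, abs_of_pos (by have := hpos x; positivity)]
      have := hpos x
      gcongr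
      exact hv x hx
    calc ‖I * (w' x : ℂ) + ((1 - u x * w x : ℝ) : ℂ)‖ ≤ ‖I * (w' x : ℂ)‖ +
          ‖((1 - u x * w x : ℝ) : ℂ)‖ := norm_add_le _ _
      _ = |w' x| + |1 - u x * w x| := by
        rw [norm_mul, Complex.norm_I, one_mul, Complex.norm_real, Complex.norm_real]; rfl
      _ ≤ _ := by linarith
  rw [intervalIntegral.integral_sub hei (hDi.const_mul _), intervalIntegral.integral_const_mul,
    hFTC, hA] at hsub
  have hwb : ∀ x, ‖(w x : ℂ) * e x‖ ≤ 1 / 2 := by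
    intro x
    rw [norm_mul, hne, mul_one, Complex.norm_real, Real.norm_eq_abs]
    simp only [hw]
    rw [abs_div, abs_of_pos (hpos x), div_le_div_iff₀ (hpos x) two_pos]
    nlinarith [sq_nonneg (|u x| - 1), sq_abs (u x)]
  have h3 : ‖-I * ((w B : ℂ) * e B - (w A : ℂ) * e A)‖ ≤ 1 := by
    rw [norm_mul, norm_neg, Complex.norm_I, one_mul]
    linarith [norm_sub_le ((w B : ℂ) * e B) ((w A : ℂ) * e A), hwb A, hwb B]
  have h4 := norm_sub_norm_le (∫ x in A..B, e x) (-I * ((w B : ℂ) * e B - (w A : ℂ) * e A))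
  have h5 := Real.arctan_lt_pi_div_two (u B)
  have h6 := Real.neg_pi_div_two_lt_arctan (u A)
  linarith

/-- Non-stationary phase on `[1, B]`: integration by parts against `1 / ψ'`, the condition
`|ψ''| ≤ (ψ')² / x²` making the error term integrable up to infinity. -/
theorem vdc_first {B : ℝ} (hB : 1 ≤ B) {ψ u v : ℝ → ℝ}
    (hψ : ∀ x ∈ Set.Icc 1 B, HasDerivAt ψ (u x) x)
    (hu : ∀ x ∈ Set.Icc 1 B, HasDerivAt u (v x) x)
    (hvc : ContinuousOn v (Set.Icc 1 B)) (hu1 : ∀ x ∈ Set.Icc 1 B, 1 ≤ u x)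
    (hv : ∀ x ∈ Set.Icc 1 B, |v x| ≤ u x ^ 2 / x ^ 2) :
    ‖∫ x in (1:ℝ)..B, exp (I * (ψ x : ℂ))‖ ≤ 3 := by
  have hψc : ContinuousOn ψ (Set.Icc 1 B) := fun x hx => (hψ x hx).continuousAt.continuousWithinAt
  have huc : ContinuousOn u (Set.Icc 1 B) := fun x hx => (hu x hx).continuousAt.continuousWithinAt
  have hI : Set.uIcc 1 B = Set.Icc 1 B := Set.uIcc_of_le hB
  have hpos : ∀ x ∈ Set.Icc 1 B, 0 < u x := fun x hx => by linarith [hu1 x hx]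
  set w : ℝ → ℝ := fun x => (u x)⁻¹ with hw
  set w' : ℝ → ℝ := fun x => - v x / (u x) ^ 2 with hw'
  have hwd : ∀ x ∈ Set.Icc 1 B, HasDerivAt w (w' x) x := fun x hx =>
    (hu x hx).inv (hpos x hx).ne'
  set e : ℝ → ℂ := fun x => exp (I * (ψ x : ℂ)) with he
  have hed : ∀ x ∈ Set.Icc 1 B, HasDerivAt e (e x * (I * (u x : ℂ))) x := by
    intro x hx
    exact (((hψ x hx).ofReal_comp).const_mul I).cexp
  have hec : ContinuousOn e (Set.Icc 1 B) := fun x hx => (hed x hx).continuousAt.continuousWithinAt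
  have hne : ∀ x, ‖e x‖ = 1 := fun x => by
    simp only [he]; rw [mul_comm]; exact Complex.norm_exp_ofReal_mul_I _
  have hwe : ∀ x ∈ Set.Icc 1 B, HasDerivAt (fun x => (w x : ℂ) * e x)
      ((w' x : ℂ) * e x + (w x : ℂ) * (e x * (I * (u x : ℂ)))) x := fun x hx =>
    ((hwd x hx).ofReal_comp).mul (hed x hx)
  have hw'c : ContinuousOn w' (Set.Icc 1 B) :=
    hvc.neg.div (huc.pow 2) (fun x hx => (pow_pos (hpos x hx) 2).ne')
  have hwc : ContinuousOn w (Set.Icc 1 B) := fun x hx => (hwd x hx).continuousAt.continuousWithinAt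
  have hDc : ContinuousOn (fun x => (w' x : ℂ) * e x + (w x : ℂ) * (e x * (I * (u x : ℂ))))
      (Set.Icc 1 B) := by
    have h1 := continuous_ofReal.comp_continuousOn hw'c
    have h2 := continuous_ofReal.comp_continuousOn hwc
    have h3 := continuous_ofReal.comp_continuousOn huc
    exact (h1.mul hec).add (h2.mul (hec.mul (continuousOn_const.mul h3)))
  have hDi : IntervalIntegrable (fun x => (w' x : ℂ) * e x + (w x : ℂ) * (e x * (I * (u x : ℂ))))
      volume 1 B := ContinuousOn.intervalIntegrable (by rwa [hI])
  have hei : IntervalIntegrable e volume 1 B := ContinuousOn.intervalIntegrable (by rwa [hI])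
  have hFTC := intervalIntegral.integral_eq_sub_of_hasDerivAt (a := 1) (b := B)
    (f := fun x => (w x : ℂ) * e x) (by rw [hI]; exact hwe) hDi
  have hac : ContinuousOn (fun x : ℝ => 1 / x ^ 2) (Set.Icc 1 B) :=
    continuousOn_const.div (continuousOn_id.pow 2) (fun x hx => by
      have : (0:ℝ) < x := by linarith [hx.1]
      exact (pow_pos this 2).ne')
  have hai : IntervalIntegrable (fun x : ℝ => 1 / x ^ 2) volume 1 B :=
    ContinuousOn.intervalIntegrable (by rwa [hI])
  have hA := intervalIntegral.integral_eq_sub_of_hasDerivAt (a := 1) (b := B)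
    (f := fun x => -x⁻¹) (f' := fun x => 1 / x ^ 2) (by
      rw [hI]; intro x hx
      have h0 : x ≠ 0 := by linarith [hx.1]
      have := (hasDerivAt_inv h0).neg
      exact this.congr_deriv (by simp)) hai
  have hsub : ‖∫ x in (1:ℝ)..B, (e x - (-I) *
      ((w' x : ℂ) * e x + (w x : ℂ) * (e x * (I * (u x : ℂ)))))‖ ≤
      ∫ x in (1:ℝ)..B, 1 / x ^ 2 := by
    apply intervalIntegral.norm_integral_le_of_norm_le hB _ hai
    filter_upwards with x hx
    have hx : x ∈ Set.Icc 1 B := ⟨hx.1.le, hx.2⟩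
    have h0 := hpos x hx
    have hx0 : 0 < x := by linarith [hx.1]
    have huw : (w x : ℂ) * u x = 1 := by
      rw [← Complex.ofReal_mul]; simp [hw, h0.ne']
    have : e x - (-I) * ((w' x : ℂ) * e x + (w x : ℂ) * (e x * (I * (u x : ℂ)))) =
        (I * (w' x : ℂ)) * e x := by
      linear_combination (e x * I ^ 2) * huw + (e x) * Complex.I_sq
    rw [this, norm_mul, hne, mul_one, norm_mul, Complex.norm_I, one_mul, Complex.norm_real,
      Real.norm_eq_abs]
    simp only [hw']
    rw [abs_div, abs_neg, abs_of_pos (pow_pos h0 2), div_le_iff₀ (pow_pos h0 2)]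
    calc |v x| ≤ _ := hv x hx
      _ = _ := by ring
  rw [intervalIntegral.integral_sub hei (hDi.const_mul _), intervalIntegral.integral_const_mul,
    hFTC, hA] at hsub
  have hwb : ∀ x ∈ Set.Icc 1 B, ‖(w x : ℂ) * e x‖ ≤ 1 := by
    intro x hx
    rw [norm_mul, hne, mul_one, Complex.norm_real, Real.norm_eq_abs]
    simp only [hw]
    rw [abs_of_pos (inv_pos.2 (hpos x hx))]
    exact inv_le_one_of_one_le₀ (hu1 x hx)
  have h3 : ‖-I * ((w B : ℂ) * e B - (w 1 : ℂ) * e 1)‖ ≤ 2 := by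
    rw [norm_mul, norm_neg, Complex.norm_I, one_mul]
    linarith [norm_sub_le ((w B : ℂ) * e B) ((w 1 : ℂ) * e 1), hwb 1 ⟨le_rfl, hB⟩,
      hwb B ⟨hB, le_rfl⟩]
  have h4 := norm_sub_norm_le (∫ x in (1:ℝ)..B, e x) (-I * ((w B : ℂ) * e B - (w 1 : ℂ) * e 1))
  have h5 : 0 < B⁻¹ := by positivity
  norm_num at hsub h4 h3
  linarith

/-! ### The dispersive kernel bound -/

/-- The interval `[0, 1]` contributes at most `1`. On `[1, B]` the phase `η^m - x η^k` has
second derivative at least `1` when `x ≥ 0`, because `k ≤ 1`; when `x ≤ 0` it has no stationary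
point. -/
theorem kernel_unit {m k : ℝ} (hm : 2 ≤ m) (hk0 : 0 < k) (hk1 : k ≤ 1) (x : ℝ) {B : ℝ}
    (hB : 0 ≤ B) :
    ‖∫ η in (0:ℝ)..B, exp (I * ((η ^ m - x * η ^ k : ℝ) : ℂ))‖ ≤ 10 := by
  have hne : ∀ y : ℝ, ‖exp (I * (y : ℂ))‖ = 1 := fun y => by
    rw [mul_comm]; exact Complex.norm_exp_ofReal_mul_I _
  have hcont : Continuous fun η : ℝ => exp (I * ((η ^ m - x * η ^ k : ℝ) : ℂ)) := by
    have h1 : Continuous fun η : ℝ => η ^ m := Real.continuous_rpow_const (by linarith)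
    have h2 : Continuous fun η : ℝ => η ^ k := Real.continuous_rpow_const hk0.le
    fun_prop
  have hsmall : ∀ b : ℝ, 0 ≤ b → b ≤ 1 →
      ‖∫ η in (0:ℝ)..b, exp (I * ((η ^ m - x * η ^ k : ℝ) : ℂ))‖ ≤ 1 := by
    intro b hb hb1
    have := intervalIntegral.norm_integral_le_of_norm_le_const (a := 0) (b := b) (C := 1)
      (f := fun η : ℝ => exp (I * ((η ^ m - x * η ^ k : ℝ) : ℂ))) (fun y _ => (hne _).le)
    rw [sub_zero, abs_of_nonneg hb] at this
    linarith
  rcases le_total B 1 with hB1 | hB1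
  · linarith [hsmall B hB hB1]
  rw [← intervalIntegral.integral_add_adjacent_intervals (b := 1)
    (hcont.intervalIntegrable _ _) (hcont.intervalIntegrable _ _)]
  have hlarge : ‖∫ η in (1:ℝ)..B, exp (I * ((η ^ m - x * η ^ k : ℝ) : ℂ))‖ ≤ 9 := by
    have hψ : ∀ η ∈ Set.Icc 1 B, HasDerivAt (fun η : ℝ => η ^ m - x * η ^ k)
        (m * η ^ (m - 1) - x * (k * η ^ (k - 1))) η := by
      intro η hη
      have h0 : η ≠ 0 := by linarith [hη.1]
      exact (Real.hasDerivAt_rpow_const (Or.inl h0)).sub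
        ((Real.hasDerivAt_rpow_const (Or.inl h0)).const_mul x)
    have hu : ∀ η ∈ Set.Icc 1 B, HasDerivAt (fun η : ℝ => m * η ^ (m - 1) - x * (k * η ^ (k - 1)))
        (m * ((m - 1) * η ^ (m - 1 - 1)) - x * (k * ((k - 1) * η ^ (k - 1 - 1)))) η := by
      intro η hη
      have h0 : η ≠ 0 := by linarith [hη.1]
      exact ((Real.hasDerivAt_rpow_const (Or.inl h0)).const_mul m).sub
        (((Real.hasDerivAt_rpow_const (Or.inl h0)).const_mul k).const_mul x)
    have hr : ∀ c : ℝ, ContinuousOn (fun η : ℝ => η ^ c) (Set.Icc 1 B) := fun c =>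
      ContinuousOn.rpow_const continuousOn_id (fun η hη => Or.inl (by
        have : (1:ℝ) ≤ η := hη.1
        linarith))
    have hvc : ContinuousOn (fun η : ℝ => m * ((m - 1) * η ^ (m - 1 - 1)) -
        x * (k * ((k - 1) * η ^ (k - 1 - 1)))) (Set.Icc 1 B) :=
      (continuousOn_const.mul (continuousOn_const.mul (hr _))).sub
        (continuousOn_const.mul (continuousOn_const.mul (continuousOn_const.mul (hr _))))
    rcases le_total 0 x with hx | hx
    · have := vdc_second hB1 hψ hu hvc (fun η hη => by
        have h1 : 1 ≤ η ^ (m - 1 - 1) := Real.one_le_rpow hη.1 (by linarith)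
        have h2 : 0 ≤ η ^ (k - 1 - 1) := Real.rpow_nonneg (by linarith [hη.1]) _
        have h3 : 0 ≤ x * (k * ((1 - k) * η ^ (k - 1 - 1))) :=
          mul_nonneg hx (mul_nonneg hk0.le (mul_nonneg (by linarith) h2))
        have h4 : 1 ≤ m * ((m - 1) * η ^ (m - 1 - 1)) := by
          have : 1 ≤ (m - 1) * η ^ (m - 1 - 1) := by nlinarith
          nlinarith
        linarith)
      linarith [Real.pi_lt_four]
    · have := vdc_first hB1 hψ hu hvc (fun η hη => by
        have h1 : 1 ≤ η ^ (m - 1) := Real.one_le_rpow hη.1 (by linarith)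
        have h2 : 0 ≤ η ^ (k - 1) := Real.rpow_nonneg (by linarith [hη.1]) _
        have h3 : 0 ≤ (-x) * (k * η ^ (k - 1)) := by
          apply mul_nonneg (by linarith); positivity
        nlinarith) (fun η hη => by
        have hη1 : 1 ≤ η := hη.1
        have hη0 : 0 < η := by linarith
        have e1 : η ^ (m - 1) = η ^ (m - 1 - 1) * η := by
          rw [← Real.rpow_add_one hη0.ne']; ring_nf
        have e2 : η ^ (k - 1) = η ^ (k - 1 - 1) * η := by
          rw [← Real.rpow_add_one hη0.ne']; ring_nf
        have p1 : 1 ≤ η ^ (m - 1 - 1) := Real.one_le_rpow hη.1 (by linarith)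
        have p2 : 0 ≤ η ^ (k - 1 - 1) := Real.rpow_nonneg hη0.le _
        rw [e1, e2]
        set P := η ^ (m - 1 - 1)
        set Q := (-x) * k * η ^ (k - 1 - 1) with hQ
        have hQ0 : 0 ≤ Q := mul_nonneg (mul_nonneg (by linarith) hk0.le) p2
        have e3 : m * (P * η) - x * (k * (η ^ (k - 1 - 1) * η)) = (m * P + Q) * η := by
          rw [hQ]; ring
        have e4 : m * ((m - 1) * P) - x * (k * ((k - 1) * η ^ (k - 1 - 1))) =
            m * (m - 1) * P - (1 - k) * Q := by rw [hQ]; ring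
        rw [e3, e4, mul_pow, mul_div_assoc, div_self (by positivity), mul_one]
        have hS : m ≤ m * P + Q := by nlinarith
        have q1 : 0 ≤ m * (m - 1) * P := by
          apply mul_nonneg (mul_nonneg _ _) <;> linarith
        have q2 : 0 ≤ (1 - k) * Q := mul_nonneg (by linarith) hQ0
        have q3 : (1 - k) * Q ≤ m * Q := by
          apply mul_le_mul_of_nonneg_right _ hQ0; linarith
        have q4 : m * (m * P + Q) ≤ (m * P + Q) ^ 2 := by
          rw [sq]; apply mul_le_mul_of_nonneg_right hS; linarith
        rw [abs_le]; constructor <;> nlinarith)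
      linarith
  calc _ ≤ _ := norm_add_le _ _
    _ ≤ 1 + 9 := add_le_add (hsmall 1 zero_le_one le_rfl) hlarge
    _ = 10 := by norm_num

/-- The bound of `kernel_unit` rescaled by `η ↦ t^{1/m} η`. -/
theorem kernel_pos {m k : ℝ} (hm : 2 ≤ m) (hk0 : 0 < k) (hk1 : k ≤ 1) {t : ℝ} (ht : 0 < t) (x : ℝ)
    {B : ℝ} (hB : 0 ≤ B) :
    ‖∫ η in (0:ℝ)..B, exp (I * ((t * η ^ m - x * η ^ k : ℝ) : ℂ))‖ ≤ 10 * t ^ (-(1 / m)) := by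
  set c : ℝ := t ^ (1 / m) with hc
  have hc0 : 0 < c := Real.rpow_pos_of_pos ht _
  have hcm : c ^ m = t := by
    rw [hc, ← Real.rpow_mul ht.le, one_div_mul_cancel (by linarith), Real.rpow_one]
  have key := intervalIntegral.integral_comp_mul_left (a := 0) (b := B)
    (fun ζ : ℝ => exp (I * ((ζ ^ m - (x / c ^ k) * ζ ^ k : ℝ) : ℂ))) hc0.ne'
  have e : ∫ η in (0:ℝ)..B, exp (I * ((t * η ^ m - x * η ^ k : ℝ) : ℂ)) =
      ∫ η in (0:ℝ)..B, exp (I * (((c * η) ^ m - (x / c ^ k) * (c * η) ^ k : ℝ) : ℂ)) := by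
    apply intervalIntegral.integral_congr
    intro η hη
    rw [Set.uIcc_of_le hB] at hη
    have : 0 < c ^ k := Real.rpow_pos_of_pos hc0 _
    simp only
    rw [Real.mul_rpow hc0.le hη.1, Real.mul_rpow hc0.le hη.1, hcm]
    congr 4
    field_simp
  rw [e, key, norm_smul, mul_zero, Real.norm_eq_abs, abs_of_pos (inv_pos.2 hc0),
    Real.rpow_neg ht.le, ← hc, mul_comm]
  exact mul_le_mul_of_nonneg_right (kernel_unit hm hk0 hk1 _ (by positivity)) (by positivity)

/-- Negative times reduce to positive ones by complex conjugation. -/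
theorem kernel_ne {m k : ℝ} (hm : 2 ≤ m) (hk0 : 0 < k) (hk1 : k ≤ 1) {t : ℝ} (ht : t ≠ 0) (x : ℝ)
    {B : ℝ} (hB : 0 ≤ B) :
    ‖∫ η in (0:ℝ)..B, exp (I * ((t * η ^ m - x * η ^ k : ℝ) : ℂ))‖ ≤ 10 * |t| ^ (-(1 / m)) := by
  rcases lt_or_gt_of_ne ht with h | h
  · have := kernel_pos hm hk0 hk1 (neg_pos.2 h) (-x) hB
    rw [abs_of_neg h]
    refine le_trans (le_of_eq ?_) this
    rw [intervalIntegral.integral_of_le hB, intervalIntegral.integral_of_le hB,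
      ← Complex.norm_conj, ← integral_conj]
    congr 2
    funext η
    rw [← Complex.exp_conj, map_mul, Complex.conj_I, Complex.conj_ofReal]
    congr 1
    push_cast; ring
  · rw [abs_of_pos h]; exact kernel_pos hm hk0 hk1 h x hB

/-- The substitution `η = ξ^{1+β}` absorbs the weight `ξ^β` into the measure and leads to
`kernel_ne` with `m = (2+a)/(1+β)` and `k = 1/(1+β)`; the condition `β ≤ a/2` is what makes
`m ≥ 2`. -/
theorem kernel_half {a β : ℝ} (hβ0 : 0 ≤ β) (hβ : β ≤ a / 2) {t : ℝ} (ht : t ≠ 0) (x : ℝ)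
    {N : ℝ} (hN : 0 ≤ N) :
    ‖∫ ξ in (0:ℝ)..N, ((ξ ^ β : ℝ) : ℂ) * exp (I * ((t * ξ ^ (2 + a) - x * ξ : ℝ) : ℂ))‖ ≤
      10 * |t| ^ (-((β + 1) / (2 + a))) := by
  have h1β : 0 < 1 + β := by linarith
  have hm : 2 ≤ (2 + a) / (1 + β) := by rw [le_div_iff₀ h1β]; linarith
  set m := (2 + a) / (1 + β) with hmdef
  set k := 1 / (1 + β) with hkdef
  have hk0 : 0 < k := by positivity
  have hk1 : k ≤ 1 := by rw [hkdef, div_le_one h1β]; linarith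
  set g : ℝ → ℂ := fun η => exp (I * ((t * η ^ m - x * η ^ k : ℝ) : ℂ)) with hg
  have hgc : Continuous g := by
    have h1 : Continuous fun η : ℝ => η ^ m := Real.continuous_rpow_const (by linarith)
    have h2 : Continuous fun η : ℝ => η ^ k := Real.continuous_rpow_const hk0.le
    simp only [hg]
    fun_prop
  have hcv := intervalIntegral.integral_deriv_smul_comp (a := 0) (b := N)
    (f := fun ξ : ℝ => ξ ^ (1 + β)) (f' := fun ξ => (1 + β) * ξ ^ β) (g := g)
    (fun ξ _ => by
      have := Real.hasDerivAt_rpow_const (x := ξ) (p := 1 + β) (Or.inr (by linarith))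
      exact this.congr_deriv (by ring_nf))
    ((continuous_const.mul (Real.continuous_rpow_const hβ0)).continuousOn) hgc
  rw [Real.zero_rpow h1β.ne'] at hcv
  have e : ∫ ξ in (0:ℝ)..N, ((ξ ^ β : ℝ) : ℂ) * exp (I * ((t * ξ ^ (2 + a) - x * ξ : ℝ) : ℂ)) =
      k • ∫ ξ in (0:ℝ)..N, ((1 + β) * ξ ^ β) • (g ∘ fun ξ : ℝ => ξ ^ (1 + β)) ξ := by
    rw [← intervalIntegral.integral_smul]
    apply intervalIntegral.integral_congr
    intro ξ hξ
    rw [Set.uIcc_of_le hN] at hξ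
    simp only [hg, Function.comp]
    rw [← Real.rpow_mul hξ.1, ← Real.rpow_mul hξ.1, smul_smul]
    have e1 : (1 + β) * m = 2 + a := by rw [hmdef]; field_simp
    have e2 : (1 + β) * k = 1 := by rw [hkdef]; field_simp
    have e3 : k * ((1 + β) * ξ ^ β) = ξ ^ β := by rw [← mul_assoc, mul_comm k, e2, one_mul]
    rw [e1, e2, e3, Real.rpow_one, Complex.real_smul]
  rw [e, hcv, norm_smul, Real.norm_eq_abs, abs_of_pos hk0]
  have := kernel_ne hm hk0 hk1 ht x (Real.rpow_nonneg hN (1 + β))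
  have e4 : 1 / m = (β + 1) / (2 + a) := by rw [hmdef, one_div_div, add_comm]
  rw [e4] at this
  calc k * _ ≤ 1 * (10 * |t| ^ (-((β + 1) / (2 + a)))) := by
        apply mul_le_mul hk1 this (norm_nonneg _) zero_le_one
    _ = _ := one_mul _

/-- Dispersive estimate for the kernel of `D^β W(t)`, uniform in the frequency
truncation `N`. -/
theorem kernel_bound {a β : ℝ} (hβ0 : 0 ≤ β) (hβ : β ≤ a / 2) {t : ℝ} (ht : t ≠ 0) (x : ℝ)
    {N : ℝ} (hN : 0 ≤ N) :
    ‖∫ ξ in (-N)..N, ((|ξ| ^ β : ℝ) : ℂ) * exp (I * ((t * disp a ξ - x * ξ : ℝ) : ℂ))‖ ≤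
      20 * |t| ^ (-((β + 1) / (2 + a))) := by
  have hc : Continuous fun ξ : ℝ =>
      ((|ξ| ^ β : ℝ) : ℂ) * exp (I * ((t * disp a ξ - x * ξ : ℝ) : ℂ)) := by
    have h1 : Continuous fun ξ : ℝ => |ξ| ^ β := (Real.continuous_rpow_const hβ0).comp continuous_abs
    have h2 : Continuous fun ξ : ℝ => |ξ| ^ (1 + a) :=
      (Real.continuous_rpow_const (by linarith)).comp continuous_abs
    unfold disp
    fun_prop
  have hpos : ∀ (t x : ℝ), ∫ ξ in (0:ℝ)..N, ((|ξ| ^ β : ℝ) : ℂ) *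
      exp (I * ((t * disp a ξ - x * ξ : ℝ) : ℂ)) =
      ∫ ξ in (0:ℝ)..N, ((ξ ^ β : ℝ) : ℂ) * exp (I * ((t * ξ ^ (2 + a) - x * ξ : ℝ) : ℂ)) := by
    intro t x
    apply intervalIntegral.integral_congr
    intro ξ hξ
    rw [Set.uIcc_of_le hN] at hξ
    have e1 : disp a ξ = ξ ^ (2 + a) := by
      unfold disp
      rw [abs_of_nonneg hξ.1, ← Real.rpow_one_add' hξ.1 (by linarith)]
      ring_nf
    simp only [e1, abs_of_nonneg hξ.1]
  have hneg : ∫ ξ in (-N)..0, ((|ξ| ^ β : ℝ) : ℂ) * exp (I * ((t * disp a ξ - x * ξ : ℝ) : ℂ)) =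
      ∫ ξ in (0:ℝ)..N, ((|ξ| ^ β : ℝ) : ℂ) * exp (I * (((-t) * disp a ξ - (-x) * ξ : ℝ) : ℂ)) := by
    rw [← neg_zero, ← intervalIntegral.integral_comp_neg, neg_zero]
    congr 1; funext ξ
    have : disp a (-ξ) = - disp a ξ := by unfold disp; rw [abs_neg]; ring
    rw [this, abs_neg]; ring_nf
  rw [← intervalIntegral.integral_add_adjacent_intervals (b := 0)
    (hc.intervalIntegrable _ _) (hc.intervalIntegrable _ _), hneg, hpos, hpos]
  have h1 := kernel_half hβ0 hβ ht x hN
  have h2 := kernel_half hβ0 hβ (neg_ne_zero.2 ht) (-x) hN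
  rw [abs_neg] at h2
  exact (norm_add_le _ _).trans (by linarith)

/-! ### The Hardy–Littlewood–Sobolev inequality -/

theorem lintegral_even (g : ℝ → ENNReal) :
    ∫⁻ r, g |r| = 2 * ∫⁻ r in Set.Ioi 0, g r := by
  have h1 : ∫⁻ r in Set.Ioi (0:ℝ), g |r| = ∫⁻ r in Set.Ioi 0, g r :=
    setLIntegral_congr_fun measurableSet_Ioi (fun r hr => by
      rw [abs_of_pos hr])
  have h2 : ∫⁻ r in Set.Iio (0:ℝ), g |r| = ∫⁻ r in Set.Ioi (0:ℝ), g |r| := by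
    have := (Measure.measurePreserving_neg (volume : Measure ℝ)).setLIntegral_comp_preimage_emb
      (Homeomorph.neg ℝ).measurableEmbedding (fun r => g |r|) (Set.Ioi (0:ℝ))
    rw [← this]
    simp
  rw [← lintegral_add_compl _ (measurableSet_Ioi (a := (0:ℝ))), Set.compl_Ioi,
    setLIntegral_congr Iio_ae_eq_Iic.symm, h2, h1, two_mul]

theorem near_part {γ R : ℝ} (hγ0 : 0 < γ) (hγ : γ ≤ 1 / 2) (hR : 0 < R) (t : ℝ) :
    ∫⁻ s, (if |t - s| ≤ R then ENNReal.ofReal (|t - s| ^ (-γ)) else 0) ≤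
      ENNReal.ofReal (4 * R ^ (1 - γ)) := by
  rw [lintegral_sub_left_eq_self (fun r => if |r| ≤ R then ENNReal.ofReal (|r| ^ (-γ)) else 0) t,
    lintegral_even (fun r => if r ≤ R then ENNReal.ofReal (r ^ (-γ)) else 0)]
  have h1 : ∫⁻ r in Set.Ioi (0:ℝ), (if r ≤ R then ENNReal.ofReal (r ^ (-γ)) else 0) =
      ∫⁻ r in Set.Ioc 0 R, ENNReal.ofReal (r ^ (-γ)) := by
    rw [← Set.Ioi_inter_Iic, Set.inter_comm, ← Measure.restrict_restrict measurableSet_Iic,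
      ← lintegral_indicator measurableSet_Iic]
    rfl
  have hinteg : IntervalIntegrable (fun r : ℝ => r ^ (-γ)) volume 0 R :=
    intervalIntegral.intervalIntegrable_rpow' (by linarith)
  rw [h1, ← ofReal_integral_eq_lintegral_ofReal ((intervalIntegrable_iff_integrableOn_Ioc_of_le hR.le).1 hinteg) (by
      filter_upwards [self_mem_ae_restrict measurableSet_Ioc] with r hr
      exact Real.rpow_nonneg hr.1.le _), ← intervalIntegral.integral_of_le hR.le,
    integral_rpow (Or.inl (by linarith)), Real.zero_rpow (by linarith)]
  rw [← ENNReal.ofReal_ofNat 2, ← ENNReal.ofReal_mul (by norm_num)]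
  apply ENNReal.ofReal_le_ofReal
  have e : -γ + 1 = 1 - γ := by ring
  rw [sub_zero, e]
  have hp : 0 < R ^ (1 - γ) := Real.rpow_pos_of_pos hR _
  rw [← mul_div_assoc, div_le_iff₀ (by linarith)]
  nlinarith

theorem far_part {R : ℝ} (hR : 0 < R) (t : ℝ) :
    ∫⁻ s, (if R < |t - s| then ENNReal.ofReal (|t - s| ^ (-2 : ℝ)) else 0) =
      ENNReal.ofReal (2 / R) := by
  rw [lintegral_sub_left_eq_self (fun r => if R < |r| then ENNReal.ofReal (|r| ^ (-2:ℝ)) else 0) t,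
    lintegral_even (fun r => if R < r then ENNReal.ofReal (r ^ (-2:ℝ)) else 0)]
  have h1 : ∫⁻ r in Set.Ioi (0:ℝ), (if R < r then ENNReal.ofReal (r ^ (-2:ℝ)) else 0) =
      ∫⁻ r in Set.Ioi R, ENNReal.ofReal (r ^ (-2:ℝ)) := by
    have : Set.Ioi R = Set.Ioi R ∩ Set.Ioi 0 := by
      rw [Set.Ioi_inter_Ioi, max_eq_left hR.le]
    rw [this, ← Measure.restrict_restrict measurableSet_Ioi,
      ← lintegral_indicator (μ := volume.restrict (Set.Ioi 0)) (measurableSet_Ioi (a := R))]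
    rfl
  rw [h1, ← ofReal_integral_eq_lintegral_ofReal (integrableOn_Ioi_rpow_of_lt (by norm_num) hR) (by
      filter_upwards [self_mem_ae_restrict measurableSet_Ioi] with r hr
      exact Real.rpow_nonneg (hR.trans hr).le _), integral_Ioi_rpow_of_lt (by norm_num) hR]
  rw [← ENNReal.ofReal_ofNat 2, ← ENNReal.ofReal_mul (by norm_num)]
  congr 1
  have e : (-2:ℝ) + 1 = -1 := by norm_num
  rw [e, Real.rpow_neg_one]
  field_simp

/-- The inner integral of the Hardy–Littlewood–Sobolev form restricted to `f s ≤ f t`. It is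
split at distance `R = S f(t)^{-p}` from `t`: nearby, `f s` is replaced by `f t`; far away,
Hölder's inequality uses the bound `S` on `∫ f^p`. -/
theorem inner_part {γ p S : ℝ} (hγ0 : 0 < γ) (hγ : γ ≤ 1 / 2) (hp : p = 2 / (2 - γ))
    {f : ℝ → ℝ} (hf : Measurable f) (hf0 : ∀ s, 0 ≤ f s) (hS0 : 0 < S)
    (hS : ∫⁻ s, ENNReal.ofReal (f s ^ p) ≤ ENNReal.ofReal S) (t : ℝ) :
    ∫⁻ s, (if f s ≤ f t then ENNReal.ofReal (f s * |t - s| ^ (-γ)) else 0) ≤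
      ENNReal.ofReal (6 * S ^ (1 - γ) * f t ^ (p - 1)) := by
  have h2γ : 0 < 2 - γ := by linarith
  have hp1 : p - 1 = γ / (2 - γ) := by rw [hp]; field_simp; ring
  have hp1' : 0 < p - 1 := by rw [hp1]; positivity
  rcases (hf0 t).eq_or_lt with h0 | h0
  · have : ∀ s, (if f s ≤ f t then ENNReal.ofReal (f s * |t - s| ^ (-γ)) else 0) = 0 := by
      intro s
      split_ifs with h
      · have : f s = 0 := le_antisymm (h.trans h0.symm.le) (hf0 s)
        simp [this]
      · rfl
    simp [this]
  set F := f t with hF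
  -- this radius balances the near and the far contributions
  set R := S * F ^ (-p) with hR
  have hR0 : 0 < R := mul_pos hS0 (Real.rpow_pos_of_pos h0 _)
  have hmeas1 : Measurable fun s => (if R < |t - s| then ENNReal.ofReal (|t - s| ^ (-γ)) else 0) := by
    apply Measurable.ite
    · exact measurableSet_lt measurable_const (by fun_prop)
    · fun_prop
    · exact measurable_const
  have hmeas2 : Measurable fun s => (if |t - s| ≤ R then ENNReal.ofReal (|t - s| ^ (-γ)) else 0) := by
    apply Measurable.ite
    · exact measurableSet_le (by fun_prop) measurable_const
    · fun_prop
    · exact measurable_const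
  have hpt : ∀ s, (if f s ≤ F then ENNReal.ofReal (f s * |t - s| ^ (-γ)) else 0) ≤
      ENNReal.ofReal F * (if |t - s| ≤ R then ENNReal.ofReal (|t - s| ^ (-γ)) else 0) +
      ENNReal.ofReal (f s) * (if R < |t - s| then ENNReal.ofReal (|t - s| ^ (-γ)) else 0) := by
    intro s
    by_cases h1 : f s ≤ F
    · by_cases h2 : |t - s| ≤ R
      · simp only [h1, h2, if_true]
        rw [ENNReal.ofReal_mul (hf0 s)]
        refine le_trans ?_ le_self_add
        gcongr
      · simp only [h1, h2, not_le.1 h2, if_true, if_false]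
        rw [ENNReal.ofReal_mul (hf0 s)]
        simp
    · simp [h1]
  have hpq : p.HolderConjugate (2 / γ) := by
    rw [Real.holderConjugate_iff]
    refine ⟨by linarith, ?_⟩
    rw [hp]; field_simp; ring
  have hH := ENNReal.lintegral_mul_le_Lp_mul_Lq (volume : Measure ℝ) hpq
    (f := fun s => ENNReal.ofReal (f s))
    (g := fun s => (if R < |t - s| then ENNReal.ofReal (|t - s| ^ (-γ)) else 0))
    (by fun_prop) hmeas1.aemeasurable
  have e1 : ∫⁻ s, ENNReal.ofReal (f s) ^ p ≤ ENNReal.ofReal S := by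
    refine le_trans (le_of_eq ?_) hS
    congr 1; funext s
    rw [ENNReal.ofReal_rpow_of_nonneg (hf0 s) (by linarith)]
  have e2 : ∫⁻ s, (if R < |t - s| then ENNReal.ofReal (|t - s| ^ (-γ)) else 0) ^ (2 / γ) =
      ENNReal.ofReal (2 / R) := by
    rw [← far_part hR0 t]
    congr 1; funext s
    split_ifs with h
    · rw [ENNReal.ofReal_rpow_of_nonneg (by positivity) (by positivity),
        ← Real.rpow_mul (abs_nonneg _)]
      congr 2; field_simp
    · rw [ENNReal.zero_rpow_of_pos (by positivity)]
  have h3 : ∫⁻ s, ENNReal.ofReal (f s) *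
      (if R < |t - s| then ENNReal.ofReal (|t - s| ^ (-γ)) else 0) ≤
      ENNReal.ofReal (2 * S ^ (1 - γ) * F ^ (p - 1)) := by
    calc _ ≤ _ := hH
      _ ≤ ENNReal.ofReal S ^ (1 / p) * ENNReal.ofReal (2 / R) ^ (1 / (2 / γ)) := by
        rw [e2]
        gcongr
        rw [hp]; positivity
      _ = ENNReal.ofReal (S ^ (1 / p) * (2 / R) ^ (1 / (2 / γ))) := by
        rw [ENNReal.ofReal_rpow_of_pos hS0, ENNReal.ofReal_rpow_of_pos (by positivity),
          ENNReal.ofReal_mul (by positivity)]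
      _ ≤ _ := by
        apply ENNReal.ofReal_le_ofReal
        have i1 : 1 / (2 / γ) = γ / 2 := by field_simp
        have i2 : 1 / p = 1 - γ / 2 := by rw [hp]; field_simp
        rw [i1, i2, Real.div_rpow (by norm_num) hR0.le, hR,
          Real.mul_rpow hS0.le (Real.rpow_nonneg h0.le _), ← Real.rpow_mul h0.le]
        have i3 : -p * (γ / 2) = -(p - 1) := by rw [hp1, hp]; field_simp
        have i4 : S ^ (1 - γ / 2) = S ^ (1 - γ) * S ^ (γ / 2) := by
          rw [← Real.rpow_add hS0]; ring_nf
        have i5 : (2:ℝ) ^ (γ / 2) ≤ 2 := by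
          calc (2:ℝ) ^ (γ / 2) ≤ 2 ^ (1:ℝ) :=
                Real.rpow_le_rpow_of_exponent_le (by norm_num) (by linarith)
            _ = 2 := Real.rpow_one _
        rw [i3, i4, Real.rpow_neg h0.le]
        have j1 : 0 < S ^ (γ / 2) := Real.rpow_pos_of_pos hS0 _
        have j2 : 0 < F ^ (p - 1) := Real.rpow_pos_of_pos h0 _
        have j3 : 0 < S ^ (1 - γ) := Real.rpow_pos_of_pos hS0 _
        calc S ^ (1 - γ) * S ^ (γ / 2) * (2 ^ (γ / 2) / (S ^ (γ / 2) * (F ^ (p - 1))⁻¹)) =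
            2 ^ (γ / 2) * (S ^ (1 - γ) * F ^ (p - 1)) := by field_simp
          _ ≤ 2 * (S ^ (1 - γ) * F ^ (p - 1)) := by gcongr
          _ = _ := by ring
  have h4 : ENNReal.ofReal F * ENNReal.ofReal (4 * R ^ (1 - γ)) =
      ENNReal.ofReal (4 * S ^ (1 - γ) * F ^ (p - 1)) := by
    rw [← ENNReal.ofReal_mul h0.le]
    congr 1
    rw [hR, Real.mul_rpow hS0.le (Real.rpow_nonneg h0.le _), ← Real.rpow_mul h0.le]
    have : F ^ (p - 1) = F * F ^ (-p * (1 - γ)) := by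
      rw [← Real.rpow_one_add' h0.le]
      · congr 1; rw [hp]; field_simp; ring
      · have : 1 + -p * (1 - γ) = p - 1 := by rw [hp]; field_simp; ring
        rw [this]; exact hp1'.ne'
    rw [this]; ring
  calc _ ≤ _ := lintegral_mono hpt
    _ = ENNReal.ofReal F * (∫⁻ s, (if |t - s| ≤ R then ENNReal.ofReal (|t - s| ^ (-γ)) else 0)) +
      ∫⁻ s, ENNReal.ofReal (f s) * (if R < |t - s| then ENNReal.ofReal (|t - s| ^ (-γ)) else 0) := by
      rw [lintegral_add_left (hmeas2.const_mul _), lintegral_const_mul _ hmeas2]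
    _ ≤ ENNReal.ofReal F * ENNReal.ofReal (4 * R ^ (1 - γ)) +
        ENNReal.ofReal (2 * S ^ (1 - γ) * F ^ (p - 1)) := by
      gcongr
      exact near_part hγ0 hγ hR0 t
    _ = _ := by
      have j2 : 0 < F ^ (p - 1) := Real.rpow_pos_of_pos h0 _
      have j3 : 0 < S ^ (1 - γ) := Real.rpow_pos_of_pos hS0 _
      rw [h4, ← ENNReal.ofReal_add (by positivity) (by positivity)]
      congr 1; ring

/-- Hardy–Littlewood–Sobolev inequality for the quadratic form with kernel `|t - s|^{-γ}` at the
exponent `p = 2/(2-γ)`. By symmetry it suffices to integrate over the pairs with `f s ≤ f t`. -/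
theorem hls {γ p S : ℝ} (hγ0 : 0 < γ) (hγ : γ ≤ 1 / 2) (hp : p = 2 / (2 - γ))
    {f : ℝ → ℝ} (hf : Measurable f) (hf0 : ∀ s, 0 ≤ f s) (hS0 : 0 < S)
    (hS : ∫⁻ s, ENNReal.ofReal (f s ^ p) ≤ ENNReal.ofReal S) :
    ∫⁻ t, ∫⁻ s, ENNReal.ofReal (f t * f s * |t - s| ^ (-γ)) ≤
      ENNReal.ofReal (12 * S ^ (2 - γ)) := by
  have h2γ : 0 < 2 - γ := by linarith
  have hp1 : p - 1 = γ / (2 - γ) := by rw [hp]; field_simp; ring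
  have hp1' : 0 < p - 1 := by rw [hp1]; positivity
  set k : ℝ → ℝ → ENNReal := fun t s =>
    if f s ≤ f t then ENNReal.ofReal (f t * f s * |t - s| ^ (-γ)) else 0 with hk
  have hkm : Measurable (Function.uncurry k) := by
    apply Measurable.ite
    · exact measurableSet_le (by fun_prop) (by fun_prop)
    · fun_prop
    · exact measurable_const
  have h1 : ∫⁻ t, ∫⁻ s, ENNReal.ofReal (f t * f s * |t - s| ^ (-γ)) ≤
      ∫⁻ t, ∫⁻ s, (k t s + k s t) := by
    refine lintegral_mono fun t => lintegral_mono fun s => ?_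
    simp only [hk]
    rcases le_total (f s) (f t) with h | h
    · simp only [h, if_true]; exact le_self_add
    · simp only [h, if_true]
      rw [abs_sub_comm, mul_comm (f t)]; exact le_add_self
  have h2 : ∫⁻ t, ∫⁻ s, (k t s + k s t) = 2 * ∫⁻ t, ∫⁻ s, k t s := by
    have e : ∀ t, ∫⁻ s, (k t s + k s t) = (∫⁻ s, k t s) + ∫⁻ s, k s t := fun t =>
      lintegral_add_left (hkm.comp measurable_prodMk_left) _
    simp_rw [e]
    have hm : Measurable fun t => ∫⁻ s, k t s := hkm.lintegral_prod_right'
    rw [lintegral_add_left hm, two_mul,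
      lintegral_lintegral_swap (f := fun t s => k s t) (hkm.comp measurable_swap).aemeasurable]
  have h3 : ∀ t, ∫⁻ s, k t s ≤ ENNReal.ofReal (6 * S ^ (1 - γ)) * ENNReal.ofReal (f t ^ p) := by
    intro t
    have e : ∀ s, k t s = ENNReal.ofReal (f t) *
        (if f s ≤ f t then ENNReal.ofReal (f s * |t - s| ^ (-γ)) else 0) := by
      intro s
      simp only [hk]
      split_ifs
      · rw [mul_assoc, ENNReal.ofReal_mul (hf0 t)]
      · simp
    simp_rw [e]
    rw [lintegral_const_mul' _ _ ENNReal.ofReal_ne_top]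
    calc _ ≤ ENNReal.ofReal (f t) * ENNReal.ofReal (6 * S ^ (1 - γ) * f t ^ (p - 1)) := by
          gcongr
          exact inner_part hγ0 hγ hp hf hf0 hS0 hS t
      _ = _ := by
        rw [← ENNReal.ofReal_mul (hf0 t), ← ENNReal.ofReal_mul (by positivity)]
        congr 1
        have : f t ^ p = f t * f t ^ (p - 1) := by
          rw [← Real.rpow_one_add' (hf0 t) (by linarith)]; ring_nf
        rw [this]; ring
  calc _ ≤ _ := h1
    _ = _ := h2
    _ ≤ 2 * ∫⁻ t, ENNReal.ofReal (6 * S ^ (1 - γ)) * ENNReal.ofReal (f t ^ p) := by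
      gcongr with t; exact h3 t
    _ = 2 * (ENNReal.ofReal (6 * S ^ (1 - γ)) * ∫⁻ t, ENNReal.ofReal (f t ^ p)) := by
      rw [lintegral_const_mul' _ _ ENNReal.ofReal_ne_top]
    _ ≤ 2 * (ENNReal.ofReal (6 * S ^ (1 - γ)) * ENNReal.ofReal S) := by gcongr
    _ = _ := by
      rw [← ENNReal.ofReal_ofNat 2, ← ENNReal.ofReal_mul (by positivity),
        ← ENNReal.ofReal_mul (by norm_num)]
      congr 1
      have : S ^ (2 - γ) = S ^ (1 - γ) * S := by
        rw [← Real.rpow_add_one hS0.ne']; ring_nf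
      rw [this]; ring

/-! ### The evolution operator and its transpose -/

/-- The space-time character `e^{i(tω(ξ) - xξ)}`. -/
def phase (a t x ξ : ℝ) : ℂ := exp (I * ((t * disp a ξ - x * ξ : ℝ) : ℂ))

/-- The evolution at `(t, x)` of the frequency profile `g`, without the factor `1/(2π)`:
`evo a û₀ t x = 2π · (W(t)u₀)(x)`. -/
def evo (a : ℝ) (g : ℝ → ℂ) (t x : ℝ) : ℂ := ∫ ξ, phase a t x ξ * g ξ

theorem norm_phase (a t x ξ : ℝ) : ‖phase a t x ξ‖ = 1 := by
  unfold phase; rw [mul_comm]; exact Complex.norm_exp_ofReal_mul_I _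

theorem measurable_disp (a : ℝ) : Measurable (disp a) := by
  unfold disp; fun_prop

theorem measurable_phase {α : Type*} [MeasurableSpace α] (a : ℝ) {f g h : α → ℝ}
    (hf : Measurable f) (hg : Measurable g) (hh : Measurable h) :
    Measurable fun z => phase a (f z) (g z) (h z) := by
  have := (measurable_disp a).comp hh
  unfold phase
  simp only [Function.comp_def] at this
  fun_prop

theorem phase_mul_conj (a t s x y ξ : ℝ) :
    phase a t x ξ * (starRingEnd ℂ) (phase a s y ξ) = phase a (t - s) (x - y) ξ := by
  unfold phase
  rw [← Complex.exp_conj, ← Complex.exp_add, map_mul, Complex.conj_I, Complex.conj_ofReal]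
  congr 1; push_cast; ring

/-- The transpose, for the bilinear pairings `∫ φ F` and `∫ Φ g`, of the map sending a
profile `g` to the function `t ↦ evo a g t (x t)` along a curve `x(t)`; see `evo_duality`. -/
def dualEvo (a : ℝ) (φ : ℝ → ℂ) (x : ℝ → ℝ) (ξ : ℝ) : ℂ := ∫ t, φ t * phase a t (x t) ξ

theorem measurable_dualEvo (a : ℝ) {φ : ℝ → ℂ} (hφ : Measurable φ) {x : ℝ → ℝ}
    (hx : Measurable x) : Measurable (dualEvo a φ x) := by
  have h : Measurable fun z : ℝ × ℝ => φ z.2 * phase a z.2 (x z.2) z.1 :=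
    (hφ.comp measurable_snd).mul
      (measurable_phase a measurable_snd (hx.comp measurable_snd) measurable_fst)
  exact (h.stronglyMeasurable.integral_prod_right').measurable

theorem norm_dualEvo_le (a : ℝ) (φ : ℝ → ℂ) (x : ℝ → ℝ) (ξ : ℝ) :
    ‖dualEvo a φ x ξ‖ ≤ ∫ t, ‖φ t‖ := by
  unfold dualEvo
  refine (norm_integral_le_integral_norm _).trans (le_of_eq ?_)
  simp [norm_phase]

/-- The `T T*` step: expanding the square turns the weighted `L²` norm of `dualEvo` into a
quadratic form in `φ`, whose kernel is controlled by `kernel_bound`. The truncation to `(-N, N]`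
makes the frequency integral absolutely convergent. -/
theorem dual_bound_trunc {a β : ℝ} (hβ0 : 0 ≤ β) (hβ : β ≤ a / 2) {φ : ℝ → ℂ} (hφ : Measurable φ)
    (hφi : Integrable φ) {x : ℝ → ℝ} (hx : Measurable x) {N : ℝ} (hN : 0 ≤ N) :
    ∫⁻ ξ in Set.Ioc (-N) N, ENNReal.ofReal (|ξ| ^ β * ‖dualEvo a φ x ξ‖ ^ 2) ≤
      20 * ∫⁻ t, ∫⁻ s, ENNReal.ofReal (‖φ t‖ * ‖φ s‖ * |t - s| ^ (-((β + 1) / (2 + a)))) := by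
  set γ := (β + 1) / (2 + a) with hγ
  set μ := (volume : Measure ℝ).restrict (Set.Ioc (-N) N) with hμ
  have hwc : Continuous fun ξ : ℝ => |ξ| ^ β :=
    (Real.continuous_rpow_const hβ0).comp continuous_abs
  have hwi : Integrable (fun ξ : ℝ => |ξ| ^ β) μ :=
    hwc.integrableOn_Ioc
  have hΦm := measurable_dualEvo a hφ hx
  have hinteg : Integrable (fun ξ => |ξ| ^ β * ‖dualEvo a φ x ξ‖ ^ 2) μ := by
    apply hwi.mul_bdd (c := (∫ t, ‖φ t‖) ^ 2) (hΦm.norm.pow_const 2).aestronglyMeasurable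
    filter_upwards with ξ
    rw [norm_pow, norm_norm]
    exact pow_le_pow_left₀ (norm_nonneg _) (norm_dualEvo_le a φ x ξ) 2
  -- `∫ z, G ξ z` is `|ξ|^β |dualEvo|²` written as a double integral over pairs of times
  set G : ℝ → ℝ × ℝ → ℂ := fun ξ z => ((|ξ| ^ β : ℝ) : ℂ) *
    ((φ z.1 * phase a z.1 (x z.1) ξ) * (starRingEnd ℂ) (φ z.2 * phase a z.2 (x z.2) ξ)) with hG
  have e1 : ∀ ξ, ((|ξ| ^ β * ‖dualEvo a φ x ξ‖ ^ 2 : ℝ) : ℂ) = ∫ z, G ξ z ∂(volume.prod volume) := by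
    intro ξ
    simp only [hG]
    rw [integral_const_mul, integral_prod_mul (fun t => φ t * phase a t (x t) ξ)
      (fun s => (starRingEnd ℂ) (φ s * phase a s (x s) ξ)), integral_conj]
    have : (∫ t, φ t * phase a t (x t) ξ) = dualEvo a φ x ξ := rfl
    rw [this, Complex.mul_conj, Complex.normSq_eq_norm_sq]
    push_cast; rfl
  have hGm : Measurable (Function.uncurry G) := by
    have m1 : Measurable fun w : ℝ × (ℝ × ℝ) => φ w.2.1 * phase a w.2.1 (x w.2.1) w.1 :=
      (hφ.comp (by fun_prop)).mul (measurable_phase a (by fun_prop) (hx.comp (by fun_prop))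
        (by fun_prop))
    have m2 : Measurable fun w : ℝ × (ℝ × ℝ) => φ w.2.2 * phase a w.2.2 (x w.2.2) w.1 :=
      (hφ.comp (by fun_prop)).mul (measurable_phase a (by fun_prop) (hx.comp (by fun_prop))
        (by fun_prop))
    have m3 : Measurable fun w : ℝ × (ℝ × ℝ) => ((|w.1| ^ β : ℝ) : ℂ) := by fun_prop
    exact m3.mul (m1.mul (Complex.continuous_conj.measurable.comp m2))
  have hGi : Integrable (Function.uncurry G) (μ.prod (volume.prod volume)) := by
    have hb : Integrable (fun w : ℝ × (ℝ × ℝ) => |w.1| ^ β * (‖φ w.2.1‖ * ‖φ w.2.2‖))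
        (μ.prod (volume.prod volume)) :=
      hwi.mul_prod (hφi.norm.mul_prod hφi.norm)
    refine hb.mono' hGm.aestronglyMeasurable ?_
    filter_upwards with w
    simp only [hG, Function.uncurry]
    rw [norm_mul, norm_mul, Complex.norm_conj, norm_mul, norm_mul, norm_phase, norm_phase,
      Complex.norm_real, Real.norm_eq_abs, abs_of_nonneg (by positivity), mul_one, mul_one]
  have e2 : ((∫ ξ, |ξ| ^ β * ‖dualEvo a φ x ξ‖ ^ 2 ∂μ : ℝ) : ℂ) =
      ∫ z, ∫ ξ, G ξ z ∂μ ∂(volume.prod volume) := by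
    rw [← integral_complex_ofReal]
    simp_rw [e1]
    exact integral_integral_swap hGi
  have e3 : ∀ t s : ℝ, s ≠ t → ‖∫ ξ, G ξ (t, s) ∂μ‖ ≤
      20 * (‖φ t‖ * ‖φ s‖ * |t - s| ^ (-γ)) := by
    intro t s hts
    have : ∀ ξ, G ξ (t, s) = (φ t * (starRingEnd ℂ) (φ s)) *
        (((|ξ| ^ β : ℝ) : ℂ) * exp (I * (((t - s) * disp a ξ - (x t - x s) * ξ : ℝ) : ℂ))) := by
      intro ξ
      have := phase_mul_conj a t s (x t) (x s) ξ
      simp only [hG, map_mul]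
      rw [show exp (I * (((t - s) * disp a ξ - (x t - x s) * ξ : ℝ) : ℂ)) =
        phase a (t - s) (x t - x s) ξ from rfl, ← this]
      ring
    simp_rw [this]
    rw [integral_const_mul, norm_mul, norm_mul, Complex.norm_conj, hμ,
      ← intervalIntegral.integral_of_le (by linarith)]
    have := kernel_bound hβ0 hβ (sub_ne_zero.2 hts.symm) (x t - x s) hN
    calc _ ≤ ‖φ t‖ * ‖φ s‖ * (20 * |t - s| ^ (-((β + 1) / (2 + a)))) := by gcongr
      _ = _ := by rw [hγ]; ring
  rw [← ofReal_integral_eq_lintegral_ofReal hinteg (Filter.Eventually.of_forall fun ξ => by positivity)]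
  have hnn : 0 ≤ ∫ ξ, |ξ| ^ β * ‖dualEvo a φ x ξ‖ ^ 2 ∂μ :=
    integral_nonneg fun ξ => by positivity
  have e4 : ENNReal.ofReal (∫ ξ, |ξ| ^ β * ‖dualEvo a φ x ξ‖ ^ 2 ∂μ) =
      ‖((∫ ξ, |ξ| ^ β * ‖dualEvo a φ x ξ‖ ^ 2 ∂μ : ℝ) : ℂ)‖ₑ := by
    rw [← ofReal_norm, Complex.norm_real, Real.norm_eq_abs, abs_of_nonneg hnn]
  rw [e4, e2]
  calc _ ≤ _ := enorm_integral_le_lintegral_enorm _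
    _ ≤ _ := lintegral_prod_le _
    _ ≤ ∫⁻ t, ∫⁻ s, 20 * ENNReal.ofReal (‖φ t‖ * ‖φ s‖ * |t - s| ^ (-γ)) := by
      refine lintegral_mono fun t => lintegral_mono_ae ?_
      filter_upwards [Measure.ae_ne volume t] with s hs
      rw [← ofReal_norm, ← ENNReal.ofReal_ofNat 20, ← ENNReal.ofReal_mul (by norm_num)]
      exact ENNReal.ofReal_le_ofReal (e3 t s hs)
    _ = _ := by
      simp_rw [lintegral_const_mul' (20 : ENNReal) _ (by norm_num)]

theorem dual_bound {a β : ℝ} (hβ0 : 0 ≤ β) (hβ : β ≤ a / 2) {φ : ℝ → ℂ} (hφ : Measurable φ)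
    (hφi : Integrable φ) {x : ℝ → ℝ} (hx : Measurable x) :
    ∫⁻ ξ, ENNReal.ofReal (|ξ| ^ β * ‖dualEvo a φ x ξ‖ ^ 2) ≤
      20 * ∫⁻ t, ∫⁻ s, ENNReal.ofReal (‖φ t‖ * ‖φ s‖ * |t - s| ^ (-((β + 1) / (2 + a)))) := by
  have hU : (⋃ n : ℕ, Set.Ioc (-(n:ℝ)) n) = Set.univ := by
    ext ξ
    simp only [Set.mem_iUnion, Set.mem_univ, iff_true]
    obtain ⟨n, hn⟩ := exists_nat_gt |ξ|
    exact ⟨n, by linarith [neg_abs_le ξ], by linarith [le_abs_self ξ]⟩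
  have hd : Directed (· ⊆ ·) fun n : ℕ => Set.Ioc (-(n:ℝ)) n :=
    directed_of_isDirected_le fun i j hij => by
      have : (i:ℝ) ≤ j := by exact_mod_cast hij
      exact Set.Ioc_subset_Ioc (by linarith) this
  rw [← setLIntegral_univ, ← hU, setLIntegral_iUnion_of_directed _ hd]
  exact iSup_le fun n => dual_bound_trunc hβ0 hβ hφ hφi hx (Nat.cast_nonneg n)

/-! ### The endpoint estimate along a curve -/

theorem norm_evo_le (a : ℝ) (g : ℝ → ℂ) (t x : ℝ) : ‖evo a g t x‖ ≤ ∫ ξ, ‖g ξ‖ := by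
  unfold evo
  refine (norm_integral_le_integral_norm _).trans (le_of_eq ?_)
  simp [norm_phase]

theorem measurable_evo {α : Type*} [MeasurableSpace α] (a : ℝ) {g : α → ℝ → ℂ}
    (hg : Measurable (Function.uncurry g)) {t x : α → ℝ} (ht : Measurable t) (hx : Measurable x) :
    Measurable fun z => evo a (g z) (t z) (x z) := by
  have h : Measurable fun w : α × ℝ => phase a (t w.1) (x w.1) w.2 * g w.1 w.2 :=
    (measurable_phase a (ht.comp measurable_fst) (hx.comp measurable_fst) measurable_snd).mul hg
  exact (h.stronglyMeasurable.integral_prod_right').measurable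

theorem measurable_evo' (a : ℝ) {g : ℝ → ℂ}
    (hg : Measurable g) {x : ℝ → ℝ} (hx : Measurable x) :
    Measurable fun t => evo a g t (x t) :=
  measurable_evo (α := ℝ) a (g := fun _ => g) (hg.comp measurable_snd) measurable_id hx

theorem evo_duality (a : ℝ) {φ g : ℝ → ℂ} {x : ℝ → ℝ} (hφ : Integrable φ) (hφm : Measurable φ)
    (hg : Integrable g) (hgm : Measurable g) (hx : Measurable x) :
    ∫ t, φ t * evo a g t (x t) = ∫ ξ, dualEvo a φ x ξ * g ξ := by
  unfold evo dualEvo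
  simp_rw [← integral_const_mul, ← integral_mul_const]
  rw [integral_integral_swap]
  · refine integral_congr_ae (Filter.Eventually.of_forall fun ξ => ?_)
    refine integral_congr_ae (Filter.Eventually.of_forall fun t => ?_)
    simp only; ring
  · refine (hφ.norm.mul_prod hg.norm).mono' ?_ ?_
    · have := measurable_phase (α := ℝ × ℝ) a measurable_fst (hx.comp measurable_fst) measurable_snd
      exact ((hφm.comp measurable_fst).mul (this.mul (hgm.comp measurable_snd))).aestronglyMeasurable
    · filter_upwards with w
      simp [Function.uncurry, norm_phase]

/-- The endpoint estimate along a measurable curve `x(t)`, on a bounded time interval. Let `A`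
be the left side, finite thanks to the truncation, and test against the extremal function
`φ = conj(F) |F|^{2/γ-2}`, where `γ = (β+1)/(2+a)`. Duality, `dual_bound` and `hls` give
`A² ≤ 240 H A^{2-γ}`, and division by `A^{2-γ}` concludes. -/
theorem endpoint_trunc {a β : ℝ} (hβ0 : 0 ≤ β) (hβ : β ≤ a / 2) {h : ℝ → ℂ} (hh : Measurable h)
    (hi : Integrable fun ξ => ((|ξ| ^ (β / 2) : ℝ) : ℂ) * h ξ) {x : ℝ → ℝ} (hx : Measurable x)
    {H : ℝ} (hH0 : 0 ≤ H) (hH : ∫⁻ ξ, ‖h ξ‖ₑ ^ (2:ℝ) ≤ ENNReal.ofReal H) (T : ℝ) :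
    ∫⁻ t in Set.Icc (-T) T, ‖evo a (fun ξ => ((|ξ| ^ (β / 2) : ℝ) : ℂ) * h ξ) t (x t)‖ₑ ^
        (2 / ((β + 1) / (2 + a))) ≤
      ENNReal.ofReal ((240 * H) ^ (1 / ((β + 1) / (2 + a)))) := by
  set γ := (β + 1) / (2 + a) with hγ
  have hγ0 : 0 < γ := by apply div_pos <;> linarith
  have hγ1 : γ ≤ 1 / 2 := by rw [hγ, div_le_iff₀ (by linarith)]; linarith
  have hq : 4 ≤ 2 / γ := by rw [le_div_iff₀ hγ0]; linarith
  set g : ℝ → ℂ := fun ξ => ((|ξ| ^ (β / 2) : ℝ) : ℂ) * h ξ with hg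
  have hgm : Measurable g := by
    have : Measurable fun ξ : ℝ => ((|ξ| ^ (β / 2) : ℝ) : ℂ) := by fun_prop
    exact this.mul hh
  set F : ℝ → ℂ := fun t => evo a g t (x t) with hF
  have hFm : Measurable F := measurable_evo' a hgm hx
  set K := ∫ ξ, ‖g ξ‖ with hK
  have hFK : ∀ t, ‖F t‖ ≤ K := fun t => norm_evo_le a g t (x t)
  have hK0 : 0 ≤ K := (norm_nonneg _).trans (hFK 0)
  have hbdd : ∀ r : ℝ, 0 ≤ r → IntegrableOn (fun t => ‖F t‖ ^ r) (Set.Icc (-T) T) := by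
    intro r hr
    refine Measure.integrableOn_of_bounded (M := K ^ r) (by simp) ?_ ?_
    · exact (hFm.norm.pow_const r).aestronglyMeasurable
    · filter_upwards with t
      rw [Real.norm_of_nonneg (by positivity)]
      exact Real.rpow_le_rpow (norm_nonneg _) (hFK t) hr
  set A := ∫ t in Set.Icc (-T) T, ‖F t‖ ^ (2 / γ) with hA
  have hA0 : 0 ≤ A := integral_nonneg fun t => by positivity
  have hlA : ∫⁻ t in Set.Icc (-T) T, ‖F t‖ₑ ^ (2 / γ) = ENNReal.ofReal A := by
    rw [hA, ofReal_integral_eq_lintegral_ofReal (hbdd _ (by linarith))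
      (Filter.Eventually.of_forall fun t => by positivity)]
    refine lintegral_congr fun t => ?_
    rw [← ofReal_norm, ENNReal.ofReal_rpow_of_nonneg (norm_nonneg _) (by linarith)]
  change ∫⁻ t in Set.Icc (-T) T, ‖F t‖ₑ ^ (2 / γ) ≤ _
  rw [hlA]
  refine ENNReal.ofReal_le_ofReal ?_
  rcases hA0.eq_or_lt with h0 | hApos
  · rw [← h0]; positivity
  set φ : ℝ → ℂ := Set.indicator (Set.Icc (-T) T)
    (fun t => (starRingEnd ℂ) (F t) * ((‖F t‖ ^ (2 / γ - 2) : ℝ) : ℂ)) with hφ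
  have hφm : Measurable φ := by
    refine Measurable.indicator ?_ measurableSet_Icc
    exact (Complex.continuous_conj.measurable.comp hFm).mul (by fun_prop)
  have hφn : ∀ t, ‖φ t‖ = Set.indicator (Set.Icc (-T) T) (fun t => ‖F t‖ ^ (2 / γ - 1)) t := by
    intro t
    rw [hφ, norm_indicator_eq_indicator_norm]
    congr 1; ext t
    rw [norm_mul, Complex.norm_conj, Complex.norm_real, Real.norm_of_nonneg (by positivity)]
    rw [show 2 / γ - 1 = 1 + (2 / γ - 2) by ring,
      Real.rpow_add' (norm_nonneg _) (by linarith), Real.rpow_one]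
  have hφi : Integrable φ := by
    rw [← integrable_norm_iff hφm.aestronglyMeasurable]
    refine Integrable.congr ?_ (Filter.Eventually.of_forall fun t => (hφn t).symm)
    exact (integrable_indicator_iff measurableSet_Icc).2 (hbdd _ (by linarith))
  have hp2 : 0 < 2 - γ := by linarith
  have hS : ∫⁻ s, ENNReal.ofReal (‖φ s‖ ^ (2 / (2 - γ))) ≤ ENNReal.ofReal A := by
    rw [← hlA, ← lintegral_indicator measurableSet_Icc]
    refine lintegral_mono fun t => ?_
    rw [hφn]
    by_cases ht : t ∈ Set.Icc (-T) T
    · rw [Set.indicator_of_mem ht, Set.indicator_of_mem ht, ← Real.rpow_mul (norm_nonneg _),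
        ← ofReal_norm, ENNReal.ofReal_rpow_of_nonneg (norm_nonneg _) (by linarith)]
      apply le_of_eq; congr 2
      field_simp
    · rw [Set.indicator_of_notMem ht, Set.indicator_of_notMem ht, Real.zero_rpow (by positivity)]
      simp
  have h1 := hls hγ0 hγ1 rfl hφm.norm (fun _ => norm_nonneg _) hApos hS
  have h2 := dual_bound (a := a) hβ0 hβ hφm hφi hx
  have h3 : ∫⁻ ξ, ENNReal.ofReal (|ξ| ^ β * ‖dualEvo a φ x ξ‖ ^ 2) ≤
      ENNReal.ofReal (240 * A ^ (2 - γ)) := by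
    refine h2.trans ((mul_le_mul_right h1 20).trans (le_of_eq ?_))
    rw [← ENNReal.ofReal_ofNat 20, ← ENNReal.ofReal_mul (by norm_num)]
    congr 1; ring
  have h4 : (A : ℂ) = ∫ ξ, dualEvo a φ x ξ * g ξ := by
    rw [← evo_duality a hφi hφm hi hgm hx, hA, ← integral_indicator measurableSet_Icc,
      ← integral_complex_ofReal]
    refine integral_congr_ae (Filter.Eventually.of_forall fun t => ?_)
    simp only [hφ]
    by_cases ht : t ∈ Set.Icc (-T) T
    · rw [Set.indicator_of_mem ht, Set.indicator_of_mem ht]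
      change _ = (starRingEnd ℂ) (F t) * _ * F t
      rw [mul_right_comm, mul_comm _ (F t), Complex.mul_conj, Complex.normSq_eq_norm_sq,
        ← Complex.ofReal_mul]
      congr 1
      rw [← Real.rpow_natCast, ← Real.rpow_add' (norm_nonneg _) (by push_cast; linarith)]
      congr 1; push_cast; ring
    · rw [Set.indicator_of_notMem ht, Set.indicator_of_notMem ht]; simp
  have h5 : ENNReal.ofReal A ≤ ENNReal.ofReal (240 * A ^ (2 - γ)) ^ (1/2:ℝ) *
      ENNReal.ofReal H ^ (1/2:ℝ) := by
    calc ENNReal.ofReal A = ‖(A:ℂ)‖ₑ := by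
          rw [← ofReal_norm, Complex.norm_real, Real.norm_of_nonneg hA0]
      _ ≤ ∫⁻ ξ, ‖dualEvo a φ x ξ * g ξ‖ₑ := by
          rw [h4]; exact enorm_integral_le_lintegral_enorm _
      _ = ∫⁻ ξ, ((fun ξ => ENNReal.ofReal (|ξ| ^ (β / 2) * ‖dualEvo a φ x ξ‖)) *
            (fun ξ => ‖h ξ‖ₑ)) ξ := by
          refine lintegral_congr fun ξ => ?_
          simp only [hg, Pi.mul_apply]
          rw [← ofReal_norm, ← ofReal_norm, ← ENNReal.ofReal_mul (by positivity), norm_mul,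
            norm_mul, Complex.norm_real, Real.norm_of_nonneg (by positivity)]
          congr 1; ring
      _ ≤ _ := ENNReal.lintegral_mul_le_Lp_mul_Lq volume (p := 2) (q := 2)
            (by constructor <;> norm_num) (by
              have := (measurable_dualEvo a hφm hx)
              fun_prop) (by fun_prop)
      _ ≤ _ := by
          gcongr
          refine le_trans (lintegral_mono fun ξ => ?_) h3
          rw [ENNReal.ofReal_rpow_of_nonneg (by positivity) (by norm_num)]
          refine ENNReal.ofReal_le_ofReal (le_of_eq ?_)
          rw [Real.rpow_two, mul_pow, ← Real.rpow_natCast (|ξ| ^ (β/2)), ← Real.rpow_mul (abs_nonneg _)]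
          congr 2; push_cast; ring
  rw [ENNReal.ofReal_rpow_of_nonneg (by positivity) (by norm_num),
    ENNReal.ofReal_rpow_of_nonneg hH0 (by norm_num), ← ENNReal.ofReal_mul (by positivity),
    ENNReal.ofReal_le_ofReal_iff (by positivity), ← Real.mul_rpow (by positivity) hH0,
    ← Real.sqrt_eq_rpow, Real.le_sqrt (by positivity) (by positivity)] at h5
  have h6 : A ^ 2 = A ^ γ * A ^ (2 - γ) := by
    rw [← Real.rpow_add hApos, ← Real.rpow_natCast]; congr 1; push_cast; ring
  rw [h6] at h5
  have h7 : A ^ γ ≤ 240 * H := by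
    refine le_of_mul_le_mul_right ?_ (Real.rpow_pos_of_pos hApos (2 - γ))
    linarith
  calc A = (A ^ γ) ^ (1 / γ) := by
        rw [← Real.rpow_mul hA0, mul_one_div_cancel hγ0.ne', Real.rpow_one]
    _ ≤ _ := Real.rpow_le_rpow (by positivity) h7 (by positivity)

/-! ### The endpoint maximal estimate -/

theorem endpoint_selection {a β : ℝ} (hβ0 : 0 ≤ β) (hβ : β ≤ a / 2) {h : ℝ → ℂ}
    (hh : Measurable h)
    (hi : Integrable fun ξ => ((|ξ| ^ (β / 2) : ℝ) : ℂ) * h ξ) {x : ℝ → ℝ} (hx : Measurable x)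
    {H : ℝ} (hH0 : 0 ≤ H) (hH : ∫⁻ ξ, ‖h ξ‖ₑ ^ (2:ℝ) ≤ ENNReal.ofReal H) :
    ∫⁻ t, ‖evo a (fun ξ => ((|ξ| ^ (β / 2) : ℝ) : ℂ) * h ξ) t (x t)‖ₑ ^
        (2 / ((β + 1) / (2 + a))) ≤
      ENNReal.ofReal ((240 * H) ^ (1 / ((β + 1) / (2 + a)))) := by
  have hU : (⋃ n : ℕ, Set.Icc (-(n:ℝ)) n) = Set.univ := by
    ext ξ
    simp only [Set.mem_iUnion, Set.mem_univ, iff_true]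
    obtain ⟨n, hn⟩ := exists_nat_gt |ξ|
    exact ⟨n, by linarith [neg_abs_le ξ], by linarith [le_abs_self ξ]⟩
  have hd : Directed (· ⊆ ·) fun n : ℕ => Set.Icc (-(n:ℝ)) n :=
    directed_of_isDirected_le fun i j hij => by
      have : (i:ℝ) ≤ j := by exact_mod_cast hij
      exact Set.Icc_subset_Icc (by linarith) this
  rw [← setLIntegral_univ, ← hU, setLIntegral_iUnion_of_directed _ hd]
  exact iSup_le fun n => endpoint_trunc hβ0 hβ hh hi hx hH0 hH n

/-- Measurable selection of a maximiser: `greedy F r N t` is one of `r 0, …, r N` at which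
`F t` attains its largest value among these points. -/
def greedy (F : ℝ → ℝ → ℝ) (r : ℕ → ℝ) : ℕ → ℝ → ℝ
  | 0, _ => r 0
  | N + 1, t => if F t (greedy F r N t) < F t (r (N + 1)) then r (N + 1) else greedy F r N t

theorem measurable_greedy {F : ℝ → ℝ → ℝ}
    (hF : ∀ x : ℝ → ℝ, Measurable x → Measurable fun t => F t (x t)) (r : ℕ → ℝ) (N : ℕ) :
    Measurable (greedy F r N) := by
  induction N with
  | zero => exact measurable_const
  | succ N ih =>
    exact Measurable.ite (measurableSet_lt (hF _ ih) (hF _ measurable_const)) measurable_const ih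

theorem greedy_succ_ge (F : ℝ → ℝ → ℝ) (r : ℕ → ℝ) (N : ℕ) (t : ℝ) :
    F t (greedy F r N t) ≤ F t (greedy F r (N + 1) t) ∧
      F t (r (N + 1)) ≤ F t (greedy F r (N + 1) t) := by
  by_cases hc : F t (greedy F r N t) < F t (r (N + 1))
  · simp only [greedy, if_pos hc]; exact ⟨hc.le, le_rfl⟩
  · simp only [greedy, if_neg hc]; exact ⟨le_rfl, not_lt.1 hc⟩

theorem le_greedy (F : ℝ → ℝ → ℝ) (r : ℕ → ℝ) (N : ℕ) (t : ℝ) :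
    F t (r N) ≤ F t (greedy F r N t) := by
  cases N with
  | zero => exact le_rfl
  | succ N => exact (greedy_succ_ge F r N t).2

/-- The maximal function `sup_x |evo a g t x|`. The supremum runs over a dense sequence so that
measurability in `t` is immediate; for integrable `g` it bounds every `x` by continuity
(`enorm_evo_le_maxEvo`). -/
def maxEvo (a : ℝ) (g : ℝ → ℂ) (t : ℝ) : ENNReal :=
  ⨆ k : ℕ, ‖evo a g t (TopologicalSpace.denseSeq ℝ k)‖ₑ

theorem continuous_evo (a : ℝ) {g : ℝ → ℂ} (hg : Integrable g) (hgm : Measurable g) (t : ℝ) :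
    Continuous fun x => evo a g t x := by
  unfold evo
  refine continuous_of_dominated (bound := fun ξ => ‖g ξ‖) ?_ ?_ hg.norm ?_
  · intro x
    exact ((measurable_phase a measurable_const measurable_const measurable_id).mul
      hgm).aestronglyMeasurable
  · intro x
    filter_upwards with ξ
    simp [norm_phase]
  · filter_upwards with ξ
    unfold phase
    fun_prop

theorem enorm_evo_le_maxEvo (a : ℝ) {g : ℝ → ℂ} (hg : Integrable g) (hgm : Measurable g)
    (t x : ℝ) : ‖evo a g t x‖ₑ ≤ maxEvo a g t := by
  have hc : IsClosed {x | ‖evo a g t x‖ₑ ≤ maxEvo a g t} :=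
    isClosed_le (continuous_evo a hg hgm t).enorm continuous_const
  have : Set.range (TopologicalSpace.denseSeq ℝ) ⊆ {x | ‖evo a g t x‖ₑ ≤ maxEvo a g t} := by
    rintro _ ⟨k, rfl⟩
    exact le_iSup (fun k => ‖evo a g t (TopologicalSpace.denseSeq ℝ k)‖ₑ) k
  have h2 := closure_minimal this hc
  rw [(TopologicalSpace.denseRange_denseSeq ℝ).closure_range] at h2
  exact h2 (Set.mem_univ x)

/-- The endpoint `θ = 1`: the `L^{2/γ}_t L^∞_x` estimate for `D^{β/2} W(t)`, where
`γ = (β+1)/(2+a)`. A curve `x(t)` following the maximiser over finitely many points reduces it to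
`endpoint_selection`. -/
theorem endpoint {a β : ℝ} (hβ0 : 0 ≤ β) (hβ : β ≤ a / 2) {h : ℝ → ℂ}
    (hh : Measurable h)
    (hi : Integrable fun ξ => ((|ξ| ^ (β / 2) : ℝ) : ℂ) * h ξ)
    {H : ℝ} (hH0 : 0 ≤ H) (hH : ∫⁻ ξ, ‖h ξ‖ₑ ^ (2:ℝ) ≤ ENNReal.ofReal H) :
    ∫⁻ t, maxEvo a (fun ξ => ((|ξ| ^ (β / 2) : ℝ) : ℂ) * h ξ) t ^
        (2 / ((β + 1) / (2 + a))) ≤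
      ENNReal.ofReal ((240 * H) ^ (1 / ((β + 1) / (2 + a)))) := by
  have hq : 0 < 2 / ((β + 1) / (2 + a)) := by
    apply div_pos two_pos; apply div_pos <;> linarith
  set q := 2 / ((β + 1) / (2 + a)) with hqd
  set g : ℝ → ℂ := fun ξ => ((|ξ| ^ (β / 2) : ℝ) : ℂ) * h ξ with hg
  have hgm : Measurable g := by
    have : Measurable fun ξ : ℝ => ((|ξ| ^ (β / 2) : ℝ) : ℂ) := by fun_prop
    exact this.mul hh
  set r := TopologicalSpace.denseSeq ℝ
  set F : ℝ → ℝ → ℝ := fun t x => ‖evo a g t x‖ with hF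
  have hsel : ∀ N, Measurable (greedy F r N) :=
    measurable_greedy (fun x hx => (measurable_evo' a hgm hx).norm) r
  have key : ∀ t, maxEvo a g t ^ q ≤ ⨆ N, ‖evo a g t (greedy F r N t)‖ₑ ^ q := by
    intro t
    have : maxEvo a g t ≤ ⨆ N, ‖evo a g t (greedy F r N t)‖ₑ := by
      refine iSup_mono fun N => ?_
      rw [← ofReal_norm, ← ofReal_norm]
      exact ENNReal.ofReal_le_ofReal (le_greedy F r N t)
    refine (ENNReal.rpow_le_rpow this hq.le).trans (le_of_eq ?_)
    exact (ENNReal.orderIsoRpow q hq).map_iSup _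
  refine (lintegral_mono key).trans ?_
  rw [lintegral_iSup]
  · exact iSup_le fun N => endpoint_selection hβ0 hβ hh hi (hsel N) hH0 hH
  · intro N
    exact (measurable_evo' a hgm (hsel N)).enorm.pow_const q
  · refine monotone_nat_of_le_succ fun N => ?_
    intro t
    refine ENNReal.rpow_le_rpow ?_ hq.le
    rw [← ofReal_norm, ← ofReal_norm]
    exact ENNReal.ofReal_le_ofReal (greedy_succ_ge F r N t).1

/-! ### Plancherel's inequality -/

theorem gauss_kernel_norm {ε : ℝ} (hε : 0 < ε) (s : ℝ) :
    ‖∫ x : ℝ, exp (I * (s : ℂ) * x) * exp (-(ε : ℂ) * x ^ 2)‖ =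
      (Real.pi / ε) ^ (1/2:ℝ) * Real.exp (-(1 / (4 * ε)) * s ^ 2) := by
  rw [fourierIntegral_gaussian (by simpa using hε), norm_mul, Complex.norm_exp]
  congr 1
  · rw [← Complex.ofReal_div, show (1/2:ℂ) = ((1/2:ℝ):ℂ) by push_cast; rfl,
      ← Complex.ofReal_cpow (by positivity), Complex.norm_real, Real.norm_of_nonneg (by positivity)]
  · congr 1
    rw [show -(s:ℂ)^2 / (4 * (ε:ℂ)) = ((-(1 / (4 * ε)) * s ^ 2 : ℝ) : ℂ) by
      push_cast; field_simp, Complex.ofReal_re]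

theorem gauss_kernel_mass {ε : ℝ} (hε : 0 < ε) :
    ∫⁻ s : ℝ, ENNReal.ofReal ((Real.pi / ε) ^ (1/2:ℝ) * Real.exp (-(1 / (4 * ε)) * s ^ 2)) =
      ENNReal.ofReal (2 * Real.pi) := by
  rw [← ofReal_integral_eq_lintegral_ofReal
    ((integrable_exp_neg_mul_sq (by positivity)).const_mul _)
    (Filter.Eventually.of_forall fun s => by positivity), integral_const_mul, integral_gaussian,
    ← Real.sqrt_eq_rpow, ← Real.sqrt_mul (by positivity)]
  congr 1
  rw [show Real.pi / ε * (Real.pi / (1 / (4 * ε))) = (2 * Real.pi) ^ 2 by field_simp; ring]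
  exact Real.sqrt_sq (by positivity)

/-- The Fourier integral `∫ e^{-ixξ} f(ξ) dξ`, without normalisation. -/
def ftm (f : ℝ → ℂ) (x : ℝ) : ℂ := ∫ ξ : ℝ, exp (-(I * ((x * ξ : ℝ) : ℂ))) * f ξ

theorem norm_expI (r : ℝ) : ‖exp (-(I * (r : ℂ)))‖ = 1 := by
  rw [show -(I * (r:ℂ)) = ((-r : ℝ) : ℂ) * I by push_cast; ring]
  exact Complex.norm_exp_ofReal_mul_I _

theorem norm_ftm_le (f : ℝ → ℂ) (x : ℝ) : ‖ftm f x‖ ≤ ∫ ξ, ‖f ξ‖ := by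
  unfold ftm
  refine (norm_integral_le_integral_norm _).trans (le_of_eq ?_)
  simp only [norm_mul, norm_expI, one_mul]

theorem measurable_ftm {f : ℝ → ℂ} (hf : Measurable f) : Measurable (ftm f) := by
  have h : Measurable fun w : ℝ × ℝ => exp (-(I * ((w.1 * w.2 : ℝ) : ℂ))) * f w.2 := by
    have e : Measurable fun w : ℝ × ℝ => exp (-(I * ((w.1 * w.2 : ℝ) : ℂ))) := by fun_prop
    exact e.mul (hf.comp measurable_snd)
  exact (h.stronglyMeasurable.integral_prod_right').measurable

/-- Plancherel's inequality with a Gaussian weight. After expanding the square, the weight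
turns the kernel into a Gaussian of total mass `2π`, to which the Schur test applies. -/
theorem plancherel_gauss {f : ℝ → ℂ} (hf : Measurable f) (hfi : Integrable f) {ε : ℝ}
    (hε : 0 < ε) :
    ∫⁻ x, ENNReal.ofReal (Real.exp (-ε * x ^ 2) * ‖ftm f x‖ ^ 2) ≤
      ENNReal.ofReal (2 * Real.pi) * ∫⁻ ξ, ENNReal.ofReal (‖f ξ‖ ^ 2) := by
  have hwi : Integrable fun x : ℝ => Real.exp (-ε * x ^ 2) := integrable_exp_neg_mul_sq hε
  have hm := measurable_ftm hf
  have hinteg : Integrable fun x => Real.exp (-ε * x ^ 2) * ‖ftm f x‖ ^ 2 := by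
    apply hwi.mul_bdd (c := (∫ t, ‖f t‖) ^ 2) (hm.norm.pow_const 2).aestronglyMeasurable
    filter_upwards with ξ
    rw [norm_pow, norm_norm]
    exact pow_le_pow_left₀ (norm_nonneg _) (norm_ftm_le f ξ) 2
  set G : ℝ → ℝ × ℝ → ℂ := fun x z => ((Real.exp (-ε * x ^ 2) : ℝ) : ℂ) *
    ((exp (-(I * ((x * z.1 : ℝ) : ℂ))) * f z.1) *
      (starRingEnd ℂ) (exp (-(I * ((x * z.2 : ℝ) : ℂ))) * f z.2)) with hG
  have e1 : ∀ x, ((Real.exp (-ε * x ^ 2) * ‖ftm f x‖ ^ 2 : ℝ) : ℂ) =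
      ∫ z, G x z ∂(volume.prod volume) := by
    intro x
    simp only [hG]
    rw [integral_const_mul, integral_prod_mul (fun t => exp (-(I * ((x * t : ℝ) : ℂ))) * f t)
      (fun s => (starRingEnd ℂ) (exp (-(I * ((x * s : ℝ) : ℂ))) * f s)), integral_conj]
    have : (∫ t : ℝ, exp (-(I * ((x * t : ℝ) : ℂ))) * f t) = ftm f x := rfl
    rw [this, Complex.mul_conj, Complex.normSq_eq_norm_sq, ← Complex.ofReal_mul]
  have hGm : Measurable (Function.uncurry G) := by
    have m1 : Measurable fun w : ℝ × (ℝ × ℝ) => exp (-(I * ((w.1 * w.2.1 : ℝ) : ℂ))) * f w.2.1 :=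
      Measurable.mul (by fun_prop) (hf.comp (by fun_prop))
    have m2 : Measurable fun w : ℝ × (ℝ × ℝ) => exp (-(I * ((w.1 * w.2.2 : ℝ) : ℂ))) * f w.2.2 :=
      Measurable.mul (by fun_prop) (hf.comp (by fun_prop))
    have m3 : Measurable fun w : ℝ × (ℝ × ℝ) => ((Real.exp (-ε * w.1 ^ 2) : ℝ) : ℂ) := by fun_prop
    exact m3.mul (m1.mul (Complex.continuous_conj.measurable.comp m2))
  have hGi : Integrable (Function.uncurry G) (volume.prod (volume.prod volume)) := by
    have hb : Integrable (fun w : ℝ × (ℝ × ℝ) => Real.exp (-ε * w.1 ^ 2) * (‖f w.2.1‖ * ‖f w.2.2‖))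
        (volume.prod (volume.prod volume)) :=
      hwi.mul_prod (hfi.norm.mul_prod hfi.norm)
    refine hb.mono' hGm.aestronglyMeasurable ?_
    filter_upwards with w
    simp only [hG, Function.uncurry]
    rw [norm_mul, norm_mul, Complex.norm_conj, norm_mul, norm_mul, norm_expI, norm_expI,
      Complex.norm_real, Real.norm_of_nonneg (Real.exp_pos _).le, one_mul, one_mul]
  have e2 : ((∫ x, Real.exp (-ε * x ^ 2) * ‖ftm f x‖ ^ 2 : ℝ) : ℂ) =
      ∫ z, (∫ x, G x z) ∂(volume.prod volume) := by
    rw [← integral_complex_ofReal]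
    simp_rw [e1]
    exact integral_integral_swap hGi
  set k : ℝ → ℝ := fun s => (Real.pi / ε) ^ (1/2:ℝ) * Real.exp (-(1 / (4 * ε)) * s ^ 2) with hk
  have hk0 : ∀ s, 0 ≤ k s := fun s => by positivity
  have hkm : Measurable k := by fun_prop
  have hkeven : ∀ s, k (-s) = k s := fun s => by simp [hk]
  have e3 : ∀ z : ℝ × ℝ, ‖∫ x, G x z‖ = ‖f z.1‖ * ‖f z.2‖ * k (z.1 - z.2) := by
    intro z
    have : ∀ x : ℝ, G x z = (f z.1 * (starRingEnd ℂ) (f z.2)) *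
        (exp (I * ((z.2 - z.1 : ℝ) : ℂ) * x) * exp (-(ε : ℂ) * x ^ 2)) := by
      intro x
      simp only [hG, map_mul]
      rw [← Complex.exp_conj, Complex.ofReal_exp]
      rw [show (((-ε * x ^ 2 : ℝ)) : ℂ) = -(ε:ℂ) * x ^ 2 by push_cast; ring,
        show I * ((z.2 - z.1 : ℝ) : ℂ) * x = -(I * ((x * z.1 : ℝ) : ℂ)) +
          (starRingEnd ℂ) (-(I * ((x * z.2 : ℝ) : ℂ))) by
            rw [map_neg, map_mul, Complex.conj_I, Complex.conj_ofReal]; push_cast; ring,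
        Complex.exp_add]
      ring
    simp_rw [this]
    rw [integral_const_mul, norm_mul, norm_mul, Complex.norm_conj, gauss_kernel_norm hε,
      ← neg_sub z.2 z.1, hkeven]
  have hnn : 0 ≤ ∫ x, Real.exp (-ε * x ^ 2) * ‖ftm f x‖ ^ 2 :=
    integral_nonneg fun ξ => by positivity
  rw [← ofReal_integral_eq_lintegral_ofReal hinteg
    (Filter.Eventually.of_forall fun ξ => by positivity)]
  have e4 : ENNReal.ofReal (∫ x, Real.exp (-ε * x ^ 2) * ‖ftm f x‖ ^ 2) =
      ‖((∫ x, Real.exp (-ε * x ^ 2) * ‖ftm f x‖ ^ 2 : ℝ) : ℂ)‖ₑ := by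
    rw [← ofReal_norm, Complex.norm_real, Real.norm_eq_abs, abs_of_nonneg hnn]
  have hmass : ∀ ξ : ℝ, ∫⁻ η, ENNReal.ofReal (k (ξ - η)) = ENNReal.ofReal (2 * Real.pi) := by
    intro ξ
    rw [lintegral_sub_left_eq_self (fun s => ENNReal.ofReal (k s)) ξ]
    exact gauss_kernel_mass hε
  set P : ENNReal := ∫⁻ ξ, ENNReal.ofReal (‖f ξ‖ ^ 2) with hP
  have half1 : ∫⁻ ξ, ∫⁻ η, ENNReal.ofReal (1/2 * ‖f ξ‖ ^ 2 * k (ξ - η)) =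
      ENNReal.ofReal (1/2) * P * ENNReal.ofReal (2 * Real.pi) := by
    rw [hP, ← lintegral_const_mul' _ _ ENNReal.ofReal_ne_top,
      ← lintegral_mul_const' _ _ ENNReal.ofReal_ne_top]
    refine lintegral_congr fun ξ => ?_
    simp_rw [ENNReal.ofReal_mul (show (0:ℝ) ≤ 1/2 * ‖f ξ‖ ^ 2 by positivity)]
    rw [lintegral_const_mul' _ _ ENNReal.ofReal_ne_top, hmass,
      ENNReal.ofReal_mul (by norm_num)]
  have half2 : ∫⁻ ξ, ∫⁻ η, ENNReal.ofReal (1/2 * ‖f η‖ ^ 2 * k (ξ - η)) =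
      ENNReal.ofReal (1/2) * P * ENNReal.ofReal (2 * Real.pi) := by
    rw [lintegral_lintegral_swap, ← half1]
    · simp_rw [fun a b : ℝ => show k (a - b) = k (b - a) by rw [← neg_sub b a, hkeven]]
    · have m1 : Measurable fun w : ℝ × ℝ => ‖f w.2‖ := (hf.comp measurable_snd).norm
      have m2 : Measurable fun w : ℝ × ℝ => k (w.1 - w.2) := hkm.comp (by fun_prop)
      exact (((m1.pow_const 2).const_mul _).mul m2).ennreal_ofReal.aemeasurable
  rw [e4, e2]
  calc _ ≤ _ := enorm_integral_le_lintegral_enorm _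
    _ ≤ _ := lintegral_prod_le _
    _ ≤ ∫⁻ ξ, ∫⁻ η, (ENNReal.ofReal (1/2 * ‖f ξ‖ ^ 2 * k (ξ - η)) +
          ENNReal.ofReal (1/2 * ‖f η‖ ^ 2 * k (ξ - η))) := by
      refine lintegral_mono fun ξ => lintegral_mono fun η => ?_
      rw [← ofReal_norm, e3, ← ENNReal.ofReal_add (mul_nonneg (by positivity) (hk0 _))
        (mul_nonneg (by positivity) (hk0 _))]
      refine ENNReal.ofReal_le_ofReal ?_
      have := mul_nonneg (sq_nonneg (‖f ξ‖ - ‖f η‖)) (hk0 (ξ - η))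
      simp only
      nlinarith
    _ = (∫⁻ ξ, ∫⁻ η, ENNReal.ofReal (1/2 * ‖f ξ‖ ^ 2 * k (ξ - η))) +
          ∫⁻ ξ, ∫⁻ η, ENNReal.ofReal (1/2 * ‖f η‖ ^ 2 * k (ξ - η)) := by
      have m0 : Measurable fun w : ℝ × ℝ =>
          ENNReal.ofReal (1/2 * ‖f w.1‖ ^ 2 * k (w.1 - w.2)) := by
        have m1 : Measurable fun w : ℝ × ℝ => ‖f w.1‖ := (hf.comp measurable_fst).norm
        have m2 : Measurable fun w : ℝ × ℝ => k (w.1 - w.2) := hkm.comp (by fun_prop)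
        exact (((m1.pow_const 2).const_mul _).mul m2).ennreal_ofReal
      rw [← lintegral_add_left m0.lintegral_prod_right']
      refine lintegral_congr fun ξ => ?_
      exact lintegral_add_left (m0.comp (measurable_prodMk_left (x := ξ))) _
    _ = _ := by
      rw [half1, half2, ← add_mul, ← add_mul, ← ENNReal.ofReal_add (by norm_num) (by norm_num)]
      norm_num [mul_comm]

/-- The limit `ε → 0` of `plancherel_gauss`, by Fatou's lemma. Square integrability of `f` is
not needed: otherwise the right side is infinite. -/
theorem plancherel_le {f : ℝ → ℂ} (hf : Measurable f) (hfi : Integrable f) :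
    ∫⁻ x, ENNReal.ofReal (‖ftm f x‖ ^ 2) ≤
      ENNReal.ofReal (2 * Real.pi) * ∫⁻ ξ, ENNReal.ofReal (‖f ξ‖ ^ 2) := by
  have hm := measurable_ftm hf
  have hlim : ∀ x : ℝ, Filter.Tendsto (fun n : ℕ =>
      ENNReal.ofReal (Real.exp (-(1 / ((n:ℝ) + 1)) * x ^ 2) * ‖ftm f x‖ ^ 2)) Filter.atTop
      (nhds (ENNReal.ofReal (‖ftm f x‖ ^ 2))) := by
    intro x
    refine ENNReal.tendsto_ofReal ?_
    have h1 := (tendsto_one_div_add_atTop_nhds_zero_nat (𝕜 := ℝ)).neg.mul_const (x ^ 2)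
    have h2 := ((Real.continuous_exp.tendsto _).comp h1).mul_const (‖ftm f x‖ ^ 2)
    simpa using h2
  calc _ = ∫⁻ x, Filter.liminf (fun n : ℕ =>
      ENNReal.ofReal (Real.exp (-(1 / ((n:ℝ) + 1)) * x ^ 2) * ‖ftm f x‖ ^ 2)) Filter.atTop :=
        lintegral_congr fun x => (hlim x).liminf_eq.symm
    _ ≤ _ := lintegral_liminf_le fun n => by fun_prop
    _ ≤ _ := by
      refine (Filter.liminf_le_liminf (v := fun _ => ENNReal.ofReal (2 * Real.pi) *
        ∫⁻ ξ, ENNReal.ofReal (‖f ξ‖ ^ 2)) (Filter.Eventually.of_forall fun n => ?_)).trans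
        (le_of_eq ?_)
      · exact plancherel_gauss hf hfi (by positivity)
      · exact Filter.liminf_const _

theorem evo_eq_ftm (a : ℝ) (g : ℝ → ℂ) (t x : ℝ) :
    evo a g t x = ftm (fun ξ => phase a t 0 ξ * g ξ) x := by
  unfold evo ftm
  congr 1; ext ξ
  rw [← mul_assoc]; congr 1
  unfold phase
  rw [← Complex.exp_add]; congr 1; push_cast; ring

theorem evo_sq_le (a : ℝ) {g : ℝ → ℂ} (hg : Measurable g) (hgi : Integrable g) (t : ℝ) :
    ∫⁻ x, ‖evo a g t x‖ₑ ^ (2:ℝ) ≤ ENNReal.ofReal (2 * Real.pi) * ∫⁻ ξ, ‖g ξ‖ₑ ^ (2:ℝ) := by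
  have m : Measurable fun ξ => phase a t 0 ξ * g ξ :=
    (measurable_phase a measurable_const measurable_const measurable_id).mul hg
  have i : Integrable fun ξ => phase a t 0 ξ * g ξ :=
    hgi.norm.mono' m.aestronglyMeasurable (Filter.Eventually.of_forall fun ξ => by
      simp [norm_phase])
  have := plancherel_le m i
  have e : ∀ z : ℂ, ENNReal.ofReal (‖z‖ ^ 2) = ‖z‖ₑ ^ (2:ℝ) := fun z => by
    rw [← ofReal_norm, ENNReal.ofReal_rpow_of_nonneg (norm_nonneg _) (by norm_num), Real.rpow_two]
  simp only [norm_mul, norm_phase, one_mul, e] at this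
  simpa only [evo_eq_ftm] using this

/-! ### Fourier representation of the interpolating function -/

open FourierTransform in
theorem fourier_eq_ftm (f : ℝ → ℂ) (w : ℝ) : 𝓕 f w = ftm f (2 * Real.pi * w) := by
  rw [Real.fourier_real_eq_integral_exp_smul]
  unfold ftm
  congr 1; ext v
  rw [smul_eq_mul]; congr 2; push_cast; ring

open FourierTransform in
/-- Two integrable derivatives give the decay `(1 + w²)⁻¹` of the Fourier transform. -/
theorem integrable_fourier_of_deriv2 {f f1 f2 : ℝ → ℂ} (h1 : ∀ x, HasDerivAt f (f1 x) x)
    (h2 : ∀ x, HasDerivAt f1 (f2 x) x) (hf : Integrable f) (hf1 : Integrable f1)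
    (hf2 : Integrable f2) (hm : Measurable f) : Integrable (𝓕 f) := by
  have d1 : deriv f = f1 := funext fun x => (h1 x).deriv
  have d2 : deriv f1 = f2 := funext fun x => (h2 x).deriv
  have e1 := Real.fourier_deriv hf (fun x => (h1 x).differentiableAt) (d1 ▸ hf1)
  have e2 := Real.fourier_deriv hf1 (fun x => (h2 x).differentiableAt) (d2 ▸ hf2)
  rw [d1] at e1
  rw [d2, e1] at e2
  have mF : Measurable (𝓕 f) := by
    rw [funext (fourier_eq_ftm f)]
    exact (measurable_ftm hm).comp (by fun_prop)
  refine (integrable_inv_one_add_sq.const_mul ((∫ x, ‖f x‖) + ∫ x, ‖f2 x‖)).mono'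
    mF.aestronglyMeasurable ?_
  filter_upwards with w
  have b1 : ‖𝓕 f w‖ ≤ ∫ x, ‖f x‖ := by rw [fourier_eq_ftm]; exact norm_ftm_le _ _
  have b2 : ‖𝓕 f2 w‖ ≤ ∫ x, ‖f2 x‖ := by rw [fourier_eq_ftm]; exact norm_ftm_le _ _
  rw [e2] at b2
  simp only [smul_eq_mul, norm_mul, Complex.norm_real, Complex.norm_I, Complex.norm_ofNat,
    Real.norm_eq_abs, mul_one] at b2
  rw [← div_eq_mul_inv, le_div_iff₀ (by positivity)]
  have hpi : (1:ℝ) ≤ 2 * |Real.pi| := by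
    rw [abs_of_pos Real.pi_pos]; linarith [Real.pi_gt_three]
  have hw : w ^ 2 * ‖𝓕 f w‖ ≤ 2 * |Real.pi| * |w| * (2 * |Real.pi| * |w| * ‖𝓕 f w‖) := by
    have : |w| ≤ 2 * |Real.pi| * |w| := le_mul_of_one_le_left (abs_nonneg _) hpi
    calc w ^ 2 * ‖𝓕 f w‖ = |w| * (|w| * ‖𝓕 f w‖) := by rw [← sq_abs]; ring
      _ ≤ _ := by gcongr
  linarith

theorem interp_integrable {θ : ℝ} (h0 : 0 < θ) (h1 : θ < 1) :
    Integrable fun v : ℝ => (Real.exp (-θ * v) + Real.exp ((1 - θ) * v))⁻¹ := by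
  have hc : Continuous fun v : ℝ => (Real.exp (-θ * v) + Real.exp ((1 - θ) * v))⁻¹ := by
    refine Continuous.inv₀ (by fun_prop) fun v => by positivity
  rw [← integrableOn_univ, ← Set.Iic_union_Ioi (a := (0:ℝ)), integrableOn_union]
  constructor
  · refine (integrableOn_exp_mul_Iic h0 0).mono' hc.aestronglyMeasurable ?_
    filter_upwards with v
    rw [Real.norm_of_nonneg (by positivity), show θ * v = -(-θ * v) by ring, Real.exp_neg]
    exact inv_anti₀ (Real.exp_pos _) (by linarith [Real.exp_pos ((1 - θ) * v)])
  · refine (integrableOn_exp_mul_Ioi (show -(1 - θ) < 0 by linarith) 0).mono'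
      hc.aestronglyMeasurable ?_
    filter_upwards with v
    rw [Real.norm_of_nonneg (by positivity), show -(1 - θ) * v = -((1 - θ) * v) by ring, Real.exp_neg]
    exact inv_anti₀ (Real.exp_pos _) (by linarith [Real.exp_pos (-θ * v)])

open FourierTransform in
/-- The function `1 / (e^{-θv} + e^{(1-θ)v})` is the Fourier integral of some `G ∈ L¹`. -/
theorem interp_repr {θ : ℝ} (h0 : 0 < θ) (h1 : θ < 1) : ∃ G : ℝ → ℂ, Measurable G ∧ Integrable G ∧
    ∀ v : ℝ, (((Real.exp (-θ * v) + Real.exp ((1 - θ) * v))⁻¹ : ℝ) : ℂ) =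
      ∫ y : ℝ, G y * exp (I * ((2 * Real.pi * y * v : ℝ) : ℂ)) := by
  set D : ℝ → ℝ := fun v => Real.exp (-θ * v) + Real.exp ((1 - θ) * v) with hD
  set D1 : ℝ → ℝ := fun v => -θ * Real.exp (-θ * v) + (1 - θ) * Real.exp ((1 - θ) * v) with hD1
  set D2 : ℝ → ℝ := fun v => θ ^ 2 * Real.exp (-θ * v) + (1 - θ) ^ 2 * Real.exp ((1 - θ) * v)
    with hD2
  have pD : ∀ v, 0 < D v := fun v => by positivity
  have dexp : ∀ c v : ℝ, HasDerivAt (fun v => Real.exp (c * v)) (c * Real.exp (c * v)) v := by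
    intro c v
    exact ((Real.hasDerivAt_exp _).comp v ((hasDerivAt_id v).const_mul c)).congr_deriv
      (by simp; ring)
  have hd1 : ∀ v, HasDerivAt D (D1 v) v := fun v => (dexp _ v).add (dexp _ v)
  have hd2 : ∀ v, HasDerivAt D1 (D2 v) v := fun v =>
    (((dexp _ v).const_mul _).add ((dexp _ v).const_mul _)).congr_deriv (by simp only [hD2]; ring)
  set g : ℝ → ℝ := fun v => (D v)⁻¹ with hg
  set g1 : ℝ → ℝ := fun v => -D1 v / D v ^ 2 with hg1
  set g2 : ℝ → ℝ := fun v => -D2 v / D v ^ 2 + 2 * D1 v ^ 2 / D v ^ 3 with hg2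
  have gd1 : ∀ v, HasDerivAt g (g1 v) v := fun v => (hd1 v).inv (pD v).ne'
  have gd2 : ∀ v, HasDerivAt g1 (g2 v) v := fun v => by
    refine ((hd2 v).neg.div ((hd1 v).pow 2) (pow_pos (pD v) 2).ne').congr_deriv ?_
    simp only [hg2]
    have := (pD v).ne'
    simp only [Pi.neg_apply, Pi.pow_apply]
    field_simp
    ring
  have bD1 : ∀ v, |D1 v| ≤ D v := fun v => by
    have p1 := Real.exp_pos (-θ * v)
    have p2 := Real.exp_pos ((1 - θ) * v)
    rw [abs_le]; simp only [hD, hD1]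
    constructor <;> nlinarith
  have bD2 : ∀ v, |D2 v| ≤ D v := fun v => by
    have p1 := Real.exp_pos (-θ * v)
    have p2 := Real.exp_pos ((1 - θ) * v)
    rw [abs_of_nonneg (by positivity)]; simp only [hD, hD2]
    have q1 : θ ^ 2 ≤ 1 := by nlinarith
    have q2 : (1 - θ) ^ 2 ≤ 1 := by nlinarith
    nlinarith
  have cD : Continuous D := by fun_prop
  have cD1 : Continuous D1 := by fun_prop
  have cD2 : Continuous D2 := by fun_prop
  have cg : Continuous g := cD.inv₀ fun v => (pD v).ne'
  have cg1 : Continuous g1 := cD1.neg.div (cD.pow 2) fun v => (pow_pos (pD v) 2).ne'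
  have cg2 : Continuous g2 := (cD2.neg.div (cD.pow 2) fun v => (pow_pos (pD v) 2).ne').add
    ((continuous_const.mul (cD1.pow 2)).div (cD.pow 3) fun v => (pow_pos (pD v) 3).ne')
  have ig : Integrable g := interp_integrable h0 h1
  have ig1 : Integrable g1 := ig.mono' cg1.aestronglyMeasurable <| by
    filter_upwards with v
    simp only [hg1, hg]
    rw [Real.norm_eq_abs, abs_div, abs_neg, abs_of_pos (pow_pos (pD v) 2),
      div_le_iff₀ (pow_pos (pD v) 2)]
    have := (pD v).ne'
    refine (bD1 v).trans (le_of_eq ?_)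
    field_simp
  have ig2 : Integrable g2 := (ig.const_mul 3).mono' cg2.aestronglyMeasurable <| by
    filter_upwards with v
    simp only [hg2, hg]
    have hp := pD v
    have hn := hp.ne'
    have t1 : |-D2 v / D v ^ 2| ≤ (D v)⁻¹ := by
      rw [abs_div, abs_neg, abs_of_pos (pow_pos hp 2), div_le_iff₀ (pow_pos hp 2)]
      refine (bD2 v).trans (le_of_eq ?_)
      field_simp
    have t2 : |2 * D1 v ^ 2 / D v ^ 3| ≤ 2 * (D v)⁻¹ := by
      rw [abs_of_nonneg (by positivity), div_le_iff₀ (pow_pos hp 3)]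
      have : D1 v ^ 2 ≤ D v ^ 2 := by rw [← sq_abs]; exact pow_le_pow_left₀ (abs_nonneg _) (bD1 v) 2
      calc 2 * D1 v ^ 2 ≤ 2 * D v ^ 2 := by linarith
        _ = _ := by field_simp
    rw [Real.norm_eq_abs]
    linarith [abs_add_le (-D2 v / D v ^ 2) (2 * D1 v ^ 2 / D v ^ 3)]
  set f : ℝ → ℂ := fun v => (g v : ℂ) with hf
  have cf : Continuous f := Complex.continuous_ofReal.comp cg
  have iF : Integrable (𝓕 f) := integrable_fourier_of_deriv2 (fun x => (gd1 x).ofReal_comp)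
    (fun x => (gd2 x).ofReal_comp) ig.ofReal ig1.ofReal ig2.ofReal cf.measurable
  refine ⟨𝓕 f, ?_, iF, fun v => ?_⟩
  · rw [funext (fourier_eq_ftm f)]
    exact (measurable_ftm cf.measurable).comp (by fun_prop)
  · have := congrFun (Continuous.fourierInv_fourier_eq cf ig.ofReal iF) v
    change f v = _
    rw [← this, Real.fourierInv_eq']
    congr 1; ext y
    rw [smul_eq_mul, mul_comm]; congr 2
    simp only [RCLike.inner_apply, conj_trivial]
    push_cast; ring

/-! ### Pointwise interpolation -/

/-- Multiplication of a frequency profile by the imaginary power `|ξ|^{2πi y s}`. -/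
def twist (s y : ℝ) (k : ℝ → ℂ) (ξ : ℝ) : ℂ :=
  exp (I * ((2 * Real.pi * y * (s * Real.log |ξ|) : ℝ) : ℂ)) * k ξ

theorem norm_expI' (r : ℝ) : ‖exp (I * (r : ℂ))‖ = 1 := by
  rw [mul_comm]; exact Complex.norm_exp_ofReal_mul_I _

theorem norm_twist (s y : ℝ) (k : ℝ → ℂ) (ξ : ℝ) : ‖twist s y k ξ‖ = ‖k ξ‖ := by
  unfold twist; rw [norm_mul, norm_expI', one_mul]

theorem measurable_twist (s : ℝ) {k : ℝ → ℂ} (hk : Measurable k) {α : Type*} [MeasurableSpace α]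
    {y : α → ℝ} (hy : Measurable y) :
    Measurable (Function.uncurry fun z : α => twist s (y z) k) := by
  unfold twist Function.uncurry
  have h1 : Measurable fun w : α × ℝ => y w.1 := hy.comp measurable_fst
  have h2 : Measurable fun w : α × ℝ => k w.2 := hk.comp measurable_snd
  have h3 : Measurable fun w : α × ℝ => Real.log |w.2| :=
    Real.measurable_log.comp (by fun_prop)
  refine Measurable.mul ?_ h2
  fun_prop

theorem measurable_twist' (s y : ℝ) {k : ℝ → ℂ} (hk : Measurable k) : Measurable (twist s y k) := by
  have h3 : Measurable fun ξ : ℝ => Real.log |ξ| := Real.measurable_log.comp (by fun_prop)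
  unfold twist
  fun_prop

theorem integrable_twist (s y : ℝ) {k : ℝ → ℂ} (hk : Measurable k) (hki : Integrable k) :
    Integrable (twist s y k) :=
  hki.norm.mono' (measurable_twist' s y hk).aestronglyMeasurable
    (Filter.Eventually.of_forall fun ξ => (norm_twist s y k ξ).le)

/-- Averaging twisted evolutions against `G` amounts to applying the Fourier multiplier with
symbol `Ĝ(c + s log |ξ|)`. -/
theorem twist_fubini (a s c t x : ℝ) {G k : ℝ → ℂ} (hG : Measurable G) (hGi : Integrable G)
    (hk : Measurable k) (hki : Integrable k) :
    ∫ y : ℝ, (G y * exp (I * ((2 * Real.pi * y * c : ℝ) : ℂ))) * evo a (twist s y k) t x =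
      evo a (fun ξ => (∫ y : ℝ, G y * exp (I * ((2 * Real.pi * y * (c + s * Real.log |ξ|) : ℝ) : ℂ)))
        * k ξ) t x := by
  unfold evo
  simp_rw [← integral_const_mul]
  rw [integral_integral_swap]
  · refine integral_congr_ae (Filter.Eventually.of_forall fun ξ => ?_)
    simp only
    rw [← integral_mul_const, ← integral_const_mul]
    refine integral_congr_ae (Filter.Eventually.of_forall fun y => ?_)
    simp only [twist]
    rw [show (I * ((2 * Real.pi * y * (c + s * Real.log |ξ|) : ℝ) : ℂ)) =
      (I * ((2 * Real.pi * y * c : ℝ) : ℂ)) +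
        (I * ((2 * Real.pi * y * (s * Real.log |ξ|) : ℝ) : ℂ)) by push_cast; ring, Complex.exp_add]
    ring
  · refine (hGi.norm.mul_prod hki.norm).mono' ?_ ?_
    · have m1 : Measurable fun w : ℝ × ℝ => G w.1 * exp (I * ((2 * Real.pi * w.1 * c : ℝ) : ℂ)) :=
        (hG.comp measurable_fst).mul (by fun_prop)
      have m2 := measurable_phase (α := ℝ × ℝ) a (measurable_const (a := t))
        (measurable_const (a := x)) measurable_snd
      exact (m1.mul (m2.mul (measurable_twist s hk measurable_id))).aestronglyMeasurable
    · filter_upwards with w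
      simp only [Function.uncurry]
      rw [norm_mul, norm_mul, norm_mul, norm_expI', norm_phase, norm_twist, one_mul, mul_one]

/-- The choice `e^c = A / B` turns a family of additive bounds into a multiplicative one; the
vanishing of `A` or `B` is covered by perturbing both. -/
theorem optimise {θ X A B : ℝ} (h0 : 0 < θ) (h1 : θ < 1) (hA : 0 ≤ A) (hB : 0 ≤ B)
    (h : ∀ c : ℝ, X * Real.exp (θ * c) ≤ A + Real.exp c * B) :
    X ≤ 2 * (A ^ (1 - θ) * B ^ θ) := by
  have key : ∀ ε : ℝ, 0 < ε → X ≤ 2 * ((A + ε) ^ (1 - θ) * (B + ε) ^ θ) := by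
    intro ε hε
    have pA : 0 < A + ε := by linarith
    have pB : 0 < B + ε := by linarith
    have := h (Real.log ((A + ε) / (B + ε)))
    rw [Real.exp_log (by positivity), mul_comm θ, ← Real.rpow_def_of_pos (by positivity)] at this
    have h2 : X * ((A + ε) / (B + ε)) ^ θ ≤ 2 * (A + ε) := by
      refine this.trans ?_
      have : (A + ε) / (B + ε) * B ≤ (A + ε) / (B + ε) * (B + ε) := by gcongr; linarith
      rw [div_mul_cancel₀ _ pB.ne'] at this
      linarith
    rw [← le_div_iff₀ (by positivity)] at h2
    refine h2.trans (le_of_eq ?_)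
    rw [Real.div_rpow pA.le pB.le, Real.rpow_sub pA, Real.rpow_one]
    field_simp
  have cont : Filter.Tendsto (fun ε : ℝ => 2 * ((A + ε) ^ (1 - θ) * (B + ε) ^ θ))
      (nhdsWithin 0 (Set.Ioi 0)) (nhds (2 * (A ^ (1 - θ) * B ^ θ))) := by
    have : Continuous fun ε : ℝ => 2 * ((A + ε) ^ (1 - θ) * (B + ε) ^ θ) := by
      have c1 := (Real.continuous_rpow_const (q := 1 - θ) (by linarith)).comp
        (continuous_const_add A)
      have c2 := (Real.continuous_rpow_const (q := θ) h0.le).comp (continuous_const_add B)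
      exact continuous_const.mul (c1.mul c2)
    have := this.tendsto 0
    simp only [add_zero] at this
    exact this.mono_left nhdsWithin_le_nhds
  exact ge_of_tendsto cont (Filter.eventually_of_mem self_mem_nhdsWithin fun ε hε => key ε hε)

/-- Pointwise substitute for complex interpolation. For `g v = 1 / (e^{-θv} + e^{(1-θ)v})` one has
`e^{θv} = g v + e^v g v`. At `v = c + s log |ξ|` this decomposes `e^{θc} |ξ|^{θs}` into two
multipliers, each an average over `y` of imaginary powers with weight `G`, the second one applied
to `|ξ|^s h`. The parameter `c` is then optimised. -/
theorem pointwise_interp {a s θ : ℝ} (h0 : 0 < θ) (h1 : θ < 1) {G : ℝ → ℂ} (hG : Measurable G)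
    (hGi : Integrable G) (hrep : ∀ v : ℝ, (((Real.exp (-θ * v) + Real.exp ((1 - θ) * v))⁻¹ : ℝ) : ℂ) =
      ∫ y : ℝ, G y * exp (I * ((2 * Real.pi * y * v : ℝ) : ℂ)))
    {h : ℝ → ℂ} (hh : Measurable h) (hi : Integrable h)
    (hi2 : Integrable fun ξ => ((|ξ| ^ s : ℝ) : ℂ) * h ξ) (t x : ℝ) :
    ‖evo a (fun ξ => ((|ξ| ^ (θ * s) : ℝ) : ℂ) * h ξ) t x‖ₑ ≤
      2 * ((∫⁻ y, ‖G y‖ₑ * ‖evo a (twist s y h) t x‖ₑ) ^ (1 - θ) *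
        (∫⁻ y, ‖G y‖ₑ * ‖evo a (twist s y fun ξ => ((|ξ| ^ s : ℝ) : ℂ) * h ξ) t x‖ₑ) ^ θ) := by
  set k : ℝ → ℂ := fun ξ => ((|ξ| ^ s : ℝ) : ℂ) * h ξ with hk
  have hkm : Measurable k := Measurable.mul (by fun_prop) hh
  have fin : ∀ f : ℝ → ℂ, (∫⁻ y, ‖G y‖ₑ * ‖evo a (twist s y f) t x‖ₑ) ≠ ⊤ := by
    intro f
    have : (∫⁻ y, ‖G y‖ₑ * ‖evo a (twist s y f) t x‖ₑ) ≤
        (∫⁻ y, ‖G y‖ₑ) * ENNReal.ofReal (∫ ξ, ‖f ξ‖) := by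
      rw [← lintegral_mul_const' _ _ ENNReal.ofReal_ne_top]
      refine lintegral_mono fun y => ?_
      gcongr
      rw [← ofReal_norm]
      refine ENNReal.ofReal_le_ofReal ((norm_evo_le _ _ _ _).trans (le_of_eq ?_))
      simp only [norm_twist]
    exact ne_top_of_le_ne_top (ENNReal.mul_ne_top hGi.2.ne ENNReal.ofReal_ne_top) this
  have bound : ∀ (f : ℝ → ℂ), Measurable f → Integrable f → ∀ c : ℝ,
      ‖evo a (fun ξ => (((Real.exp (-θ * (c + s * Real.log |ξ|)) +
        Real.exp ((1 - θ) * (c + s * Real.log |ξ|)))⁻¹ : ℝ) : ℂ) * f ξ) t x‖ ≤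
      (∫⁻ y, ‖G y‖ₑ * ‖evo a (twist s y f) t x‖ₑ).toReal := by
    intro f hf hfi c
    simp_rw [hrep]
    rw [← twist_fubini a s c t x hG hGi hf hfi, ← ENNReal.ofReal_le_iff_le_toReal (fin f), ofReal_norm]
    refine (enorm_integral_le_lintegral_enorm _).trans (lintegral_mono fun y => ?_)
    simp only [enorm_mul]
    refine le_of_eq ?_
    rw [← ofReal_norm (exp _), norm_expI', ENNReal.ofReal_one, mul_one]
  set A := ∫⁻ y, ‖G y‖ₑ * ‖evo a (twist s y h) t x‖ₑ with hA
  set B := ∫⁻ y, ‖G y‖ₑ * ‖evo a (twist s y k) t x‖ₑ with hB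
  have main : ‖evo a (fun ξ => ((|ξ| ^ (θ * s) : ℝ) : ℂ) * h ξ) t x‖ ≤
      2 * (A.toReal ^ (1 - θ) * B.toReal ^ θ) := by
    refine optimise h0 h1 ENNReal.toReal_nonneg ENNReal.toReal_nonneg fun c => ?_
    set g : ℝ → ℝ := fun ξ => (Real.exp (-θ * (c + s * Real.log |ξ|)) +
        Real.exp ((1 - θ) * (c + s * Real.log |ξ|)))⁻¹ with hg
    have hgm : Measurable g := by
      have : Measurable fun ξ : ℝ => Real.log |ξ| := Real.measurable_log.comp (by fun_prop)
      fun_prop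
    have split : evo a (fun ξ => ((|ξ| ^ (θ * s) : ℝ) : ℂ) * h ξ) t x * ((Real.exp (θ * c) : ℝ) : ℂ) =
        evo a (fun ξ => (g ξ : ℂ) * h ξ) t x +
          ((Real.exp c : ℝ) : ℂ) * evo a (fun ξ => (g ξ : ℂ) * k ξ) t x := by
      have hgb : ∀ ξ, ‖(g ξ : ℂ)‖ ≤ ∫ y, ‖G y‖ := by
        intro ξ
        simp only [hg]
        rw [hrep]
        refine (norm_integral_le_integral_norm _).trans (le_of_eq ?_)
        simp only [norm_mul, norm_expI', mul_one]
      have ii : ∀ f : ℝ → ℂ, Measurable f → Integrable f →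
          Integrable fun ξ => phase a t x ξ * ((g ξ : ℂ) * f ξ) := by
        intro f hf hfi
        refine (hfi.norm.const_mul (∫ y, ‖G y‖)).mono' ?_ ?_
        · exact ((measurable_phase a measurable_const measurable_const measurable_id).mul
            ((Complex.measurable_ofReal.comp hgm).mul hf)).aestronglyMeasurable
        · filter_upwards with ξ
          rw [norm_mul, norm_phase, one_mul, norm_mul]
          exact mul_le_mul_of_nonneg_right (hgb ξ) (norm_nonneg _)
      unfold evo
      rw [← integral_mul_const, ← integral_const_mul, ← integral_add (ii h hh hi)
        ((ii k hkm hi2).const_mul _)]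
      refine integral_congr_ae ?_
      filter_upwards [Measure.ae_ne volume (0:ℝ)] with ξ hξ
      have pξ : 0 < |ξ| := abs_pos.2 hξ
      have real_id : |ξ| ^ (θ * s) * Real.exp (θ * c) = g ξ + Real.exp c * (g ξ * |ξ| ^ s) := by
        set v := c + s * Real.log |ξ| with hv
        have e1 : |ξ| ^ (θ * s) * Real.exp (θ * c) = Real.exp (θ * v) := by
          rw [Real.rpow_def_of_pos pξ, ← Real.exp_add]; congr 1; rw [hv]; ring
        have e2 : Real.exp c * |ξ| ^ s = Real.exp v := by
          rw [Real.rpow_def_of_pos pξ, ← Real.exp_add]; congr 1; rw [hv]; ring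
        have e3 : g ξ + Real.exp c * (g ξ * |ξ| ^ s) = g ξ * (1 + Real.exp v) := by
          rw [← e2]; ring
        rw [e1, e3]
        simp only [hg]
        rw [← hv, eq_comm, inv_mul_eq_iff_eq_mul₀ (by positivity), add_mul, ← Real.exp_add,
          ← Real.exp_add, show -θ * v + θ * v = 0 by ring, Real.exp_zero]
        congr 2; ring
      simp only [hk]
      have := congrArg (fun r : ℝ => (r : ℂ)) real_id
      push_cast at this ⊢
      linear_combination (phase a t x ξ * h ξ) * this
    have nrm := congrArg norm split
    rw [norm_mul, Complex.norm_real, Real.norm_of_nonneg (Real.exp_pos _).le] at nrm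
    rw [nrm]
    refine (norm_add_le _ _).trans (add_le_add (bound h hh hi c) ?_)
    rw [norm_mul, Complex.norm_real, Real.norm_of_nonneg (Real.exp_pos _).le]
    exact mul_le_mul_of_nonneg_left (bound k hkm hi2 c) (Real.exp_pos _).le
  have fA : A ≠ ⊤ := fin h
  have fB : B ≠ ⊤ := fin k
  rw [← ofReal_norm, ← ENNReal.ofReal_toReal fA, ← ENNReal.ofReal_toReal fB,
    ENNReal.ofReal_rpow_of_nonneg ENNReal.toReal_nonneg (by linarith),
    ENNReal.ofReal_rpow_of_nonneg ENNReal.toReal_nonneg h0.le,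
    ← ENNReal.ofReal_mul (by positivity), ← ENNReal.ofReal_ofNat 2,
    ← ENNReal.ofReal_mul (by norm_num)]
  exact ENNReal.ofReal_le_ofReal main

/-! ### The mixed-norm estimate -/

/-- Jensen's inequality for a finite measure. -/
theorem lintegral_rpow_le {α : Type*} [MeasurableSpace α] (μ : Measure α) [IsFiniteMeasure μ]
    {r : ℝ} (hr : 1 < r) {f : α → ENNReal} (hf : Measurable f) :
    (∫⁻ y, f y ∂μ) ^ r ≤ μ Set.univ ^ (r - 1) * ∫⁻ y, f y ^ r ∂μ := by
  have hc : r.HolderConjugate (r / (r - 1)) := Real.HolderConjugate.conjExponent hr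
  have := ENNReal.lintegral_mul_le_Lp_mul_Lq μ hc hf.aemeasurable
    (measurable_const (a := (1 : ENNReal))).aemeasurable
  simp only [Pi.mul_apply, mul_one, ENNReal.one_rpow, lintegral_const, one_mul] at this
  refine (ENNReal.rpow_le_rpow this (by linarith)).trans (le_of_eq ?_)
  rw [ENNReal.mul_rpow_of_nonneg _ _ (by linarith), ← ENNReal.rpow_mul, ← ENNReal.rpow_mul,
    one_div_mul_cancel (by linarith), ENNReal.rpow_one, mul_comm]
  congr 2
  have : r - 1 ≠ 0 := by linarith
  field_simp

theorem measurable_maxEvo {α : Type*} [MeasurableSpace α] (a : ℝ) {g : α → ℝ → ℂ}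
    (hg : Measurable (Function.uncurry g)) {t : α → ℝ} (ht : Measurable t) :
    Measurable fun z => maxEvo a (g z) (t z) :=
  Measurable.iSup fun _ => (measurable_evo a hg ht measurable_const).enorm

/-- The spatial norm at a fixed time: in the pointwise interpolation inequality the unweighted
factor is integrated in `x` by Plancherel, while the weighted factor is bounded by its supremum
in `x`. -/
theorem interp_space {a β θ : ℝ} (h0 : 0 < θ) (h1 : θ < 1) {G : ℝ → ℂ} (hG : Measurable G)
    (hGi : Integrable G) (hrep : ∀ v : ℝ, (((Real.exp (-θ * v) + Real.exp ((1 - θ) * v))⁻¹ : ℝ) : ℂ) =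
      ∫ y : ℝ, G y * exp (I * ((2 * Real.pi * y * v : ℝ) : ℂ)))
    {μ : Measure ℝ} [IsFiniteMeasure μ] (hμ : μ = volume.withDensity fun y => ‖G y‖ₑ)
    {h : ℝ → ℂ} (hh : Measurable h) (hi : Integrable h)
    (hi2 : Integrable fun ξ => ((|ξ| ^ (β / 2) : ℝ) : ℂ) * h ξ) (t : ℝ) :
    ∫⁻ x, ‖evo a (fun ξ => ((|ξ| ^ (θ * (β / 2)) : ℝ) : ℂ) * h ξ) t x‖ₑ ^ (2 / (1 - θ)) ≤
      2 ^ (2 / (1 - θ)) *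
        (μ Set.univ ^ (2 - 1 : ℝ) * (μ Set.univ * (ENNReal.ofReal (2 * Real.pi) * ∫⁻ ξ, ‖h ξ‖ₑ ^ (2:ℝ)))) *
        (∫⁻ y, maxEvo a (fun ξ => ((|ξ| ^ (β / 2) : ℝ) : ℂ) * twist (β / 2) y h ξ) t ∂μ) ^
          (θ * (2 / (1 - θ))) := by
  set s := β / 2 with hs
  set p := 2 / (1 - θ) with hp
  have h1θ : 0 < 1 - θ := by linarith
  have pp : 0 < p := by positivity
  set k : ℝ → ℂ := fun ξ => ((|ξ| ^ s : ℝ) : ℂ) * h ξ with hk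
  have hkm : Measurable k := Measurable.mul (by fun_prop) hh
  have twk : ∀ y, twist s y k = fun ξ => ((|ξ| ^ s : ℝ) : ℂ) * twist s y h ξ := by
    intro y; ext ξ; simp only [twist, hk]; ring
  have conv : ∀ f : ℝ → ENNReal, Measurable f → ∫⁻ y, ‖G y‖ₑ * f y = ∫⁻ y, f y ∂μ := by
    intro f hf
    rw [hμ, lintegral_withDensity_eq_lintegral_mul _ hG.enorm hf]; rfl
  set M := ∫⁻ y, maxEvo a (fun ξ => ((|ξ| ^ s : ℝ) : ℂ) * twist s y h ξ) t ∂μ with hM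
  have mE : Measurable fun w : ℝ × ℝ => ‖evo a (twist s w.2 h) t w.1‖ₑ :=
    (measurable_evo (α := ℝ × ℝ) a (measurable_twist s hh measurable_snd) measurable_const
      measurable_fst).enorm
  have mEy : ∀ x, Measurable fun y => ‖evo a (twist s y h) t x‖ₑ := fun x =>
    (measurable_evo (α := ℝ) a (measurable_twist s hh measurable_id) measurable_const
      measurable_const).enorm
  have pt : ∀ x, ‖evo a (fun ξ => ((|ξ| ^ (θ * s) : ℝ) : ℂ) * h ξ) t x‖ₑ ^ p ≤
      2 ^ p * ((∫⁻ y, ‖evo a (twist s y h) t x‖ₑ ∂μ) ^ (2:ℝ) * M ^ (θ * p)) := by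
    intro x
    have h3 := pointwise_interp (a := a) (s := s) h0 h1 hG hGi hrep hh hi hi2 t x
    have hB : (∫⁻ y, ‖G y‖ₑ * ‖evo a (twist s y k) t x‖ₑ) ≤ M := by
      rw [hM, ← conv _ (by
        have := measurable_maxEvo (α := ℝ) a (measurable_twist s hkm measurable_id)
          (measurable_const (a := t))
        simpa only [id, twk] using this)]
      refine lintegral_mono fun y => ?_
      simp only
      gcongr
      rw [← twk]
      exact enorm_evo_le_maxEvo a (integrable_twist s y hkm hi2) (measurable_twist' s y hkm) t x
    rw [conv _ (mEy x)] at h3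
    calc _ ≤ (2 * ((∫⁻ y, ‖evo a (twist s y h) t x‖ₑ ∂μ) ^ (1 - θ) * M ^ θ)) ^ p := by
          refine ENNReal.rpow_le_rpow (h3.trans ?_) pp.le
          gcongr
      _ = _ := by
          rw [ENNReal.mul_rpow_of_nonneg _ _ pp.le, ENNReal.mul_rpow_of_nonneg _ _ pp.le,
            ← ENNReal.rpow_mul, ← ENNReal.rpow_mul]
          congr 3
          rw [hp]; field_simp
  have fin2 : (2:ENNReal) ^ p ≠ ⊤ := ENNReal.rpow_ne_top_of_nonneg pp.le (by norm_num)
  have hA : ∫⁻ x, (∫⁻ y, ‖evo a (twist s y h) t x‖ₑ ∂μ) ^ (2:ℝ) ≤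
      μ Set.univ ^ (2 - 1 : ℝ) * (μ Set.univ * (ENNReal.ofReal (2 * Real.pi) * ∫⁻ ξ, ‖h ξ‖ₑ ^ (2:ℝ))) := by
    calc _ ≤ ∫⁻ x, μ Set.univ ^ (2 - 1 : ℝ) * ∫⁻ y, ‖evo a (twist s y h) t x‖ₑ ^ (2:ℝ) ∂μ :=
          lintegral_mono fun x => lintegral_rpow_le μ (by norm_num) (mEy x)
      _ = μ Set.univ ^ (2 - 1 : ℝ) * ∫⁻ y, ∫⁻ x, ‖evo a (twist s y h) t x‖ₑ ^ (2:ℝ) ∂volume ∂μ := by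
          rw [lintegral_const_mul', lintegral_lintegral_swap]
          · exact (mE.pow_const 2).aemeasurable
          · exact ENNReal.rpow_ne_top_of_nonneg (by norm_num) (measure_ne_top _ _)
      _ ≤ μ Set.univ ^ (2 - 1 : ℝ) * ∫⁻ _, (ENNReal.ofReal (2 * Real.pi) * ∫⁻ ξ, ‖h ξ‖ₑ ^ (2:ℝ)) ∂μ := by
          gcongr with y
          refine (evo_sq_le a (measurable_twist' s y hh) (integrable_twist s y hh hi) t).trans
            (le_of_eq ?_)
          congr 2; ext ξ
          rw [← ofReal_norm, norm_twist, ofReal_norm]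
      _ = _ := by rw [lintegral_const, mul_comm (μ Set.univ)]
  calc _ ≤ ∫⁻ x, 2 ^ p * ((∫⁻ y, ‖evo a (twist s y h) t x‖ₑ ∂μ) ^ (2:ℝ) * M ^ (θ * p)) :=
        lintegral_mono pt
    _ = 2 ^ p * (∫⁻ x, (∫⁻ y, ‖evo a (twist s y h) t x‖ₑ ∂μ) ^ (2:ℝ)) * M ^ (θ * p) := by
        rw [lintegral_const_mul' _ _ fin2, lintegral_mul_const, mul_assoc]
        exact (mE.lintegral_prod_right' (ν := μ)).pow_const 2
    _ ≤ _ := by gcongr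

/-- The endpoint estimate survives averaging over imaginary powers, which leave the `L²` norm of
the profile unchanged. -/
theorem maxEvo_avg {a β : ℝ} (hβ0 : 0 ≤ β) (hβ : β ≤ a / 2)
    (μ : Measure ℝ) [IsFiniteMeasure μ]
    {h : ℝ → ℂ} (hh : Measurable h)
    (hi2 : Integrable fun ξ => ((|ξ| ^ (β / 2) : ℝ) : ℂ) * h ξ)
    {H : ℝ} (hH0 : 0 ≤ H) (hH : ∫⁻ ξ, ‖h ξ‖ₑ ^ (2:ℝ) ≤ ENNReal.ofReal H) :
    ∫⁻ t, (∫⁻ y, maxEvo a (fun ξ => ((|ξ| ^ (β / 2) : ℝ) : ℂ) * twist (β / 2) y h ξ) t ∂μ) ^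
        (2 / ((β + 1) / (2 + a))) ≤
      μ Set.univ ^ (2 / ((β + 1) / (2 + a)) - 1) *
        (μ Set.univ * ENNReal.ofReal ((240 * H) ^ (1 / ((β + 1) / (2 + a))))) := by
  have hq : 1 < 2 / ((β + 1) / (2 + a)) := by
    rw [lt_div_iff₀ (by apply div_pos <;> linarith), one_mul, div_lt_iff₀ (by linarith)]
    linarith
  set q := 2 / ((β + 1) / (2 + a)) with hqd
  set s := β / 2 with hs
  set k : ℝ → ℂ := fun ξ => ((|ξ| ^ s : ℝ) : ℂ) * h ξ with hk
  have hkm : Measurable k := Measurable.mul (by fun_prop) hh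
  have twk : ∀ y, twist s y k = fun ξ => ((|ξ| ^ s : ℝ) : ℂ) * twist s y h ξ := by
    intro y; ext ξ; simp only [twist, hk]; ring
  have mM : Measurable fun w : ℝ × ℝ => maxEvo a (twist s w.2 k) w.1 :=
    measurable_maxEvo a (measurable_twist s hkm measurable_snd) measurable_fst
  simp_rw [← twk]
  calc _ ≤ ∫⁻ t, μ Set.univ ^ (q - 1) * ∫⁻ y, maxEvo a (twist s y k) t ^ q ∂μ :=
        lintegral_mono fun t => lintegral_rpow_le μ hq
          (measurable_maxEvo (α := ℝ) a (measurable_twist s hkm measurable_id) measurable_const)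
    _ = μ Set.univ ^ (q - 1) * ∫⁻ y, ∫⁻ t, maxEvo a (twist s y k) t ^ q ∂volume ∂μ := by
        rw [lintegral_const_mul', lintegral_lintegral_swap]
        · exact (mM.pow_const q).aemeasurable
        · exact ENNReal.rpow_ne_top_of_nonneg (by linarith) (measure_ne_top _ _)
    _ ≤ μ Set.univ ^ (q - 1) *
          ∫⁻ _, ENNReal.ofReal ((240 * H) ^ (1 / ((β + 1) / (2 + a)))) ∂μ := by
        gcongr with y
        have := integrable_twist s y hkm hi2
        rw [twk] at this ⊢
        refine endpoint hβ0 hβ (measurable_twist' s y hh) this hH0 (le_trans (le_of_eq ?_) hH)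
        congr 1; ext ξ
        rw [← ofReal_norm, norm_twist, ofReal_norm]
    _ = _ := by rw [lintegral_const, mul_comm (μ Set.univ)]

/-- The Strichartz estimate for general frequency profiles `h`, in terms of a bound `H` on
`∫ |h|²`. -/
theorem strichartz_evo {a β θ : ℝ} (hβ0 : 0 ≤ β) (hβ : β ≤ a / 2) (h0 : 0 < θ) (h1 : θ < 1) :
    ∃ C : ℝ, 0 ≤ C ∧ ∀ h : ℝ → ℂ, Measurable h → Integrable h →
      Integrable (fun ξ => ((|ξ| ^ (β / 2) : ℝ) : ℂ) * h ξ) → ∀ H : ℝ, 0 ≤ H →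
      ∫⁻ ξ, ‖h ξ‖ₑ ^ (2:ℝ) ≤ ENNReal.ofReal H →
      ∫⁻ t, (∫⁻ x, ‖evo a (fun ξ => ((|ξ| ^ (θ * β / 2) : ℝ) : ℂ) * h ξ) t x‖ₑ ^ (2 / (1 - θ))) ^
        ((2 * (2 + a) / (θ * (β + 1))) / (2 / (1 - θ))) ≤
      ENNReal.ofReal (C * H ^ ((2 * (2 + a) / (θ * (β + 1))) / 2)) := by
  obtain ⟨G, hG, hGi, hrep⟩ := interp_repr h0 h1
  set μ : Measure ℝ := volume.withDensity fun y => ‖G y‖ₑ with hμ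
  have : IsFiniteMeasure μ := isFiniteMeasure_withDensity hGi.2.ne
  set m : ℝ := (μ Set.univ).toReal with hm
  have hmu : μ Set.univ = ENNReal.ofReal m := (ENNReal.ofReal_toReal (measure_ne_top _ _)).symm
  have hm0 : 0 ≤ m := ENNReal.toReal_nonneg
  have h1θ : 0 < 1 - θ := by linarith
  have hγ0 : 0 < (β + 1) / (2 + a) := by apply div_pos <;> linarith
  have hγ1 : (β + 1) / (2 + a) < 2 := by rw [div_lt_iff₀ (by linarith)]; linarith
  set γ := (β + 1) / (2 + a) with hγ
  set q := 2 * (2 + a) / (θ * (β + 1)) with hq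
  set p := 2 / (1 - θ) with hp
  have hqγ : q = 2 / γ / θ := by
    have : β + 1 ≠ 0 := by linarith
    have : 2 + a ≠ 0 := by linarith
    rw [hq, hγ]; field_simp
  have pq : 0 < q := by rw [hqγ]; positivity
  have pp : 0 < p := by positivity
  have hq1 : 1 < 2 / γ := by rw [lt_div_iff₀ hγ0]; linarith
  refine ⟨(2 ^ p * (m ^ (2 - 1 : ℝ) * (m * (2 * Real.pi)))) ^ (q / p) *
    (m ^ (2 / γ - 1) * (m * 240 ^ (1 / γ))), by positivity, fun h hh hi hi2 H hH0 hH => ?_⟩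
  set L : ENNReal := 2 ^ p * (μ Set.univ ^ (2 - 1 : ℝ) *
    (μ Set.univ * (ENNReal.ofReal (2 * Real.pi) * ENNReal.ofReal H))) with hL
  have hLr : L = ENNReal.ofReal (2 ^ p * (m ^ (2 - 1 : ℝ) * (m * (2 * Real.pi * H)))) := by
    rw [hL, hmu, ← ENNReal.ofReal_ofNat 2, ENNReal.ofReal_rpow_of_nonneg (by norm_num) pp.le,
      ENNReal.ofReal_rpow_of_nonneg hm0 (by norm_num), ← ENNReal.ofReal_mul (by positivity),
      ← ENNReal.ofReal_mul (by positivity), ← ENNReal.ofReal_mul (by positivity),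
      ← ENNReal.ofReal_mul (by positivity)]
  have hLtop : L ^ (q / p) ≠ ⊤ :=
    ENNReal.rpow_ne_top_of_nonneg (by positivity) (hLr ▸ ENNReal.ofReal_ne_top)
  have st : ∀ t, (∫⁻ x, ‖evo a (fun ξ => ((|ξ| ^ (θ * β / 2) : ℝ) : ℂ) * h ξ) t x‖ₑ ^ p) ^ (q / p) ≤
      L ^ (q / p) *
        (∫⁻ y, maxEvo a (fun ξ => ((|ξ| ^ (β / 2) : ℝ) : ℂ) * twist (β / 2) y h ξ) t ∂μ) ^
          (2 / γ) := by
    intro t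
    have := interp_space (a := a) h0 h1 hG hGi hrep hμ hh hi hi2 t
    rw [← mul_div_assoc] at this
    calc _ ≤ (L * (∫⁻ y, maxEvo a (fun ξ => ((|ξ| ^ (β / 2) : ℝ) : ℂ) * twist (β / 2) y h ξ) t ∂μ) ^
          (θ * p)) ^ (q / p) := by
            refine ENNReal.rpow_le_rpow (this.trans ?_) (by positivity)
            rw [hL]; gcongr
      _ = _ := by
            rw [ENNReal.mul_rpow_of_nonneg _ _ (by positivity), ← ENNReal.rpow_mul]
            congr 2
            rw [hqγ]; field_simp
  calc _ ≤ _ := lintegral_mono st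
    _ = L ^ (q / p) * _ := lintegral_const_mul' _ _ hLtop
    _ ≤ L ^ (q / p) * _ := by
        exact mul_le_mul_right (maxEvo_avg hβ0 hβ μ hh hi2 hH0 hH) _
    _ = _ := by
        rw [hLr, hmu, ← hγ, ENNReal.ofReal_rpow_of_nonneg (by positivity) (by positivity),
          ENNReal.ofReal_rpow_of_nonneg hm0 (by linarith), ← ENNReal.ofReal_mul hm0,
          ← ENNReal.ofReal_mul (by positivity), ← ENNReal.ofReal_mul (by positivity)]
        congr 1
        have e1 : H ^ (q / 2) = H ^ (q / p) * H ^ (1 / γ) := by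
          rw [← Real.rpow_add_of_nonneg hH0 (by positivity) (by positivity)]
          congr 1; rw [hqγ, hp]; field_simp; ring
        rw [show 2 ^ p * (m ^ (2 - 1 : ℝ) * (m * (2 * Real.pi * H))) =
          (2 ^ p * (m ^ (2 - 1 : ℝ) * (m * (2 * Real.pi)))) * H by ring,
          Real.mul_rpow (by positivity) hH0, Real.mul_rpow (by norm_num) hH0, e1]
        ring

/-! ### Schwartz data -/

theorem FT1_eq_ftm (f : ℝ → ℂ) (ξ : ℝ) : FT1 f ξ = ftm f (-ξ) := by
  unfold FT1 ftm
  congr 1; ext x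
  congr 2; push_cast; ring

open FourierTransform in
theorem ftm_schwartz (u : SchwartzMap ℝ ℂ) (x : ℝ) :
    ftm (fun z => u z) x = (𝓕 u) ((2 * Real.pi)⁻¹ * x) := by
  rw [SchwartzMap.fourier_coe, fourier_eq_ftm]
  congr 1
  have := Real.pi_pos.ne'
  field_simp

open FourierTransform in
theorem integrable_weight_FT1 (u : SchwartzMap ℝ ℂ) {σ : ℝ} (h0 : 0 ≤ σ) (h1 : σ ≤ 1) :
    Integrable fun ξ => ((|ξ| ^ σ : ℝ) : ℂ) * FT1 (fun z => u z) ξ := by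
  set v : SchwartzMap ℝ ℂ := 𝓕 u with hv
  have hπ := Real.pi_pos
  set c : ℝ := -(2 * Real.pi)⁻¹ with hc
  have hc0 : c ≠ 0 := by rw [hc]; exact neg_ne_zero.2 (by positivity)
  have e : ∀ ξ, FT1 (fun z => u z) ξ = v (c * ξ) := by
    intro ξ; rw [FT1_eq_ftm, ftm_schwartz, hc, hv]; congr 1; ring
  have i0 : Integrable fun ξ => ‖v (c * ξ)‖ := (v.integrable.norm).comp_mul_left' hc0
  have i1 : Integrable fun ξ => ‖c * ξ‖ ^ 1 * ‖v (c * ξ)‖ :=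
    Integrable.comp_mul_left' (v.integrable_pow_mul volume 1) hc0
  simp_rw [e]
  refine (i0.add (i1.const_mul |c|⁻¹)).mono' ?_ ?_
  · have : Measurable fun ξ => v (c * ξ) := v.continuous.measurable.comp (by fun_prop)
    exact (Measurable.mul (by fun_prop) this).aestronglyMeasurable
  · filter_upwards with ξ
    rw [norm_mul, Complex.norm_real, Real.norm_of_nonneg (by positivity)]
    simp only [Pi.add_apply, pow_one, norm_mul, Real.norm_eq_abs]
    have hb : |ξ| ^ σ ≤ 1 + |ξ| := by
      rcases le_total |ξ| 1 with h | h
      · linarith [Real.rpow_le_one (abs_nonneg ξ) h h0, abs_nonneg ξ]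
      · have := Real.rpow_le_rpow_of_exponent_le h h1
        rw [Real.rpow_one] at this; linarith
    have hc' : |c| ≠ 0 := abs_ne_zero.2 hc0
    calc |ξ| ^ σ * ‖v (c * ξ)‖ ≤ (1 + |ξ|) * ‖v (c * ξ)‖ := by gcongr
      _ = _ := by field_simp

open FourierTransform in
theorem continuous_FT1 (u : SchwartzMap ℝ ℂ) : Continuous (FT1 fun z => u z) := by
  have e : (FT1 fun z => u z) = fun ξ => (𝓕 u) ((2 * Real.pi)⁻¹ * (-ξ)) := by
    ext ξ; rw [FT1_eq_ftm, ftm_schwartz]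
  rw [e]
  exact (𝓕 u).continuous.comp (by fun_prop)

theorem integrable_FT1 (u : SchwartzMap ℝ ℂ) : Integrable (FT1 fun z => u z) := by
  have := integrable_weight_FT1 u le_rfl zero_le_one
  simpa using this

theorem lintegral_FT1_sq (u : SchwartzMap ℝ ℂ) :
    ∫⁻ ξ, ‖FT1 (fun z => u z) ξ‖ₑ ^ (2:ℝ) ≤
      ENNReal.ofReal (2 * Real.pi * ∫ x, ‖u x‖ ^ (2:ℝ)) := by
  have h := plancherel_le u.continuous.measurable u.integrable
  have iu : Integrable fun x => ‖u x‖ ^ (2:ℝ) := by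
    simp_rw [Real.rpow_two]
    exact (u.memLp 2).integrable_norm_pow two_ne_zero
  rw [ENNReal.ofReal_mul (by positivity), ofReal_integral_eq_lintegral_ofReal iu
    (Filter.Eventually.of_forall fun x => by positivity)]
  simp_rw [Real.rpow_two]
  refine le_trans (le_of_eq ?_) h
  rw [← lintegral_neg_eq_self]
  refine lintegral_congr fun ξ => ?_
  rw [FT1_eq_ftm, neg_neg, ← ofReal_norm,
    ENNReal.ofReal_rpow_of_nonneg (norm_nonneg _) (by norm_num), Real.rpow_two]

open FourierTransform in
/-- Fourier inversion in the normalisation of `FT1`. -/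
theorem FT1_inversion {m : ℝ → ℂ} (hc : Continuous m) (hi : Integrable m)
    (hF : Integrable (ftm m)) (ξ : ℝ) :
    FT1 (fun x => ((1 / (2 * Real.pi) : ℝ) : ℂ) * ftm m x) ξ = m ξ := by
  have hπ := Real.pi_pos
  have h2 : (2 * Real.pi) ≠ 0 := by positivity
  have hF' : Integrable (𝓕 m) := by
    rw [funext (fourier_eq_ftm m)]
    exact hF.comp_mul_left' h2
  have := congrFun (Continuous.fourierInv_fourier_eq hc hi hF') ξ
  rw [← this, Real.fourierInv_eq']
  have key := Measure.integral_comp_mul_left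
    (fun x => exp (I * ((x * ξ : ℝ) : ℂ)) * ftm m x) (2 * Real.pi)
  unfold FT1
  simp_rw [mul_left_comm (exp _), integral_const_mul]
  have e : ∀ y : ℝ, cexp (↑(2 * Real.pi * inner ℝ y ξ) * I) • 𝓕 m y =
      exp (I * ((2 * Real.pi * y * ξ : ℝ) : ℂ)) * ftm m (2 * Real.pi * y) := by
    intro y
    rw [fourier_eq_ftm, smul_eq_mul]; congr 2
    simp only [RCLike.inner_apply, conj_trivial]
    push_cast; ring
  simp_rw [e]
  rw [key, abs_of_pos (by positivity), Complex.real_smul, one_div]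

/-- The operators `Wgrp` and `Dop` are given by Bochner integrals, and `W(t)u₀` need not be
integrable, so that `FT1` of it may be the junk value `0`. In that case the left side vanishes;
otherwise Fourier inversion identifies it with `(2π)⁻¹` times the right side. -/
theorem norm_Dop_le {a : ℝ} (ha : 0 ≤ a) (σ : ℝ) (u : SchwartzMap ℝ ℂ) (t x : ℝ) :
    ‖Dop σ (fun y => Wgrp a (fun z => u z) t y) x‖ ≤
      ‖evo a (fun ξ => ((|ξ| ^ σ : ℝ) : ℂ) * FT1 (fun z => u z) ξ) t x‖ := by
  set h := FT1 fun z => u z with hh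
  set m : ℝ → ℂ := fun ξ => exp (I * ((t * disp a ξ : ℝ) : ℂ)) * h ξ with hm
  have hW : (fun y => Wgrp a (fun z => u z) t y) =
      fun y => ((1 / (2 * Real.pi) : ℝ) : ℂ) * ftm m y := rfl
  rw [hW]
  have hπ : ‖((1 / (2 * Real.pi) : ℝ) : ℂ)‖ ≤ 1 := by
    rw [Complex.norm_real, Real.norm_of_nonneg (by positivity), div_le_one (by positivity)]
    linarith [Real.pi_gt_three]
  by_cases hF : Integrable (ftm m)
  · have mm : Measurable m :=
      Measurable.mul (by have := measurable_disp a; fun_prop) (continuous_FT1 u).measurable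
    have im : Integrable m := (integrable_FT1 u).norm.mono' mm.aestronglyMeasurable
      (Filter.Eventually.of_forall fun ξ => by
        simp only [hm]; rw [norm_mul, norm_expI', one_mul])
    have cd : Continuous (disp a) := by
      have := (Real.continuous_rpow_const (q := 1 + a) (by linarith)).comp continuous_abs
      exact continuous_id.mul this
    have cm : Continuous m := Continuous.mul (by fun_prop) (continuous_FT1 u)
    have key : Dop σ (fun y => ((1 / (2 * Real.pi) : ℝ) : ℂ) * ftm m y) x =
        ((1 / (2 * Real.pi) : ℝ) : ℂ) *
          evo a (fun ξ => ((|ξ| ^ σ : ℝ) : ℂ) * h ξ) t x := by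
      unfold Dop
      simp_rw [FT1_inversion cm im hF]
      rw [evo_eq_ftm]
      unfold ftm
      congr 2; ext ξ
      simp only [hm, phase, zero_mul, sub_zero]
      ring
    rw [key, norm_mul]
    exact mul_le_of_le_one_left (norm_nonneg _) hπ
  · have : FT1 (fun x => ((1 / (2 * Real.pi) : ℝ) : ℂ) * ftm m x) = 0 := by
      ext ξ
      unfold FT1
      refine integral_undef fun hI => hF ?_
      have h2 := (hI.bdd_mul (c := 1) (f := fun x : ℝ => exp (-(I * ((x * ξ : ℝ) : ℂ))))
        (by fun_prop) (Filter.Eventually.of_forall fun x => (norm_expI _).le)).const_mul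
        ((2 * Real.pi : ℝ) : ℂ)
      refine h2.congr (Filter.Eventually.of_forall fun x => ?_)
      simp only
      rw [← mul_assoc (exp (-_)), ← Complex.exp_add, neg_add_cancel, Complex.exp_zero, one_mul,
        ← mul_assoc, ← Complex.ofReal_mul, mul_one_div_cancel (by positivity), Complex.ofReal_one,
        one_mul]
    unfold Dop
    rw [this]
    simp

/-- No integrability is assumed: the Bochner integral of a non-integrable function is `0`. -/
theorem ofReal_integral_le {f : ℝ → ℝ} (hf : ∀ x, 0 ≤ f x) :
    ENNReal.ofReal (∫ x, f x) ≤ ∫⁻ x, ENNReal.ofReal (f x) := by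
  by_cases hi : Integrable f
  · rw [ofReal_integral_eq_lintegral_ofReal hi (Filter.Eventually.of_forall hf)]
  · rw [integral_undef hi]; simp

theorem statement1 (a : ℝ) (ha : a ∈ Set.Icc (0 : ℝ) 1)
    (θ : ℝ) (hθ : θ ∈ Set.Ioo (0 : ℝ) 1) (β : ℝ) (hβ : β ∈ Set.Icc (0 : ℝ) (a / 2)) :
    ∃ C > 0, ∀ u₀ : SchwartzMap ℝ ℂ,
      (∫ t : ℝ,
          Lpnorm (2 / (1 - θ))
              (fun x : ℝ => Dop (θ * β / 2) (fun y => Wgrp a (fun z => u₀ z) t y) x) ^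
            (2 * (2 + a) / (θ * (β + 1)))) ^ (1 / (2 * (2 + a) / (θ * (β + 1)))) ≤
        C * Lpnorm 2 (fun x : ℝ => u₀ x) := by
  obtain ⟨hβ0, hβ1⟩ := hβ
  obtain ⟨h0, h1⟩ := hθ
  obtain ⟨C, hC0, hC⟩ := strichartz_evo (a := a) hβ0 hβ1 h0 h1
  have ha0 := ha.1
  have ha1 := ha.2
  have h1θ : 0 < 1 - θ := by linarith
  have pq : 0 < 2 * (2 + a) / (θ * (β + 1)) := by positivity
  have pp : 0 < 2 / (1 - θ) := by positivity
  set q := 2 * (2 + a) / (θ * (β + 1)) with hq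
  set p := 2 / (1 - θ) with hp
  refine ⟨C ^ (1 / q) * (2 * Real.pi) ^ (1 / 2 : ℝ) + 1, by positivity, fun u => ?_⟩
  set E := ∫ x, ‖u x‖ ^ (2:ℝ) with hE
  have hE0 : 0 ≤ E := integral_nonneg fun x => by positivity
  have main := hC (FT1 fun z => u z) (continuous_FT1 u).measurable (integrable_FT1 u)
    (integrable_weight_FT1 u (by linarith) (by linarith)) (2 * Real.pi * E) (by positivity)
    (lintegral_FT1_sq u)
  set P : ℝ → ℝ := fun t => ∫ x, ‖Dop (θ * β / 2) (fun y => Wgrp a (fun z => u z) t y) x‖ ^ p with hP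
  have hP0 : ∀ t, 0 ≤ P t := fun t => integral_nonneg fun x => by positivity
  have hPle : ∀ t, ENNReal.ofReal (P t) ≤
      ∫⁻ x, ‖evo a (fun ξ => ((|ξ| ^ (θ * β / 2) : ℝ) : ℂ) * FT1 (fun z => u z) ξ) t x‖ₑ ^ p := by
    intro t
    refine (ofReal_integral_le fun x => by positivity).trans (lintegral_mono fun x => ?_)
    rw [← ofReal_norm, ENNReal.ofReal_rpow_of_nonneg (norm_nonneg _) pp.le]
    exact ENNReal.ofReal_le_ofReal
      (Real.rpow_le_rpow (norm_nonneg _) (norm_Dop_le ha0 _ u t x) pp.le)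
  have hfin : ∫ t, ((P t) ^ (1 / p)) ^ q ≤ C * (2 * Real.pi * E) ^ (q / 2) := by
    rw [← ENNReal.ofReal_le_ofReal_iff (by positivity)]
    refine (ofReal_integral_le fun t => by
      have := hP0 t; positivity).trans (le_trans (lintegral_mono fun t => ?_) main)
    have := hP0 t
    rw [← Real.rpow_mul this, one_div_mul_eq_div,
      ← ENNReal.ofReal_rpow_of_nonneg this (by positivity)]
    exact ENNReal.rpow_le_rpow (hPle t) (by positivity)
  change (∫ t, ((P t) ^ (1 / p)) ^ q) ^ (1 / q) ≤ _ * E ^ (1 / (2:ℝ))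
  calc _ ≤ (C * (2 * Real.pi * E) ^ (q / 2)) ^ (1 / q) := by
        refine Real.rpow_le_rpow (integral_nonneg fun t => ?_) hfin (by positivity)
        have := hP0 t; positivity
    _ = C ^ (1 / q) * (2 * Real.pi) ^ (1 / 2 : ℝ) * E ^ (1 / (2:ℝ)) := by
        rw [Real.mul_rpow hC0 (by positivity), ← Real.rpow_mul (by positivity),
          show q / 2 * (1 / q) = 1 / 2 by field_simp, Real.mul_rpow (by positivity) hE0, mul_assoc]
    _ ≤ _ := by gcongr; linarith
end
end
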